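/- arXiv:1501.07656 — 2 statements merged into one kernel-verified Lean document; each statement's English description precedes it below -/
import Mathlib

section
/- For n ≥ 2 with n ≠ 4, every proper closed connected subgroup of O(n, ℝ) of dimension at least (n-1)(n-2)/2 + 1 equals SO(n, ℝ). -/
open scoped ENNReal

/-- The dimension of a subgroup of the orthogonal group `O(n, ℝ)`, measured as the
Hausdorff dimension of its underlying set of matrices. -/
noncomputable def orthSubgroupDim (n : ℕ) (H : Subgroup ↥(Matrix.orthogonalGroup (Fin n) ℝ)) :
    ℝ≥0∞ :=
  dimH ((fun A : ↥(Matrix.orthogonalGroup (Fin n) ℝ) =>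
    fun i j : Fin n => (A : Matrix (Fin n) (Fin n) ℝ) i j) ''
      (H : Set ↥(Matrix.orthogonalGroup (Fin n) ℝ)))

section lieabs
open NormedSpace Filter Topology

variable {A : Type*} [NormedRing A] [NormedAlgebra ℝ A] [CompleteSpace A]

lemma hasDerivAt_exp_smul_zero (X : A) : HasDerivAt (fun t : ℝ => exp (t • X)) X 0 := by
  simpa using hasDerivAt_exp_smul_const (𝕂 := ℝ) X (0:ℝ)

lemma cont_exp_smul (X : A) : Continuous (fun t : ℝ => exp (t • X)) := by
  refine continuous_iff_continuousAt.2 fun t => (hasDerivAt_exp_smul_const (𝕂 := ℝ) X t).continuousAt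

lemma pow_sub_pow_norm_le (a b : A) (M : ℝ) (ha : ∀ j : ℕ, ‖a ^ j‖ ≤ 1) (m : ℕ)
    (hM : 0 ≤ M) (hb : ∀ j ≤ m, ‖b ^ j‖ ≤ M) : ∀ j ≤ m, ‖a ^ j - b ^ j‖ ≤ j * (‖a - b‖ * M) := by
  intro j
  induction j with
  | zero => simp
  | succ j ih =>
    intro hj
    have e : a ^ (j+1) - b ^ (j+1) = a * (a ^ j - b ^ j) + (a - b) * b ^ j := by
      rw [pow_succ', pow_succ']; noncomm_ring
    have h1 := ih (by omega)
    have ha1 : ‖a‖ ≤ 1 := by simpa using ha 1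
    rw [e]
    calc _ ≤ ‖a‖ * ‖a ^ j - b ^ j‖ + ‖a - b‖ * ‖b ^ j‖ :=
          (norm_add_le _ _).trans (add_le_add (norm_mul_le _ _) (norm_mul_le _ _))
      _ ≤ 1 * (j * (‖a - b‖ * M)) + ‖a - b‖ * M := by
          gcongr
          exact hb j (by omega)
      _ = _ := by push_cast; ring

lemma tendsto_pow_exp (a : ℕ → A) (m : ℕ → ℕ) (X : A) (ha : ∀ (k j : ℕ), ‖a k ^ j‖ ≤ 1)
    (hm : Tendsto m atTop atTop)
    (h : Tendsto (fun k => (m k : ℝ) • (a k - 1)) atTop (𝓝 X)) :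
    Tendsto (fun k => a k ^ m k) atTop (𝓝 (exp X)) := by
  obtain ⟨M, hM⟩ := (isCompact_Icc (a := (0:ℝ)) (b := 1)).exists_bound_of_continuousOn
    (cont_exp_smul X).continuousOn
  have hM0 : 0 ≤ M := (norm_nonneg _).trans (hM 0 (by simp))
  let b : ℕ → A := fun k => exp ((m k : ℝ)⁻¹ • X)
  have hbp : ∀ (k j : ℕ), b k ^ j = exp (((j : ℝ) * (m k : ℝ)⁻¹) • X) := by
    intro k j
    letI : NormedAlgebra ℚ A := NormedAlgebra.restrictScalars ℚ ℝ A
    simp only [b]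
    rw [← exp_nsmul, mul_smul, Nat.cast_smul_eq_nsmul]
  have hlim : Tendsto (fun k => (m k : ℝ)⁻¹) atTop (𝓝[≠] 0) := by
    have h1 : Tendsto (fun k => (m k : ℝ)) atTop atTop := tendsto_natCast_atTop_atTop.comp hm
    exact (tendsto_inv_atTop_nhdsGT_zero.comp h1).mono_right
      (nhdsWithin_mono _ (fun x hx => ne_of_gt hx))
  have hder : Tendsto (fun k => (m k : ℝ) • (b k - 1)) atTop (𝓝 X) := by
    have := (hasDerivAt_iff_tendsto_slope.1 (hasDerivAt_exp_smul_zero X)).comp hlim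
    refine this.congr fun k => ?_
    simp [slope, b]
  have hd : Tendsto (fun k => ‖(m k : ℝ) • (a k - b k)‖ * M) atTop (𝓝 0) := by
    have := ((h.sub hder).norm).mul_const M
    simp only [sub_self, norm_zero, zero_mul] at this
    refine this.congr fun k => ?_
    rw [← smul_sub]; congr 3; abel
  have hfin : Tendsto (fun k => a k ^ m k - b k ^ m k) atTop (𝓝 0) := by
    refine squeeze_zero_norm (fun k => ?_) hd
    refine (pow_sub_pow_norm_le (a k) (b k) M (ha k) (m k) hM0 ?_ (m k) le_rfl).trans ?_
    · intro j hj
      rw [hbp]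
      refine hM _ ⟨by positivity, ?_⟩
      rw [← div_eq_mul_inv]
      exact div_le_one_of_le₀ (by exact_mod_cast hj) (by positivity)
    · rw [norm_smul]; simp [mul_assoc]
  have hb : ∀ᶠ k in atTop, b k ^ m k = exp X := by
    filter_upwards [hm.eventually_ge_atTop 1] with k hk
    rw [hbp, mul_inv_cancel₀ (by positivity), one_smul]
  have := hfin.add (tendsto_const_nhds (x := exp X))
  rw [zero_add] at this
  refine this.congr' ?_
  filter_upwards [hb] with k hk
  rw [hk]; abel

/-- A closed group of norm-one-bounded elements -/
structure GoodGroup (G : Set A) : Prop where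
  closed : IsClosed G
  one : (1 : A) ∈ G
  mul : ∀ x ∈ G, ∀ y ∈ G, x * y ∈ G
  norm : ∀ x ∈ G, ‖x‖ ≤ 1
  inv : ∀ x ∈ G, ∃ y ∈ G, x * y = 1 ∧ y * x = 1

lemma GoodGroup.pow {G : Set A} (hG : GoodGroup G) {x : A} (hx : x ∈ G) (j : ℕ) : x ^ j ∈ G := by
  induction j with
  | zero => simpa using hG.one
  | succ j ih => rw [pow_succ]; exact hG.mul _ ih _ hx

lemma exp_mul_exp_neg (X : A) : exp X * exp (-X) = 1 := by
  letI : NormedAlgebra ℚ A := NormedAlgebra.restrictScalars ℚ ℝ A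
  rw [← exp_add_of_commute (Commute.neg_right (Commute.refl X))]; simp

lemma GoodGroup.exp_neg {G : Set A} (hG : GoodGroup G) {X : A} (hx : exp X ∈ G) : exp (-X) ∈ G := by
  obtain ⟨y, hy, h1, h2⟩ := hG.inv _ hx
  have : y = exp (-X) := by
    calc y = y * (exp X * exp (-X)) := by rw [exp_mul_exp_neg, mul_one]
      _ = _ := by rw [← mul_assoc, h2, one_mul]
  exact this ▸ hy

lemma GoodGroup.key {G : Set A} (hG : GoodGroup G) (a : ℕ → A) (s : ℕ → ℝ) (X : A)
    (ha : ∀ k, a k ∈ G) (hs : ∀ k, 0 < s k) (hs0 : Tendsto s atTop (𝓝 0))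
    (h : Tendsto (fun k => (s k)⁻¹ • (a k - 1)) atTop (𝓝 X)) (t : ℝ) : exp (t • X) ∈ G := by
  have pos : ∀ t : ℝ, 0 < t → exp (t • X) ∈ G := by
    intro t ht
    have hinf : Tendsto (fun k => t / s k) atTop atTop := by
      have : Tendsto s atTop (𝓝[>] 0) :=
        tendsto_nhdsWithin_iff.2 ⟨hs0, Eventually.of_forall hs⟩
      simpa [div_eq_mul_inv] using (tendsto_inv_nhdsGT_zero.comp this).const_mul_atTop ht
    have hm : Tendsto (fun k => ⌊t / s k⌋₊) atTop atTop := tendsto_nat_floor_atTop.comp hinf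
    have hms : Tendsto (fun k => (⌊t / s k⌋₊ : ℝ) * s k) atTop (𝓝 t) := by
      have h1 : Tendsto (fun x : ℝ => (⌊x⌋₊ : ℝ) / x) atTop (𝓝 1) := tendsto_nat_floor_div_atTop
      have h2 := (h1.comp hinf).mul_const t
      rw [one_mul] at h2
      refine h2.congr fun k => ?_
      have := (hs k).ne'
      simp only [Function.comp]
      field_simp
    have := tendsto_pow_exp a (fun k => ⌊t / s k⌋₊) (t • X)
      (fun k j => hG.norm _ (hG.pow (ha k) j)) hm (by
        refine (hms.smul h).congr fun k => ?_
        rw [smul_smul, mul_assoc, mul_inv_cancel₀ (hs k).ne', mul_one])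
    exact hG.closed.mem_of_tendsto this (Eventually.of_forall fun k => hG.pow (ha k) _)
  rcases lt_trichotomy t 0 with ht | rfl | ht
  · have := hG.exp_neg (pos (-t) (by linarith))
    simpa using this
  · simpa using hG.one
  · exact pos t ht

/-- The Lie algebra -/
def GoodGroup.lie {G : Set A} (hG : GoodGroup G) : Submodule ℝ A where
  carrier := {X | ∀ t : ℝ, exp (t • X) ∈ G}
  zero_mem' := by intro t; simpa using hG.one
  smul_mem' := by
    intro c x hx t
    rw [smul_smul]; exact hx _
  add_mem' := by
    intro X Y hX hY
    refine hG.key (fun k => exp ((1 / ((k:ℝ) + 1)) • X) * exp ((1 / ((k:ℝ) + 1)) • Y))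
      (fun k => 1 / ((k:ℝ)+1)) (X + Y) (fun k => hG.mul _ (hX _) _ (hY _))
      (fun k => by positivity) tendsto_one_div_add_atTop_nhds_zero_nat ?_
    have hd := (hasDerivAt_exp_smul_zero X).mul (hasDerivAt_exp_smul_zero Y)
    have hl : Tendsto (fun k : ℕ => 1 / ((k:ℝ)+1)) atTop (𝓝[≠] 0) :=
      tendsto_nhdsWithin_iff.2 ⟨tendsto_one_div_add_atTop_nhds_zero_nat,
        Eventually.of_forall fun k => by simp only [Set.mem_compl_iff, Set.mem_singleton_iff]; positivity⟩
    have := (hasDerivAt_iff_tendsto_slope.1 hd).comp hl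
    simp only [zero_smul, exp_zero, mul_one, one_mul] at this
    refine this.congr fun k => ?_
    simp [slope]

lemma GoodGroup.mem_lie {G : Set A} (hG : GoodGroup G) {X : A} :
    X ∈ hG.lie ↔ ∀ t : ℝ, exp (t • X) ∈ G := Iff.rfl

lemma GoodGroup.conj_mem {G : Set A} (hG : GoodGroup G) {X Y : A} (hX : X ∈ hG.lie)
    (hY : Y ∈ hG.lie) : exp X * Y * exp (-X) ∈ hG.lie := by
  intro t
  letI : NormedAlgebra ℚ A := NormedAlgebra.restrictScalars ℚ ℝ A
  let u : Aˣ := ⟨exp X, exp (-X), exp_mul_exp_neg X, by simpa using exp_mul_exp_neg (-X)⟩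
  have h1 := exp_units_conj u (t • Y)
  have h2 : t • (exp X * Y * exp (-X)) = (u : A) * (t • Y) * ((u⁻¹ : Aˣ) : A) := by
    simp [u]
  have hXG : exp X ∈ G := by simpa using hX 1
  rw [h2, h1]
  exact hG.mul _ (hG.mul _ hXG _ (hY t)) _ (hG.exp_neg hXG)

lemma GoodGroup.bracket_mem [FiniteDimensional ℝ A] {G : Set A} (hG : GoodGroup G) {X Y : A}
    (hX : X ∈ hG.lie) (hY : Y ∈ hG.lie) : X * Y - Y * X ∈ hG.lie := by
  have hcl : IsClosed (hG.lie : Set A) := Submodule.closed_of_finiteDimensional _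
  have hd := ((hasDerivAt_exp_smul_zero X).mul_const Y).mul (hasDerivAt_exp_smul_zero (-X))
  simp only [zero_smul, exp_zero, mul_one, one_mul] at hd
  have hl := (hasDerivAt_iff_tendsto_slope.1 hd)
  have e : X * Y + Y * -X = X * Y - Y * X := by noncomm_ring
  rw [e] at hl
  refine hcl.mem_of_tendsto hl (Eventually.of_forall fun t => ?_)
  simp only [slope, vsub_eq_sub, zero_smul, exp_zero, mul_one, one_mul]
  refine hG.lie.smul_mem _ (hG.lie.sub_mem ?_ ?_)
  · have := hG.conj_mem (hG.lie.smul_mem t hX) hY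
    simpa using this
  · simpa using hY

lemma GoodGroup.local_antilip [FiniteDimensional ℝ A] {G : Set A} (hG : GoodGroup G)
    (p : A →L[ℝ] hG.lie) (hp : ∀ x : hG.lie, p x = x) :
    ∃ c : ℝ, 0 < c ∧ ∀ h ∈ G, ∀ h' ∈ G, ‖h - 1‖ < c → ‖h' - 1‖ < c →
      c * ‖h' - h‖ ≤ ‖p (h' - h)‖ := by
  by_contra hcon
  push Not at hcon
  choose h hh h' hh' h1 h1' hlt using fun k : ℕ => hcon (1 / ((k:ℝ) + 1)) (by positivity)
  choose g hg hg1 hg2 using fun k => hG.inv _ (hh k)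
  have hz : Tendsto (fun k : ℕ => 1 / ((k:ℝ)+1)) atTop (𝓝 0) := tendsto_one_div_add_atTop_nhds_zero_nat
  have hs : ∀ k, 0 < ‖h' k - h k‖ := by
    intro k
    by_contra hc
    have h0 : h' k - h k = 0 := by
      rw [← norm_le_zero_iff]; exact not_lt.1 hc
    have := hlt k
    rw [h0] at this
    simp at this
  let w : ℕ → A := fun k => ‖h' k - h k‖⁻¹ • (h' k - h k)
  have hw : ∀ k, w k ∈ Metric.sphere (0:A) 1 := by
    intro k
    simp only [w, mem_sphere_zero_iff_norm, norm_smul, norm_inv, norm_norm]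
    exact inv_mul_cancel₀ (hs k).ne'
  haveI : ProperSpace A := FiniteDimensional.proper_real A
  obtain ⟨x, hx, φ, hφ, hlim⟩ := (isCompact_sphere (0:A) 1).tendsto_subseq hw
  have hgl : Tendsto g atTop (𝓝 1) := by
    rw [tendsto_iff_norm_sub_tendsto_zero]
    refine squeeze_zero (fun _ => norm_nonneg _) (fun k => ?_) hz
    have e : g k - 1 = g k * (1 - h k) := by rw [mul_sub, hg2, mul_one]
    rw [e]
    calc _ ≤ ‖g k‖ * ‖1 - h k‖ := norm_mul_le _ _
      _ ≤ 1 * ‖1 - h k‖ := by gcongr; exact hG.norm _ (hg k)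
      _ ≤ _ := by rw [one_mul, norm_sub_rev]; exact (h1 k).le
  have hs0 : Tendsto (fun k => ‖h' k - h k‖) atTop (𝓝 0) := by
    have h2 : Tendsto (fun k : ℕ => 1 / ((k:ℝ)+1) + 1 / ((k:ℝ)+1)) atTop (𝓝 0) := by
      simpa using hz.add hz
    refine squeeze_zero (fun _ => norm_nonneg _) (fun k => ?_) h2
    calc ‖h' k - h k‖ = ‖(h' k - 1) - (h k - 1)‖ := by congr 1; abel
      _ ≤ _ := (norm_sub_le _ _).trans (add_le_add (h1' k).le (h1 k).le)
  have hxl : x ∈ hG.lie := by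
    intro t
    refine hG.key (fun k => g (φ k) * h' (φ k)) (fun k => ‖h' (φ k) - h (φ k)‖) x
      (fun k => hG.mul _ (hg _) _ (hh' _)) (fun k => hs _) (hs0.comp hφ.tendsto_atTop) ?_ t
    have := (hgl.comp hφ.tendsto_atTop).mul hlim
    rw [one_mul] at this
    refine this.congr fun k => ?_
    simp only [Function.comp, w, mul_smul_comm, mul_sub, hg2]
  have hpx : Tendsto (fun k => p (w (φ k))) atTop (𝓝 0) := by
    refine squeeze_zero_norm (fun k => ?_) (hz.comp hφ.tendsto_atTop)
    simp only [w, map_smul, norm_smul, norm_inv, norm_norm, Function.comp]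
    rw [inv_mul_le_iff₀ (hs _), mul_comm]
    exact (hlt (φ k)).le
  have hpx2 := (p.continuous.tendsto x).comp hlim
  have h3 := tendsto_nhds_unique hpx hpx2
  have h4 := hp ⟨x, hxl⟩
  simp only [← h3] at h4
  have : x = 0 := by simpa using (congrArg Subtype.val h4).symm
  rw [this] at hx
  simp at hx

lemma GoodGroup.dimH_le [FiniteDimensional ℝ A] {G : Set A} (hG : GoodGroup G) :
    dimH G ≤ Module.finrank ℝ hG.lie := by
  obtain ⟨p, hp⟩ := Submodule.ClosedComplemented.of_finiteDimensional hG.lie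
  obtain ⟨c, hc, H⟩ := hG.local_antilip p hp
  by_contra hlt
  rw [not_le] at hlt
  haveI : ProperSpace A := FiniteDimensional.proper_real A
  obtain ⟨x, hx, ht⟩ := exists_mem_nhdsWithin_lt_dimH_of_lt_dimH hlt
  obtain ⟨g, hg, hxg, hgx⟩ := hG.inv x hx
  let t : Set A := {y | ‖g * y - 1‖ < c} ∩ G
  have htn : t ∈ 𝓝[G] x := by
    refine inter_mem_nhdsWithin _ ?_ |> fun h => by rwa [Set.inter_comm] at h
    refine IsOpen.mem_nhds (isOpen_lt (by fun_prop) continuous_const) ?_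
    simpa [hgx] using hc
  have hlt2 := ht t htn
  let f : A → hG.lie := fun y => p (g * y)
  have hf : ∀ y ∈ t, ∀ y' ∈ t, ‖y' - y‖ ≤ c⁻¹ * ‖f y' - f y‖ := by
    intro y hy y' hy'
    have h1 := H (g * y) (hG.mul _ hg _ hy.2) (g * y') (hG.mul _ hg _ hy'.2) hy.1 hy'.1
    have h2 : ‖y' - y‖ ≤ ‖g * y' - g * y‖ := by
      calc ‖y' - y‖ = ‖x * (g * y' - g * y)‖ := by
            rw [← mul_sub, ← mul_assoc, hxg, one_mul]
        _ ≤ ‖x‖ * ‖g * y' - g * y‖ := norm_mul_le _ _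
        _ ≤ 1 * ‖g * y' - g * y‖ := by gcongr; exact hG.norm _ hx
        _ = _ := one_mul _
    rw [le_inv_mul_iff₀ hc]
    simp only [f, ← map_sub]
    exact (mul_le_mul_of_nonneg_left h2 hc.le).trans h1
  have hinj : Set.InjOn f t := by
    intro y hy y' hy' he
    have := hf y hy y' hy'
    rw [he, sub_self, norm_zero, mul_zero, norm_le_zero_iff, sub_eq_zero] at this
    exact this.symm
  have hlip : LipschitzOnWith (Real.toNNReal c⁻¹) (Function.invFunOn f t) (f '' t) := by
    refine LipschitzOnWith.of_dist_le_mul ?_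
    rintro _ ⟨y, hy, rfl⟩ _ ⟨y', hy', rfl⟩
    rw [hinj.leftInvOn_invFunOn hy, hinj.leftInvOn_invFunOn hy', dist_eq_norm, dist_eq_norm,
      Real.coe_toNNReal _ (by positivity)]
    exact hf y' hy' y hy
  have h5 := hlip.dimH_image_le
  rw [hinj.leftInvOn_invFunOn.image_image] at h5
  have h6 : dimH (f '' t) ≤ Module.finrank ℝ hG.lie := by
    rw [← Real.dimH_univ_eq_finrank]; exact dimH_mono (Set.subset_univ _)
  exact absurd hlt2 (not_lt.2 (h5.trans h6))
end lieabs

section alg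
open Matrix

/-- Skew-symmetric matrices -/
def skewM (n : ℕ) : Submodule ℝ (Matrix (Fin n) (Fin n) ℝ) where
  carrier := {X | Xᵀ = -X}
  zero_mem' := by simp
  add_mem' := by
    intro a b ha hb
    simp only [Set.mem_setOf_eq] at *
    rw [transpose_add, ha, hb]; abel
  smul_mem' := by
    intro c x hx
    simp only [Set.mem_setOf_eq] at *
    rw [transpose_smul, hx, smul_neg]

lemma mem_skewM {n : ℕ} {X : Matrix (Fin n) (Fin n) ℝ} : X ∈ skewM n ↔ Xᵀ = -X := Iff.rfl

lemma skewM_apply {n : ℕ} {X : Matrix (Fin n) (Fin n) ℝ} (h : X ∈ skewM n) (i j : Fin n) :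
    X i j = - X j i := by
  have := congrFun (congrFun (mem_skewM.1 h) j) i
  simpa using this

lemma skewM_of {n : ℕ} {X : Matrix (Fin n) (Fin n) ℝ} (h : ∀ i j, X i j = - X j i) : X ∈ skewM n := by
  rw [mem_skewM]; ext i j; simp [transpose_apply, h j i]

/-- upper entries -/
def skewUp (n : ℕ) : skewM n →ₗ[ℝ] ((Σ j : Fin n, Fin j) → ℝ) where
  toFun X := fun p => X.1 (p.2.castLT (p.2.2.trans p.1.2)) p.1
  map_add' := by intros; rfl
  map_smul' := by intros; rfl

lemma finrank_skewM (n : ℕ) : Module.finrank ℝ (skewM n) = n * (n - 1) / 2 := by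
  have hinj : Function.Injective (skewUp n) := by
    rw [injective_iff_map_eq_zero]
    intro X hX
    have key : ∀ i j : Fin n, i < j → X.1 i j = 0 := by
      intro i j hij
      exact congrFun hX ⟨j, ⟨i.1, hij⟩⟩
    ext i j
    rcases lt_trichotomy i j with h | h | h
    · simpa using key i j h
    · subst h
      have := skewM_apply X.2 i i
      simp; linarith
    · rw [skewM_apply X.2, key j i h]; simp
  have hsurj : Function.Surjective (skewUp n) := by
    intro f
    refine ⟨⟨fun i j => if h : i < j then f ⟨j, ⟨i.1, h⟩⟩ else if h : j < i then - f ⟨i, ⟨j.1, h⟩⟩ else 0,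
      skewM_of ?_⟩, ?_⟩
    · intro i j
      rcases lt_trichotomy i j with h | h | h
      · simp [h, h.not_gt]
      · simp [h]
      · simp [h, h.not_gt]
    · ext ⟨j, i⟩
      have : (i.castLT (i.2.trans j.2) : Fin n) < j := i.2
      exact dif_pos this
  rw [(LinearEquiv.ofBijective (skewUp n) ⟨hinj, hsurj⟩).finrank_eq]
  rw [Module.finrank_fintype_fun_eq_card, Fintype.card_sigma]
  simp only [Fintype.card_fin]
  rw [Fin.sum_univ_eq_sum_range (fun i => i) n, Finset.sum_range_id]

/-- elementary skew matrix -/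
def skE {n : ℕ} (p q : Fin n) : Matrix (Fin n) (Fin n) ℝ := single p q 1 - single q p 1

lemma skE_mem {n : ℕ} (p q : Fin n) : skE p q ∈ skewM n := by
  rw [mem_skewM]; simp [skE]

lemma skE_mul {n : ℕ} (p q a b : Fin n) (x : Matrix (Fin n) (Fin n) ℝ) :
    (skE p q * x) a b = (if a = p then x q b else 0) - (if a = q then x p b else 0) := by
  simp only [skE, sub_mul, Matrix.sub_apply, Matrix.mul_apply, single_apply, ite_mul, one_mul, zero_mul]
  congr 1 <;> split_ifs <;> simp_all [eq_comm]

lemma mul_skE {n : ℕ} (p q a b : Fin n) (x : Matrix (Fin n) (Fin n) ℝ) :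
    (x * skE p q) a b = (if b = q then x a p else 0) - (if b = p then x a q else 0) := by
  simp only [skE, mul_sub, Matrix.sub_apply, Matrix.mul_apply, single_apply, mul_ite, mul_one, mul_zero]
  congr 1 <;> split_ifs <;> simp_all [eq_comm]

/-- masking: keep entries whose index pair crosses `{p,r}` for each `r ∈ S` -/
def maskM {n : ℕ} (p r : Fin n) (x : Matrix (Fin n) (Fin n) ℝ) : Matrix (Fin n) (Fin n) ℝ :=
  fun a b => if ((a = p ∨ a = r) ↔ (b = p ∨ b = r)) then 0 else x a b

lemma bracket_bracket_skE {n : ℕ} (p r : Fin n) (hpr : p ≠ r) (x : Matrix (Fin n) (Fin n) ℝ)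
    (hx : x ∈ skewM n) :
    skE p r * (skE p r * x - x * skE p r) - (skE p r * x - x * skE p r) * skE p r = - maskM p r x := by
  have h := skewM_apply hx
  have h0 : ∀ i, x i i = 0 := fun i => by have := h i i; linarith
  have h' := h p r
  clear h
  clear hx
  have hpr' := hpr.symm
  ext a b
  simp only [Matrix.sub_apply, skE_mul, mul_skE, Matrix.neg_apply, maskM]
  by_cases h1 : a = p <;> by_cases h2 : a = r <;> by_cases h3 : b = p <;> by_cases h4 : b = r <;>
    simp_all <;> grind

/-- ideal of skew -/
def IsIdl {n : ℕ} (K : Submodule ℝ (Matrix (Fin n) (Fin n) ℝ)) : Prop :=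
  K ≤ skewM n ∧ ∀ z ∈ skewM n, ∀ x ∈ K, z * x - x * z ∈ K

lemma IsIdl.mask {n : ℕ} {K : Submodule ℝ (Matrix (Fin n) (Fin n) ℝ)} (hK : IsIdl K)
    (p r : Fin n) (hpr : p ≠ r) {x : Matrix (Fin n) (Fin n) ℝ} (hx : x ∈ K) : maskM p r x ∈ K := by
  have := hK.2 _ (skE_mem p r) _ (hK.2 _ (skE_mem p r) _ hx)
  rw [bracket_bracket_skE p r hpr x (hK.1 hx)] at this
  simpa using K.neg_mem this

lemma IsIdl.maskS {n : ℕ} {K : Submodule ℝ (Matrix (Fin n) (Fin n) ℝ)} (hK : IsIdl K)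
    (p : Fin n) {x : Matrix (Fin n) (Fin n) ℝ} (hx : x ∈ K) (S : Finset (Fin n)) (hS : p ∉ S) :
    ∃ y ∈ K, ∀ a b, y a b = if (∃ r ∈ S, ((a = p ∨ a = r) ↔ (b = p ∨ b = r))) then 0 else x a b := by
  induction S using Finset.induction_on with
  | empty => exact ⟨x, hx, by simp⟩
  | insert r S hr ih =>
    simp only [Finset.mem_insert, not_or] at hS
    obtain ⟨y, hy, hy2⟩ := ih hS.2
    refine ⟨maskM p r y, hK.mask p r hS.1 hy, fun a b => ?_⟩
    simp only [maskM, hy2, Finset.exists_mem_insert]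
    by_cases k1 : ((a = p ∨ a = r) ↔ (b = p ∨ b = r))
    · rw [if_pos k1, if_pos (Or.inl k1)]
    · rw [if_neg k1]
      by_cases k2 : ∃ r ∈ S, ((a = p ∨ a = r) ↔ (b = p ∨ b = r))
      · rw [if_pos k2, if_pos (Or.inr k2)]
      · rw [if_neg k2, if_neg (not_or.2 ⟨k1, k2⟩)]

lemma fin3_third : ∀ p q : Fin 3, ∃ r : Fin 3, r ≠ p ∧ r ≠ q := by decide
lemma fin3_all : ∀ p q r : Fin 3, p ≠ q → r ≠ p → r ≠ q → ∀ a : Fin 3, a = p ∨ a = q ∨ a = r := by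
  decide

lemma IsIdl.exists_skE {n : ℕ} (hn : n = 3 ∨ 5 ≤ n) {K : Submodule ℝ (Matrix (Fin n) (Fin n) ℝ)}
    (hK : IsIdl K) (hne : K ≠ ⊥) : ∃ p q, p ≠ q ∧ skE p q ∈ K := by
  obtain ⟨x, hx, hx0⟩ := K.exists_mem_ne_zero_of_ne_bot hne
  obtain ⟨p, q, hpq⟩ : ∃ p q, x p q ≠ 0 := by
    by_contra hc
    push Not at hc
    exact hx0 (by ext i j; simpa using hc i j)
  have h := skewM_apply (hK.1 hx)
  have hne : p ≠ q := by
    rintro rfl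
    have := h p p
    exact hpq (by linarith)
  refine ⟨p, q, hne, ?_⟩
  suffices hs : ∃ y ∈ K, y = x p q • skE p q by
    obtain ⟨y, hy, e⟩ := hs
    rw [e] at hy
    exact (K.smul_mem_iff hpq).1 hy
  rcases hn with rfl | hn
  · obtain ⟨r, hrp, hrq⟩ : ∃ r : Fin 3, r ≠ p ∧ r ≠ q := by
      exact fin3_third p q
    refine ⟨_, hK.mask q r hrq.symm (hK.mask p r hrp.symm hx), ?_⟩
    have hall : ∀ a : Fin 3, a = p ∨ a = q ∨ a = r := by
      exact fin3_all p q r hne hrp hrq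
    have h0 : ∀ i, x i i = 0 := fun i => by have := h i i; linarith
    ext a b
    simp only [maskM, skE, Matrix.smul_apply, Matrix.sub_apply, single_apply, smul_eq_mul]
    rcases hall a with rfl | rfl | rfl <;> rcases hall b with rfl | rfl | rfl <;>
      simp [h0, hne, hrp, hrq, hne.symm, hrp.symm, hrq.symm]
    all_goals (try linarith [h p q])
    all_goals (try linarith [h a b])
  · obtain ⟨y, hy, hy2⟩ := hK.maskS p hx (Finset.univ \ {p, q}) (by simp)
    refine ⟨y, hy, ?_⟩
    ext a b
    rw [hy2]
    simp only [skE, Matrix.smul_apply, Matrix.sub_apply, single_apply, smul_eq_mul]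
    have h0 : ∀ i, x i i = 0 := fun i => by have := h i i; linarith
    by_cases h1 : a = p ∧ b = q
    · obtain ⟨rfl, rfl⟩ := h1
      rw [if_neg]
      · simp [hne, hne.symm]
      · rintro ⟨r, hr, h2⟩
        simp only [Finset.mem_sdiff, Finset.mem_univ, Finset.mem_insert, Finset.mem_singleton,
          true_and, not_or] at hr
        have : b = r := by tauto
        exact hr.2 this.symm
    by_cases h2 : a = q ∧ b = p
    · obtain ⟨rfl, rfl⟩ := h2
      rw [if_neg]
      · simp [hne, hne.symm, h a b]
      · rintro ⟨r, hr, h2⟩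
        simp only [Finset.mem_sdiff, Finset.mem_univ, Finset.mem_insert, Finset.mem_singleton,
          true_and, not_or] at hr
        have : a = r := by tauto
        exact hr.2 this.symm
    have hR : ∃ r : Fin n, r ≠ p ∧ r ≠ q ∧ r ≠ a ∧ r ≠ b := by
      by_contra hc
      push Not at hc
      have : (Finset.univ : Finset (Fin n)) ⊆ {p, q, a, b} := by
        intro r _
        have := hc r
        simp only [Finset.mem_insert, Finset.mem_singleton]
        tauto
      have := Finset.card_le_card this
      have h4 : ({p, q, a, b} : Finset (Fin n)).card ≤ 4 := Finset.card_le_four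
      simp at this
      omega
    have hrhs : x p q * ((if p = a ∧ q = b then 1 else 0) - (if q = a ∧ p = b then 1 else 0)) = 0 := by
      rw [if_neg (by tauto), if_neg (by tauto)]; simp
    rw [hrhs]
    split_ifs with hc
    · rfl
    · push Not at hc
      by_cases hab : a = b
      · rw [hab]; exact h0 b
      obtain ⟨r, hr1, hr2, hr3, hr4⟩ := hR
      have k1 := hc r (by simp [hr1, hr2])
      have k2 := hc a
      have k3 := hc b
      simp only [Finset.mem_sdiff, Finset.mem_univ, Finset.mem_insert, Finset.mem_singleton,
          true_and, not_or] at k2 k3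
      exfalso
      grind

lemma bracket_skE {n : ℕ} (p q r : Fin n) (h1 : p ≠ q) (h2 : q ≠ r) (h3 : p ≠ r) :
    skE p q * skE q r - skE q r * skE p q = skE p r := by
  ext a b
  simp only [Matrix.sub_apply, skE_mul]
  simp only [skE, Matrix.sub_apply, single_apply]
  by_cases k1 : a = p <;> by_cases k2 : a = q <;> by_cases k3 : a = r <;> simp_all [eq_comm]
lemma skE_swap {n : ℕ} (p q : Fin n) : skE q p = - skE p q := by simp [skE]

lemma IsIdl.eq_skew {n : ℕ} (hn : n = 3 ∨ 5 ≤ n) {K : Submodule ℝ (Matrix (Fin n) (Fin n) ℝ)}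
    (hK : IsIdl K) (hne : K ≠ ⊥) : skewM n ≤ K := by
  obtain ⟨p, q, hpq, hE⟩ := hK.exists_skE hn hne
  have swap : ∀ {a b : Fin n}, skE a b ∈ K → skE b a ∈ K := by
    intro a b h; rw [skE_swap]; exact K.neg_mem h
  have step : ∀ {a b : Fin n}, a ≠ b → skE a b ∈ K → ∀ c, skE a c ∈ K := by
    intro a b hab h c
    by_cases hca : c = a
    · subst hca; simp [skE]
    by_cases hcb : c = b
    · subst hcb; exact h
    rw [← bracket_skE a b c hab (Ne.symm hcb) (Ne.symm hca)]
    have := K.neg_mem (hK.2 _ (skE_mem b c) _ h)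
    simpa using this
  have all : ∀ a b, skE a b ∈ K := by
    intro a b
    have h1 := step hpq hE a
    by_cases hpa : p = a
    · subst hpa; exact step hpq hE b
    exact step (Ne.symm hpa) (swap h1) b
  intro x hx
  have e : x = ∑ a, ∑ b, (x a b / 2) • skE a b := by
    have e1 := matrix_eq_sum_single x
    have e2 : x = -xᵀ := by rw [mem_skewM.1 hx]; simp
    have e3 : xᵀ = ∑ a, ∑ b, single b a (x a b) := by
      conv_lhs => rw [e1]
      simp [transpose_sum]
    have : x = (1/2 : ℝ) • (x - xᵀ) := by
      rw [mem_skewM.1 hx, sub_neg_eq_add, ← two_smul ℝ x, smul_smul]; norm_num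
    conv_lhs => rw [this, e3]; arg 2; arg 1; rw [e1]
    rw [← Finset.sum_sub_distrib, Finset.smul_sum]
    refine Finset.sum_congr rfl fun a _ => ?_
    rw [← Finset.sum_sub_distrib, Finset.smul_sum]
    refine Finset.sum_congr rfl fun b _ => ?_
    simp only [skE, smul_sub, smul_single, smul_eq_mul, mul_one]
    congr 2 <;> ring
  rw [e]
  exact K.sum_mem fun a _ => K.sum_mem fun b _ => K.smul_mem _ (all a b)

/-- trace form -/
noncomputable def trB (n : ℕ) : LinearMap.BilinForm ℝ (Matrix (Fin n) (Fin n) ℝ) :=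
  LinearMap.mk₂ ℝ (fun X Y => trace (Xᵀ * Y)) (by intros; simp [add_mul]) (by intros; simp)
    (by intros; simp [mul_add]) (by intros; simp)

lemma trB_apply {n : ℕ} (X Y : Matrix (Fin n) (Fin n) ℝ) : trB n X Y = trace (Xᵀ * Y) := rfl

lemma trB_symm {n : ℕ} (X Y : Matrix (Fin n) (Fin n) ℝ) : trB n X Y = trB n Y X := by
  rw [trB_apply, trB_apply, ← trace_transpose, transpose_mul, transpose_transpose]

lemma trB_self {n : ℕ} {X : Matrix (Fin n) (Fin n) ℝ} (h : trB n X X = 0) : X = 0 := by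
  rw [trB_apply] at h
  have := Matrix.trace_conjTranspose_mul_self_eq_zero_iff (A := X)
  exact this.1 (by rw [conjTranspose_eq_transpose_of_trivial]; exact h)

lemma skew_bracket {n : ℕ} {x y : Matrix (Fin n) (Fin n) ℝ} (hx : x ∈ skewM n) (hy : y ∈ skewM n) :
    x * y - y * x ∈ skewM n := by
  rw [mem_skewM] at *
  rw [transpose_sub, transpose_mul, transpose_mul, hx, hy]; noncomm_ring

lemma trB_inv {n : ℕ} {x y z : Matrix (Fin n) (Fin n) ℝ} (hx : x ∈ skewM n) (hy : y ∈ skewM n) :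
    trB n (x * y - y * x) z = - trB n y (x * z - z * x) := by
  rw [trB_apply, trB_apply, mem_skewM.1 (skew_bracket hx hy), mem_skewM.1 hy]
  have := trace_mul_comm x (y * z)
  simp only [neg_mul, trace_neg, sub_mul, mul_sub, trace_sub, neg_neg, mul_assoc] at *
  linarith

theorem lie_alg_full {n : ℕ} (hn : 2 ≤ n) (hn4 : n ≠ 4)
    (h : Submodule ℝ (Matrix (Fin n) (Fin n) ℝ)) (hle : h ≤ skewM n)
    (hbr : ∀ x ∈ h, ∀ y ∈ h, x * y - y * x ∈ h)
    (hdim : (n - 1) * (n - 2) / 2 + 1 ≤ Module.finrank ℝ h) : skewM n ≤ h := by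
  have hrefl : (trB n).IsRefl := fun x y hxy => by rw [trB_symm]; exact hxy
  have hdis : Disjoint h ((trB n).orthogonal h) := by
    rw [Submodule.disjoint_def]
    intro x hx hx'
    exact trB_self (hx' x hx)
  have hcompl := (LinearMap.BilinForm.isCompl_orthogonal_iff_disjoint hrefl).2 hdis
  let m := (trB n).orthogonal h ⊓ skewM n
  have hsup : h ⊔ m = skewM n := by
    rw [← sup_inf_assoc_of_le _ hle, hcompl.sup_eq_top, top_inf_eq]
  have hinf : h ⊓ m = ⊥ := by
    rw [← le_bot_iff]
    exact (inf_le_inf_left h inf_le_left).trans hdis.le_bot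
  have hfr : Module.finrank ℝ h + Module.finrank ℝ m = n * (n - 1) / 2 := by
    rw [← finrank_skewM, ← hsup, ← Submodule.finrank_sup_add_finrank_inf_eq, hinf]; simp
  have hhm : ∀ x ∈ h, ∀ y ∈ m, x * y - y * x ∈ m := by
    intro x hx y hy
    refine ⟨fun z hz => ?_, skew_bracket (hle hx) hy.2⟩
    have h1 := trB_inv (z := z) (hle hx) hy.2
    show trB n z _ = 0
    rw [trB_symm, h1, trB_symm, hy.1 _ (hbr x hx z hz), neg_zero]
  set k := Module.finrank ℝ m with hk
  obtain ⟨c, rfl⟩ : ∃ c, n = c + 2 := ⟨n - 2, by omega⟩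
  have t1 : (c + 1) * c / 2 + (c + 1) = (c + 2) * (c + 1) / 2 := by
    have : (c + 2) * (c + 1) = (c + 1) * c + (c + 1) * 2 := by ring
    rw [this, Nat.add_mul_div_right _ _ (by norm_num)]
  have e1 : c + 2 - 1 = c + 1 := rfl
  have e2 : c + 2 - 2 = c := rfl
  rw [e1] at hfr
  rw [e1, e2] at hdim
  have hkc : k ≤ c := by omega
  by_cases hk0 : k = 0
  · have : m = ⊥ := Submodule.finrank_eq_zero.1 hk0
    rw [← hsup, this, sup_bot_eq]
  let K : Submodule ℝ (Matrix (Fin (c+2)) (Fin (c+2)) ℝ) :=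
    { carrier := {x | x ∈ h ∧ ∀ y ∈ m, x * y - y * x = 0}
      zero_mem' := ⟨h.zero_mem, by simp⟩
      add_mem' := by
        rintro a b ⟨ha, ha'⟩ ⟨hb, hb'⟩
        refine ⟨h.add_mem ha hb, fun y hy => ?_⟩
        have := congrArg₂ (· + ·) (ha' y hy) (hb' y hy)
        simp only [add_zero] at this
        rw [← this]; noncomm_ring
      smul_mem' := by
        rintro r a ⟨ha, ha'⟩
        refine ⟨h.smul_mem r ha, fun y hy => ?_⟩
        rw [smul_mul_assoc, mul_smul_comm, ← smul_sub, ha' y hy, smul_zero] }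
  have hKi : IsIdl K := by
    refine ⟨fun x hx => hle hx.1, fun z hz x hx => ?_⟩
    rw [← hsup] at hz
    obtain ⟨z1, hz1, z2, hz2, rfl⟩ := Submodule.mem_sup.1 hz
    have e : (z1 + z2) * x - x * (z1 + z2) = z1 * x - x * z1 := by
      have := hx.2 z2 hz2
      calc _ = (z1 * x - x * z1) - (x * z2 - z2 * x) := by noncomm_ring
        _ = _ := by rw [this, sub_zero]
    rw [e]
    refine ⟨hbr _ hz1 _ hx.1, fun y hy => ?_⟩
    have a1 := hx.2 y hy
    have a2 := hx.2 _ (hhm z1 hz1 y hy)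
    calc _ = (z1 * (x * y - y * x) - (x * y - y * x) * z1)
          - (x * (z1 * y - y * z1) - (z1 * y - y * z1) * x) := by noncomm_ring
      _ = 0 := by rw [a1, a2]; simp
  by_cases hK0 : K = ⊥
  · exfalso
    let b := Module.finBasis ℝ m
    let F : h →ₗ[ℝ] skewM k :=
      { toFun := fun x => ⟨fun i j => trB _ (b i : Matrix _ _ ℝ) (x.1 * (b j).1 - (b j).1 * x.1),
          skewM_of (fun i j => by
            have := trB_inv (z := (b i).1) (hle x.2) (b j).2.2
            rw [trB_symm, this])⟩
        map_add' := by
          intro x y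
          ext i j
          show trB _ _ _ = trB _ _ _ + trB _ _ _
          rw [← map_add]
          congr 1
          simp only [Submodule.coe_add]; noncomm_ring
        map_smul' := by
          intro r x
          ext i j
          show trB _ _ _ = r • trB _ _ _
          rw [← map_smul]
          congr 1
          simp [smul_sub] }
    have hF : Function.Injective F := by
      rw [injective_iff_map_eq_zero]
      intro x hx
      have hxe : ∀ i j, trB _ (b i : Matrix _ _ ℝ) (x.1 * (b j).1 - (b j).1 * x.1) = 0 := by
        intro i j
        exact congrFun (congrFun (congrArg Subtype.val hx) i) j
      have h1 : ∀ j, ∀ y ∈ m, trB _ y (x.1 * (b j).1 - (b j).1 * x.1) = 0 := by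
        intro j y hy
        have := b.sum_repr ⟨y, hy⟩
        have e : y = ∑ i, (b.repr ⟨y, hy⟩ i) • (b i).1 := by
          have := congrArg Subtype.val this
          rw [Submodule.coe_sum] at this
          exact this.symm
        rw [e]
        simp [hxe]
      have h2 : ∀ j, x.1 * (b j).1 - (b j).1 * x.1 = 0 :=
        fun j => trB_self (h1 j _ (hhm _ x.2 _ (b j).2))
      have hxK : x.1 ∈ K := by
        refine ⟨x.2, fun y hy => ?_⟩
        have := b.sum_repr ⟨y, hy⟩
        have e : y = ∑ i, (b.repr ⟨y, hy⟩ i) • (b i).1 := by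
          have := congrArg Subtype.val this
          rw [Submodule.coe_sum] at this
          exact this.symm
        rw [e, Finset.mul_sum, Finset.sum_mul, ← Finset.sum_sub_distrib]
        refine Finset.sum_eq_zero fun i _ => ?_
        rw [smul_mul_assoc, mul_smul_comm, ← smul_sub, h2, smul_zero]
      rw [hK0] at hxK
      exact Subtype.ext (by simpa using hxK)
    have hfin := LinearMap.finrank_le_finrank_of_injective hF
    rw [finrank_skewM] at hfin
    have m1 : k * (k - 1) / 2 ≤ (c + 1) * c / 2 := by
      apply Nat.div_le_div_right
      exact Nat.mul_le_mul (by omega) (by omega)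
    omega
  · have hc : c + 2 = 3 ∨ 5 ≤ c + 2 := by omega
    exact (hKi.eq_skew hc hK0).trans (fun x hx => hx.1)
end alg

section fin
open Matrix NormedSpace Filter Topology
open scoped Matrix.Norms.L2Operator

lemma exp_rot {A : Type*} [NormedRing A] [NormedAlgebra ℝ A] [CompleteSpace A] (J : A)
    (hJ : J * (J * J) = - J) (t : ℝ) :
    exp (t • J) = 1 + Real.sin t • J + (1 - Real.cos t) • (J * J) := by
  let c : ℝ → A := fun t => 1 + Real.sin t • J + (1 - Real.cos t) • (J * J)
  have hc : ∀ t, HasDerivAt c (Real.cos t • J + Real.sin t • (J * J)) t := by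
    intro t
    have h1 := ((Real.hasDerivAt_sin t).smul_const J).const_add (1 : A)
    have h2 := (((Real.hasDerivAt_cos t).const_sub 1).smul_const (J * J))
    have h3 := h1.add h2
    simp only [neg_neg] at h3
    exact h3
  have hJc : ∀ t, J * c t = Real.cos t • J + Real.sin t • (J * J) := by
    intro t
    simp only [c, mul_add, mul_one, mul_smul_comm, hJ]
    module
  have he : ∀ t : ℝ, HasDerivAt (fun t : ℝ => exp (t • (-J)) * c t) 0 t := by
    intro t
    have := (hasDerivAt_exp_smul_const (𝕂 := ℝ) (-J) t).mul (hc t)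
    have e0 : exp (t • -J) * -J * c t + exp (t • -J) * (Real.cos t • J + Real.sin t • (J * J)) = 0 := by
      rw [← hJc]; noncomm_ring
    rw [e0] at this
    exact this
  have hconst := is_const_of_deriv_eq_zero (fun t => (he t).differentiableAt) (fun t => (he t).deriv) t 0
  simp only [zero_smul, exp_zero, one_mul] at hconst
  have h0 : c 0 = 1 := by simp [c]
  rw [h0, smul_neg] at hconst
  have : c t = exp (t • J) := by
    calc c t = (exp (t • J) * exp (-(t • J))) * c t := by rw [exp_mul_exp_neg, one_mul]
      _ = _ := by rw [mul_assoc, hconst, mul_one]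
  exact this.symm

/-- reflection matrix -/
noncomputable def reflM {n : ℕ} (v : Fin n → ℝ) : Matrix (Fin n) (Fin n) ℝ :=
  1 - (2 / (v ⬝ᵥ v)) • vecMulVec v v

lemma reflM_zero {n : ℕ} : reflM (0 : Fin n → ℝ) = 1 := by simp [reflM]

lemma reflM_smul {n : ℕ} (v : Fin n → ℝ) (r : ℝ) (hr : r ≠ 0) : reflM (r • v) = reflM v := by
  simp only [reflM, smul_vecMulVec, vecMulVec_smul, smul_smul, smul_dotProduct, dotProduct_smul,
    smul_eq_mul]
  congr 2
  by_cases h : v ⬝ᵥ v = 0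
  · simp [h]
  · field_simp

lemma reflM_sq {n : ℕ} (v : Fin n → ℝ) : reflM v * reflM v = 1 := by
  by_cases h : v ⬝ᵥ v = 0
  · simp [reflM, h]
  simp only [reflM, sub_mul, mul_sub, one_mul, mul_one, smul_mul_assoc, mul_smul_comm,
    vecMulVec_mul_vecMulVec, vecMulVec_smul, smul_smul]
  have : (2 / (v ⬝ᵥ v)) * (v ⬝ᵥ v) = 2 := by field_simp
  rw [this]
  module

lemma reflM_det {n : ℕ} (v : Fin n → ℝ) (h : v ⬝ᵥ v = 1) : (reflM v).det = -1 := by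
  have := det_one_add_replicateCol_mul_replicateRow (ι := Unit) ((-2 : ℝ) • v) v
  have e : reflM v = 1 + replicateCol Unit ((-2 : ℝ) • v) * replicateRow Unit v := by
    rw [← vecMulVec_eq, smul_vecMulVec, reflM, h]; module
  rw [e, this, dotProduct_smul, h]; norm_num

lemma rot_mem {n : ℕ} {G : Set (Matrix (Fin n) (Fin n) ℝ)} (hG : GoodGroup G)
    (hfull : skewM n ≤ hG.lie) (u w : Fin n → ℝ) (hu : u ⬝ᵥ u = 1) (hw : w ⬝ᵥ w = 1)
    (huw : u ⬝ᵥ w = 0) (t : ℝ) :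
    reflM u * reflM (Real.cos t • u + Real.sin t • w) ∈ G := by
  let J : Matrix (Fin n) (Fin n) ℝ := vecMulVec u w - vecMulVec w u
  have hwu : w ⬝ᵥ u = 0 := by rw [dotProduct_comm]; exact huw
  have hJ2 : J * J = -(vecMulVec u u + vecMulVec w w) := by
    simp only [J, sub_mul, mul_sub, vecMulVec_mul_vecMulVec, hu, hw, huw, hwu, one_smul, zero_smul]
    simp
    abel
  have hJ3 : J * (J * J) = - J := by
    rw [hJ2]
    simp only [J, sub_mul, mul_add, mul_neg, vecMulVec_mul_vecMulVec, hu, hw, huw, hwu, one_smul, zero_smul]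
    simp
    abel
  have hJs : J ∈ skewM n := by
    rw [mem_skewM]; simp [J, transpose_vecMulVec]
  have h1 := hfull hJs (2 * t)
  rw [exp_rot J hJ3, hJ2] at h1
  have hv : (Real.cos t • u + Real.sin t • w) ⬝ᵥ (Real.cos t • u + Real.sin t • w) = 1 := by
    simp only [add_dotProduct, dotProduct_add, smul_dotProduct, dotProduct_smul, hu, hw, huw, hwu,
      smul_eq_mul]
    nlinarith [Real.sin_sq_add_cos_sq t]
  convert h1 using 1
  rw [reflM, reflM, hv, hu]
  simp only [sub_mul, mul_sub, mul_add, one_mul, mul_one, smul_mul_assoc, mul_smul_comm,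
    vecMulVec_mul_vecMulVec, dotProduct_add, dotProduct_smul, hu, huw, vecMulVec_smul,
    smul_vecMulVec, vecMulVec_add, add_vecMulVec, smul_add, smul_sub, smul_smul, smul_eq_mul, J]
  rw [Real.sin_two_mul, Real.cos_two_mul']
  ext i j
  simp only [Matrix.sub_apply, Matrix.add_apply, Matrix.smul_apply, Matrix.neg_apply, smul_eq_mul]
  have hs := Real.sin_sq t
  generalize vecMulVec u u i j = a
  generalize vecMulVec u w i j = b
  generalize vecMulVec w u i j = c
  generalize vecMulVec w w i j = d
  ring_nf
  rw [hs]
  ring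

lemma refl_refl_mem {n : ℕ} {G : Set (Matrix (Fin n) (Fin n) ℝ)} (hG : GoodGroup G)
    (hfull : skewM n ≤ hG.lie) (u v : Fin n → ℝ) (hu : u ⬝ᵥ u = 1) (hv : v ⬝ᵥ v = 1) :
    reflM u * reflM v ∈ G := by
  set c := u ⬝ᵥ v with hc
  have hvu : v ⬝ᵥ u = c := dotProduct_comm _ _
  let w0 := v - c • u
  have hw0 : w0 ⬝ᵥ w0 = 1 - c ^ 2 := by
    simp only [w0, sub_dotProduct, dotProduct_sub, smul_dotProduct, dotProduct_smul, hu, hv, hvu,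
      smul_eq_mul, ← hc]
    ring
  have huw0 : u ⬝ᵥ w0 = 0 := by
    simp only [w0, dotProduct_sub, dotProduct_smul, hu, ← hc, smul_eq_mul]; ring
  have hnn : 0 ≤ 1 - c ^ 2 := by
    rw [← hw0]
    exact Finset.sum_nonneg fun i _ => mul_self_nonneg _
  by_cases h0 : 1 - c ^ 2 = 0
  · have : w0 = 0 := dotProduct_self_eq_zero.1 (hw0.trans h0)
    have hvc : v = c • u := sub_eq_zero.1 this
    have hc0 : c ≠ 0 := by rintro h; rw [h] at h0; norm_num at h0
    rw [hvc, reflM_smul _ _ hc0, reflM_sq]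
    exact hG.one
  · have hpos : 0 < 1 - c ^ 2 := lt_of_le_of_ne hnn (Ne.symm h0)
    have hsp := Real.sqrt_pos.2 hpos
    have hss := Real.mul_self_sqrt hnn
    have := rot_mem hG hfull u ((Real.sqrt (1 - c^2))⁻¹ • w0) hu (by
        simp only [smul_dotProduct, dotProduct_smul, hw0, smul_eq_mul]
        field_simp
        rw [Real.sq_sqrt hnn]) (by rw [dotProduct_smul, huw0, smul_zero]) (Real.arccos c)
    rw [Real.sin_arccos, Real.cos_arccos (by nlinarith) (by nlinarith), smul_smul,
      mul_inv_cancel₀ hsp.ne', one_smul] at this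
    convert this using 2
    simp [w0]

lemma refl_refl_mem' {n : ℕ} {G : Set (Matrix (Fin n) (Fin n) ℝ)} (hG : GoodGroup G)
    (hfull : skewM n ≤ hG.lie) (u v : Fin n → ℝ) (hu : u ≠ 0) (hv : v ≠ 0) :
    reflM u * reflM v ∈ G := by
  have key : ∀ u : Fin n → ℝ, u ≠ 0 → ∃ u', u' ⬝ᵥ u' = 1 ∧ reflM u' = reflM u := by
    intro u hu
    have h1 : u ⬝ᵥ u ≠ 0 := fun h => hu (dotProduct_self_eq_zero.1 h)
    have h2 : 0 ≤ u ⬝ᵥ u := Finset.sum_nonneg fun i _ => mul_self_nonneg _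
    have h3 := Real.sqrt_pos.2 (lt_of_le_of_ne h2 h1.symm)
    have hss := Real.mul_self_sqrt h2
    refine ⟨(Real.sqrt (u ⬝ᵥ u))⁻¹ • u, ?_, reflM_smul _ _ (by positivity)⟩
    simp only [smul_dotProduct, dotProduct_smul, smul_eq_mul]
    field_simp
    rw [sq, hss]
  obtain ⟨u', a, a'⟩ := key u hu
  obtain ⟨v', b, b'⟩ := key v hv
  rw [← a', ← b']
  exact refl_refl_mem hG hfull _ _ a b

lemma prod_refl {n : ℕ} {G : Set (Matrix (Fin n) (Fin n) ℝ)} (hG : GoodGroup G)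
    (hfull : skewM n ≤ hG.lie) (e : Fin n → ℝ) (he : e ≠ 0) (l : List (Fin n → ℝ)) :
    (l.map reflM).prod ∈ G ∨ reflM e * (l.map reflM).prod ∈ G := by
  induction l with
  | nil => left; simpa using hG.one
  | cons v l ih =>
    simp only [List.map_cons, List.prod_cons]
    by_cases hv : v = 0
    · subst hv; rw [reflM_zero, one_mul]; exact ih
    rcases ih with ih | ih
    · right
      rw [← mul_assoc]
      exact hG.mul _ (refl_refl_mem' hG hfull e v he hv) _ ih
    · left
      have := hG.mul _ (refl_refl_mem' hG hfull v e hv he) _ ih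
      rwa [mul_assoc, ← mul_assoc (reflM e), reflM_sq, one_mul] at this

lemma reflM_toEuclidean {n : ℕ} (v x : EuclideanSpace ℝ (Fin n)) :
    toEuclideanCLM (𝕜 := ℝ) (n := Fin n) (reflM v.ofLp) x = (ℝ ∙ v)ᗮ.reflection x := by
  rw [Submodule.reflection_orthogonal_apply, Submodule.reflection_singleton_apply]
  have h1 : inner ℝ v x = v.ofLp ⬝ᵥ x.ofLp := by
    rw [EuclideanSpace.inner_eq_star_dotProduct, dotProduct_comm]; simp
  have h2 : ‖v‖ ^ 2 = v.ofLp ⬝ᵥ v.ofLp := by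
    rw [← real_inner_self_eq_norm_sq, EuclideanSpace.inner_eq_star_dotProduct]; simp
  apply (WithLp.linearEquiv 2 ℝ (Fin n → ℝ)).injective
  ext i
  simp [reflM, sub_mulVec, smul_mulVec, vecMulVec_mulVec, h1, h2]
  ring

lemma exists_refl_list {n : ℕ} (A : Matrix (Fin n) (Fin n) ℝ)
    (hA : A ∈ Matrix.orthogonalGroup (Fin n) ℝ) :
    ∃ l : List (Fin n → ℝ), A = (l.map reflM).prod := by
  have hU : toEuclideanCLM (𝕜 := ℝ) (n := Fin n) A ∈ unitary (EuclideanSpace ℝ (Fin n) →L[ℝ] EuclideanSpace ℝ (Fin n)) :=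
    Unitary.map_mem (toEuclideanCLM (𝕜 := ℝ) (n := Fin n)) hA
  obtain ⟨l, -, hl⟩ := (Unitary.linearIsometryEquiv ⟨_, hU⟩).reflections_generate_dim
  refine ⟨l.map (fun v => v.ofLp), ?_⟩
  apply (toEuclideanCLM (𝕜 := ℝ) (n := Fin n)).injective
  ext1 x
  change toEuclideanCLM (𝕜 := ℝ) (n := Fin n) A x = toEuclideanCLM (𝕜 := ℝ) (n := Fin n) _ x
  have h1 : toEuclideanCLM (𝕜 := ℝ) (n := Fin n) A x = (Unitary.linearIsometryEquiv ⟨_, hU⟩) x := rfl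
  rw [h1, hl]
  clear h1 hl
  induction l generalizing x with
  | nil => simp
  | cons v l ih =>
    simp only [List.map_cons, List.prod_cons, map_mul]
    rw [LinearIsometryEquiv.coe_mul, Function.comp_apply, ih, ← reflM_toEuclidean]
    rfl

lemma lie_le_skew {n : ℕ} {G : Set (Matrix (Fin n) (Fin n) ℝ)} (hG : GoodGroup G)
    (h : ∀ x ∈ G, x ∈ Matrix.orthogonalGroup (Fin n) ℝ) : hG.lie ≤ skewM n := by
  intro X hX
  have h1 : ∀ t : ℝ, exp (t • Xᵀ) * exp (t • X) = 1 := by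
    intro t
    have := (mem_orthogonalGroup_iff' (A := exp (t • X))).1 (h _ (hX t))
    rw [← transpose_smul, Matrix.exp_transpose]
    exact this
  have hd := (hasDerivAt_exp_smul_zero Xᵀ).mul (hasDerivAt_exp_smul_zero X)
  have hc : HasDerivAt (fun t : ℝ => (1 : Matrix (Fin n) (Fin n) ℝ)) 0 (0:ℝ) := hasDerivAt_const _ _
  have e : (fun t : ℝ => exp (t • Xᵀ) * exp (t • X)) = fun _ => 1 := funext h1
  have hd' : HasDerivAt (fun t : ℝ => exp (t • Xᵀ) * exp (t • X)) _ 0 := hd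
  rw [e] at hd'
  have := hd'.unique hc
  simp only [zero_smul, exp_zero, mul_one, one_mul] at this
  rw [mem_skewM]
  exact eq_neg_of_add_eq_zero_left this

theorem main_aux {n : ℕ} (hn : 2 ≤ n) (hn4 : n ≠ 4)
    (H : Subgroup ↥(Matrix.orthogonalGroup (Fin n) ℝ))
    (hne : H ≠ ⊤)
    (hclosed : IsClosed (H : Set ↥(Matrix.orthogonalGroup (Fin n) ℝ)))
    (hconn : IsConnected (H : Set ↥(Matrix.orthogonalGroup (Fin n) ℝ)))
    (hdim : (((n - 1) * (n - 2) / 2 + 1 : ℕ) : ℝ≥0∞) ≤ orthSubgroupDim n H) :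
    (H : Set ↥(Matrix.orthogonalGroup (Fin n) ℝ)) =
      {A : ↥(Matrix.orthogonalGroup (Fin n) ℝ) | (A : Matrix (Fin n) (Fin n) ℝ) ∈ Matrix.specialOrthogonalGroup (Fin n) ℝ} := by
  haveI : NeZero n := ⟨by omega⟩
  let G : Set (Matrix (Fin n) (Fin n) ℝ) := Subtype.val '' (H : Set ↥(Matrix.orthogonalGroup (Fin n) ℝ))
  have hGO : ∀ x ∈ G, x ∈ Matrix.orthogonalGroup (Fin n) ℝ := by
    rintro _ ⟨x, -, rfl⟩; exact x.2
  have hOcl : IsClosed (Matrix.orthogonalGroup (Fin n) ℝ : Set (Matrix (Fin n) (Fin n) ℝ)) := by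
    have : (Matrix.orthogonalGroup (Fin n) ℝ : Set (Matrix (Fin n) (Fin n) ℝ)) = {A | A * star A = 1} := by
      ext A; exact Matrix.mem_orthogonalGroup_iff _ _
    rw [this]
    exact isClosed_eq (by fun_prop) continuous_const
  have hG : GoodGroup G :=
    { closed := hOcl.isClosedEmbedding_subtypeVal.isClosedMap _ hclosed
      one := ⟨1, H.one_mem, rfl⟩
      mul := by
        rintro _ ⟨x, hx, rfl⟩ _ ⟨y, hy, rfl⟩
        exact ⟨x * y, H.mul_mem hx hy, rfl⟩
      norm := by
        intro x hx
        exact (CStarRing.norm_of_mem_unitary (hGO x hx)).le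
      inv := by
        rintro _ ⟨x, hx, rfl⟩
        refine ⟨_, ⟨x⁻¹, H.inv_mem hx, rfl⟩, ?_, ?_⟩
        · exact congrArg Subtype.val (mul_inv_cancel x)
        · exact congrArg Subtype.val (inv_mul_cancel x) }
  have hd : orthSubgroupDim n H = dimH G := by
    let L : Matrix (Fin n) (Fin n) ℝ ≃L[ℝ] (Fin n → Fin n → ℝ) :=
      (Matrix.ofLinearEquiv ℝ).symm.toContinuousLinearEquiv
    rw [← L.dimH_image]
    unfold orthSubgroupDim
    congr 1
    rw [Set.image_image]
    rfl
  have hfr : (n - 1) * (n - 2) / 2 + 1 ≤ Module.finrank ℝ hG.lie := by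
    rw [hd] at hdim
    exact_mod_cast hdim.trans hG.dimH_le
  have hfull := lie_alg_full hn hn4 hG.lie (lie_le_skew hG hGO)
    (fun x hx y hy => hG.bracket_mem hx hy) hfr
  have hdet : ∀ A ∈ H, (A : Matrix (Fin n) (Fin n) ℝ).det = 1 := by
    have hpm : ∀ A : ↥(Matrix.orthogonalGroup (Fin n) ℝ),
        (A : Matrix (Fin n) (Fin n) ℝ).det = 1 ∨ (A : Matrix (Fin n) (Fin n) ℝ).det = -1 := by
      intro A
      have h1 := congrArg Matrix.det ((Matrix.mem_orthogonalGroup_iff _ _).1 A.2)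
      have h2 : ((A : Matrix (Fin n) (Fin n) ℝ)ᵀ).det = (A : Matrix (Fin n) (Fin n) ℝ).det :=
        Matrix.det_transpose _
      rw [Matrix.det_mul, h2, Matrix.det_one] at h1
      exact mul_self_eq_one_iff.1 h1
    intro A hA
    rcases hpm A with h | h
    · exact h
    exfalso
    have hcont : Continuous (fun A : ↥(Matrix.orthogonalGroup (Fin n) ℝ) =>
        (A : Matrix (Fin n) (Fin n) ℝ).det) := by
      exact Continuous.matrix_det continuous_subtype_val
    have hiv := hconn.isPreconnected.intermediate_value hA H.one_mem hcont.continuousOn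
    have h0 : (0:ℝ) ∈ Set.Icc ((A : Matrix (Fin n) (Fin n) ℝ).det)
        (((1 : ↥(Matrix.orthogonalGroup (Fin n) ℝ)) : Matrix (Fin n) (Fin n) ℝ).det) := by
      rw [h]; simp
    obtain ⟨B, hB, hB0⟩ := hiv h0
    simp only at hB0
    rcases hpm B with h | h <;> rw [hB0] at h <;> norm_num at h
  ext A
  simp only [SetLike.mem_coe, Set.mem_setOf_eq, Matrix.mem_specialOrthogonalGroup_iff]
  constructor
  · intro hA
    exact ⟨A.2, hdet A hA⟩
  · rintro ⟨hA, hA1⟩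
    have hmem : ∀ B ∈ G, B.det = 1 := by
      rintro _ ⟨B, hB, rfl⟩; exact hdet B hB
    obtain ⟨l, hl⟩ := exists_refl_list A.1 A.2
    let e : Fin n → ℝ := Pi.single 0 1
    have he : e ⬝ᵥ e = 1 := by simp [e]
    have he0 : e ≠ 0 := by rintro h; rw [h] at he; simp at he
    rcases prod_refl hG hfull e he0 l with h | h
    · rw [← hl] at h
      obtain ⟨B, hB, hBA⟩ := h
      rwa [Subtype.ext hBA] at hB
    · exfalso
      have := hmem _ h
      rw [← hl, Matrix.det_mul, reflM_det e he, hA1] at this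
      norm_num at this

end fin

/-- For `n ≥ 2`, `n ≠ 4`, the only proper closed connected subgroup of `O(n, ℝ)` of
dimension at least `(n-1)(n-2)/2 + 1` is `SO(n, ℝ)`. -/
theorem stmt_11 {n : ℕ} (hn : 2 ≤ n) (hn4 : n ≠ 4)
    (H : Subgroup ↥(Matrix.orthogonalGroup (Fin n) ℝ))
    (hne : H ≠ ⊤)
    (hclosed : IsClosed (H : Set ↥(Matrix.orthogonalGroup (Fin n) ℝ)))
    (hconn : IsConnected (H : Set ↥(Matrix.orthogonalGroup (Fin n) ℝ)))
    (hdim : (((n - 1) * (n - 2) / 2 + 1 : ℕ) : ℝ≥0∞) ≤ orthSubgroupDim n H) :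
    (H : Set ↥(Matrix.orthogonalGroup (Fin n) ℝ)) =
      {A : ↥(Matrix.orthogonalGroup (Fin n) ℝ) | (A : Matrix (Fin n) (Fin n) ℝ) ∈ Matrix.specialOrthogonalGroup (Fin n) ℝ} := by
  exact main_aux hn hn4 H hne hclosed hconn hdim
end

section
/- Let H be a connected closed subgroup of the unitary group U(N) with N ≥ 2 and dim H ≥ N² - 2N + 2. Then H = U(N), or H = SU(N), or H is conjugate in U(N) to the block-diagonal subgroup U(N-1) × U(1), or N = 4 and H is conjugate in U(4) to Sp(2) or to e^{iℝ}·Sp(2). -/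
open scoped ENNReal

/-- The dimension of a subgroup of the unitary group `U(N)`, measured as the Hausdorff
dimension of its underlying set of matrices. -/
noncomputable def unitarySubgroupDim (N : ℕ) (H : Subgroup ↥(Matrix.unitaryGroup (Fin N) ℂ)) :
    ℝ≥0∞ :=
  dimH ((fun A : ↥(Matrix.unitaryGroup (Fin N) ℂ) =>
    fun i j : Fin N => (A : Matrix (Fin N) (Fin N) ℂ) i j) ''
      (H : Set ↥(Matrix.unitaryGroup (Fin N) ℂ)))

/-- The block-diagonal subgroup `U(N-1) × U(1)` of `U(N)` (with respect to splitting off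
the last coordinate), as a set. -/
def blockDiagSet (N : ℕ) : Set ↥(Matrix.unitaryGroup (Fin N) ℂ) :=
  {A : ↥(Matrix.unitaryGroup (Fin N) ℂ) | ∀ i j : Fin N,
    ¬(((i : ℕ) = N - 1) ↔ ((j : ℕ) = N - 1)) → (A : Matrix (Fin N) (Fin N) ℂ) i j = 0}

/-- The standard symplectic form on `ℂ^N` (for `N = 4` this is the form defining
`Sp(2) ⊂ U(4)`). -/
def symplJ (N : ℕ) : Matrix (Fin N) (Fin N) ℂ :=
  Matrix.of fun i j : Fin N =>
    if (j : ℕ) = (i : ℕ) + N / 2 then 1 else if (i : ℕ) = (j : ℕ) + N / 2 then -1 else 0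

/-- The compact symplectic group `Sp(2) ⊂ U(4)` (matrices preserving the symplectic form),
as a set; for general `N` this is the set of unitary matrices `A` with `Aᵀ J A = J`. -/
def spSet (N : ℕ) : Set ↥(Matrix.unitaryGroup (Fin N) ℂ) :=
  {A : ↥(Matrix.unitaryGroup (Fin N) ℂ) |
    Matrix.transpose (A : Matrix (Fin N) (Fin N) ℂ) * symplJ N * (A : Matrix (Fin N) (Fin N) ℂ) = symplJ N}

/-- The set `e^{iℝ}·Sp(2)` of unit-scalar multiples of elements of `Sp(2)`. -/
def eSpSet (N : ℕ) : Set ↥(Matrix.unitaryGroup (Fin N) ℂ) :=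
  {B : ↥(Matrix.unitaryGroup (Fin N) ℂ) | ∃ t : ℝ, ∃ A ∈ spSet N,
    (B : Matrix (Fin N) (Fin N) ℂ) =
      Complex.exp (t * Complex.I) • (A : Matrix (Fin N) (Fin N) ℂ)}

namespace St12
open Module

section Krull
variable {N : ℕ}

/-- The Segre map. -/
noncomputable def segre (N : ℕ) :
    MvPolynomial (Fin N × Fin N) ℂ →ₐ[ℂ] MvPolynomial (Fin N ⊕ Fin N) ℂ :=
  MvPolynomial.aeval fun p => MvPolynomial.X (Sum.inl p.1) * MvPolynomial.X (Sum.inr p.2)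

/-- The set of variables kept at stage `k`. -/
def keep (N k : ℕ) (s : Fin N ⊕ Fin N) : Prop :=
  Sum.elim (fun i : Fin N => (i : ℕ) < max 1 (N - k)) (fun j : Fin N => (j : ℕ) < 2 * N - 1 - k) s

open Classical in
/-- Kill all variables except those kept at stage `k`. -/
noncomputable def kill (N k : ℕ) :
    MvPolynomial (Fin N ⊕ Fin N) ℂ →ₐ[ℂ] MvPolynomial (Fin N ⊕ Fin N) ℂ :=
  MvPolynomial.aeval fun s => if keep N k s then MvPolynomial.X s else 0

lemma keep_mono {k : ℕ} {s : Fin N ⊕ Fin N} (h : keep N (k+1) s) : keep N k s := by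
  cases s <;> simp only [keep, Sum.elim_inl, Sum.elim_inr] at * <;> omega

lemma kill_comp (k : ℕ) : (kill N (k+1)).comp (kill N k) = kill N (k+1) := by
  apply MvPolynomial.algHom_ext
  intro s
  simp only [kill, AlgHom.comp_apply, MvPolynomial.aeval_X]
  by_cases h : keep N k s
  · simp [h]
  · have : ¬ keep N (k+1) s := fun h' => h (keep_mono h')
    simp [h, this]

/-- The chain of primes in the Segre ring. -/
noncomputable def segPrime (N k : ℕ) : Ideal (segre N).range :=
  RingHom.ker ((kill N k).comp (segre N).range.val)

instance (k : ℕ) : (segPrime N k).IsPrime := by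
  exact RingHom.ker_isPrime ((kill N k).comp (segre N).range.val).toRingHom

lemma mem_segPrime (k : ℕ) (s : (segre N).range) :
    s ∈ segPrime N k ↔ kill N k (s : MvPolynomial (Fin N ⊕ Fin N) ℂ) = 0 := Iff.rfl

lemma segPrime_lt {k : ℕ} (hN : 1 ≤ N) (hk : k + 1 ≤ 2 * N - 1) :
    segPrime N k < segPrime N (k+1) := by
  refine lt_of_le_of_ne ?_ ?_
  · intro s hs
    rw [mem_segPrime] at *
    rw [← kill_comp, AlgHom.comp_apply, hs, map_zero]
  · obtain ⟨i, j, h1, h2, h3⟩ : ∃ i j : Fin N, keep N k (Sum.inl i) ∧ keep N k (Sum.inr j) ∧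
        ¬ (keep N (k+1) (Sum.inl i) ∧ keep N (k+1) (Sum.inr j)) := by
      simp only [keep, Sum.elim_inl, Sum.elim_inr]
      by_cases hh : k + 1 ≤ N - 1
      · exact ⟨⟨N - k - 1, by omega⟩, ⟨0, by omega⟩, by simp; omega, by simp; omega, by simp; omega⟩
      · exact ⟨⟨0, by omega⟩, ⟨2 * N - 1 - k - 1, by omega⟩, by simp, by simp; omega,
          by simp; omega⟩
    intro heq
    have hm : (segre N).rangeRestrict (MvPolynomial.X (i, j)) ∈ segPrime N (k+1) := by
      rw [mem_segPrime]
      change kill N (k+1) (segre N (MvPolynomial.X (i, j))) = 0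
      simp only [segre, kill, MvPolynomial.aeval_X, map_mul]
      by_cases h : keep N (k+1) (Sum.inl i)
      · have : ¬ keep N (k+1) (Sum.inr j) := fun h' => h3 ⟨h, h'⟩
        simp [this]
      · simp [h]
    rw [← heq, mem_segPrime] at hm
    change kill N k (segre N (MvPolynomial.X (i, j))) = 0 at hm
    simp [segre, kill, MvPolynomial.aeval_X, h1, h2, MvPolynomial.X_ne_zero] at hm

lemma le_height_segPrime (hN : 1 ≤ N) (k : ℕ) (hk : k ≤ 2 * N - 1) :
    (k : ℕ∞) ≤ (segPrime N k).height := by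
  induction k with
  | zero => simp
  | succ k ih =>
    have := Ideal.height_add_one_le_of_lt_of_isPrime (segPrime_lt hN hk)
    refine le_trans ?_ this
    push_cast
    gcongr
    exact ih (by omega)

theorem exists_rank_one (hN : 1 ≤ N) (g : Submodule ℂ (Matrix (Fin N) (Fin N) ℂ))
    (hg : N ^ 2 - 2 * N + 2 ≤ finrank ℂ g) :
    ∃ a b : Fin N → ℂ, a ≠ 0 ∧ b ≠ 0 ∧ Matrix.vecMulVec a b ∈ g := by
  by_contra hcon
  push Not at hcon
  let B := Module.finBasis ℂ (Matrix (Fin N) (Fin N) ℂ ⧸ g)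
  have hc : finrank ℂ (Matrix (Fin N) (Fin N) ℂ ⧸ g) + finrank ℂ g = N ^ 2 := by
    rw [Submodule.finrank_quotient_add_finrank, Module.finrank_matrix]
    simp [sq]
  have hc2 : finrank ℂ (Matrix (Fin N) (Fin N) ℂ ⧸ g) < 2 * N - 1 := by
    have : 2 * N ≤ N^2 + 1 := by nlinarith [sq_nonneg ((N:ℤ) - 1)]
    omega
  let ell : Fin (finrank ℂ (Matrix (Fin N) (Fin N) ℂ ⧸ g)) → Matrix (Fin N) (Fin N) ℂ →ₗ[ℂ] ℂ :=
    fun i => (B.coord i).comp g.mkQ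
  have hell : ∀ M, (∀ i, ell i M = 0) → M ∈ g := by
    intro M hM
    rw [← Submodule.Quotient.mk_eq_zero, ← B.forall_coord_eq_zero_iff]
    exact hM
  let form : Fin (finrank ℂ (Matrix (Fin N) (Fin N) ℂ ⧸ g)) → MvPolynomial (Fin N × Fin N) ℂ :=
    fun i => ∑ p : Fin N × Fin N,
      MvPolynomial.C (ell i (Matrix.single p.1 p.2 1)) * MvPolynomial.X p
  have hform : ∀ i (z : Fin N × Fin N → ℂ), MvPolynomial.aeval z (form i) =
      ell i (Matrix.of fun a b => z (a, b)) := by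
    intro i z
    have : (Matrix.of fun a b => z (a, b)) =
        ∑ p : Fin N × Fin N, z p • Matrix.single p.1 p.2 (1:ℂ) := by
      rw [Fintype.sum_prod_type]
      conv_lhs => rw [Matrix.matrix_eq_sum_single (Matrix.of fun a b => z (a, b))]
      simp [Matrix.smul_single]
    rw [this]
    simp only [form, map_sum, map_mul, MvPolynomial.aeval_C, MvPolynomial.aeval_X, map_smul,
      smul_eq_mul, Algebra.algebraMap_self, RingHom.id_apply, mul_comm]
  let ρ := (segre N).rangeRestrict
  have hρ : Function.Surjective ρ := (segre N).rangeRestrict_surjective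
  have : IsNoetherianRing (segre N).range := isNoetherianRing_of_surjective _ _ ρ.toRingHom hρ
  have hk0 : ∀ r : MvPolynomial (Fin N × Fin N) ℂ, kill N (2*N-1) (segre N r) =
      MvPolynomial.C (MvPolynomial.aeval (0 : Fin N × Fin N → ℂ) r) := by
    intro r
    have : (kill N (2*N-1)).comp (segre N) =
        (Algebra.ofId ℂ (MvPolynomial (Fin N ⊕ Fin N) ℂ)).comp
          (MvPolynomial.aeval (0 : Fin N × Fin N → ℂ)) := by
      apply MvPolynomial.algHom_ext
      intro p
      simp [kill, segre, keep]
    exact DFunLike.congr_fun this r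
  have hmin : segPrime N (2 * N - 1) ∈ (Ideal.span (Set.range fun i => ρ (form i))).minimalPrimes := by
    refine ⟨⟨inferInstance, ?_⟩, ?_⟩
    · rw [Ideal.span_le]
      rintro _ ⟨i, rfl⟩
      show _ = _
      have : kill N (2*N-1) (segre N (form i)) = 0 := by
        rw [hk0, hform]
        have : (Matrix.of fun a b : Fin N => (0 : Fin N × Fin N → ℂ) (a, b)) = 0 := by ext; simp
        rw [this]; simp
      exact this
    · rintro P ⟨hP, hIP⟩ hPm
      have hP' : (P.comap ρ).IsPrime := Ideal.IsPrime.comap _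
      have hnull := MvPolynomial.IsPrime.vanishingIdeal_zeroLocus (K := ℂ) (P.comap ρ)
      have hz : ∀ z ∈ MvPolynomial.zeroLocus ℂ (P.comap ρ), z = 0 := by
        intro z hz
        rw [MvPolynomial.mem_zeroLocus_iff] at hz
        have hzf : (Matrix.of fun a b => z (a, b)) ∈ g := by
          apply hell
          intro i
          rw [← hform]
          apply hz
          exact hIP (Ideal.subset_span ⟨i, rfl⟩)
        have hrk : ∀ i j k l, z (i,j) * z (k,l) = z (i,l) * z (k,j) := by
          intro i j k l
          have := hz (MvPolynomial.X (i,j) * MvPolynomial.X (k,l) -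
            MvPolynomial.X (i,l) * MvPolynomial.X (k,j)) (by
              rw [Ideal.mem_comap]
              have : ρ (MvPolynomial.X (i,j) * MvPolynomial.X (k,l) -
                MvPolynomial.X (i,l) * MvPolynomial.X (k,j)) = 0 := by
                apply Subtype.ext
                show segre N _ = 0
                simp [segre]
                ring
              rw [this]; exact P.zero_mem)
          simpa [sub_eq_zero] using this
        by_contra hne
        obtain ⟨⟨i, j⟩, hij⟩ := Function.ne_iff.mp hne
        simp only [Pi.zero_apply] at hij
        refine hcon (fun a => z (a, j)) (fun b => z (i, b) / z (i, j)) ?_ ?_ ?_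
        · exact fun h => hij (congrFun h i)
        · exact fun h => by simpa [hij] using congrFun h j
        · convert hzf using 1
          ext a b
          simp only [Matrix.vecMulVec_apply, Matrix.of_apply]
          field_simp
          linear_combination hrk a j i b
      intro s hs
      obtain ⟨r, rfl⟩ := hρ s
      have h0 : MvPolynomial.aeval (0 : Fin N × Fin N → ℂ) r = 0 := by
        have : kill N (2*N-1) (segre N r) = 0 := hs
        rw [hk0] at this
        simpa using this
      show r ∈ P.comap ρ
      rw [← hnull, MvPolynomial.mem_vanishingIdeal_iff]
      intro z hz'
      rw [hz z hz']; exact h0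
  have h1 := Ideal.height_le_card_of_mem_minimalPrimes_span (Set.finite_range _) hmin
  have h2 := le_height_segPrime hN (2 * N - 1) le_rfl
  have h3 : (Set.range fun i => ρ (form i)).ncard ≤
      finrank ℂ (Matrix (Fin N) (Fin N) ℂ ⧸ g) := by
    rw [← Set.image_univ]
    refine (Set.ncard_image_le Set.finite_univ).trans ?_
    simp
  have := (h2.trans h1)
  norm_cast at this
  omega

end Krull
end St12

namespace St12
open Module Matrix

section LinAlg
variable {N : ℕ}

/-- Rank one matrix `a b*`. -/
def kk (a b : Fin N → ℂ) : Matrix (Fin N) (Fin N) ℂ := vecMulVec a (star b)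

lemma kk_mul_kk (a b c d : Fin N → ℂ) : kk a b * kk c d = (star b ⬝ᵥ c) • kk a d := by
  simp [kk, vecMulVec_mul_vecMulVec, vecMulVec_smul]

lemma mul_kk (X : Matrix (Fin N) (Fin N) ℂ) (a b : Fin N → ℂ) : X * kk a b = kk (X *ᵥ a) b := by
  simp [kk, mul_vecMulVec]

lemma kk_mul (X : Matrix (Fin N) (Fin N) ℂ) (a b : Fin N → ℂ) : kk a b * X = kk a (Xᴴ *ᵥ b) := by
  simp [kk, vecMulVec_mul, star_mulVec]

lemma kk_conj (a b : Fin N → ℂ) : (kk a b)ᴴ = kk b a := by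
  ext i j; simp [kk, vecMulVec_apply, mul_comm]

lemma kk_mulVec (a b c : Fin N → ℂ) : kk a b *ᵥ c = (star b ⬝ᵥ c) • a := by
  simp [kk, vecMulVec_mulVec]

lemma kk_add_left (a b c : Fin N → ℂ) : kk (a + b) c = kk a c + kk b c := by
  simp [kk, add_vecMulVec]
lemma kk_add_right (a b c : Fin N → ℂ) : kk a (b + c) = kk a b + kk a c := by
  simp [kk, vecMulVec_add]
lemma kk_sub_left (a b c : Fin N → ℂ) : kk (a - b) c = kk a c - kk b c := by
  simp [kk, sub_vecMulVec]
lemma kk_sub_right (a b c : Fin N → ℂ) : kk a (b - c) = kk a b - kk a c := by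
  simp [kk, vecMulVec_sub]
lemma kk_smul_left (r : ℂ) (a c : Fin N → ℂ) : kk (r • a) c = r • kk a c := by
  simp [kk, smul_vecMulVec]
lemma kk_smul_right (r : ℂ) (a c : Fin N → ℂ) : kk a (r • c) = star r • kk a c := by
  simp [kk, vecMulVec_smul]
lemma kk_neg_left (a c : Fin N → ℂ) : kk (-a) c = - kk a c := by
  simp [kk, neg_vecMulVec]
lemma kk_neg_right (a c : Fin N → ℂ) : kk a (-c) = - kk a c := by
  simp [kk, vecMulVec_neg]
lemma kk_zero_left (c : Fin N → ℂ) : kk 0 c = 0 := by simp [kk]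
lemma kk_zero_right (c : Fin N → ℂ) : kk c 0 = 0 := by simp [kk]

lemma ip_star (a b : Fin N → ℂ) : star (star a ⬝ᵥ b) = star b ⬝ᵥ a := by
  simp [dotProduct, mul_comm]

lemma ip_adj (X : Matrix (Fin N) (Fin N) ℂ) (a b : Fin N → ℂ) :
    star (Xᴴ *ᵥ a) ⬝ᵥ b = star a ⬝ᵥ (X *ᵥ b) := by
  rw [star_mulVec, conjTranspose_conjTranspose, dotProduct_mulVec]

open scoped ComplexOrder in
lemma ip_self {a : Fin N → ℂ} : star a ⬝ᵥ a = 0 ↔ a = 0 := dotProduct_star_self_eq_zero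

lemma ip_flip {a b : Fin N → ℂ} (h : star a ⬝ᵥ b = 0) : star b ⬝ᵥ a = 0 := by
  rw [← ip_star, h, star_zero]

lemma sum_kk (X : Matrix (Fin N) (Fin N) ℂ) : X = ∑ j, kk (fun i => X i j) (Pi.single j 1) := by
  ext i l
  simp [kk, Matrix.sum_apply, vecMulVec_apply, Pi.single_apply]

lemma trace_kk (a b : Fin N → ℂ) : (kk a b).trace = star b ⬝ᵥ a := by
  simp [kk, trace_vecMulVec, dotProduct_comm]

variable {g : Submodule ℂ (Matrix (Fin N) (Fin N) ℂ)}

theorem sl_of (hlie : ∀ X ∈ g, ∀ Y ∈ g, X * Y - Y * X ∈ g) (hstar : ∀ X ∈ g, Xᴴ ∈ g)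
    {v : Fin N → ℂ} (hv : star v ⬝ᵥ v = 1)
    (h : ∀ z, star v ⬝ᵥ z = 0 → kk z v ∈ g) (X : Matrix (Fin N) (Fin N) ℂ) :
    X - X.trace • kk v v ∈ g := by
  have key : ∀ y z : Fin N → ℂ, kk y z - (star z ⬝ᵥ y) • kk v v ∈ g := by
    intro y z
    obtain ⟨β, y', hy, rfl⟩ : ∃ β : ℂ, ∃ y', star v ⬝ᵥ y' = 0 ∧ y = y' + β • v :=
      ⟨star v ⬝ᵥ y, y - (star v ⬝ᵥ y) • v, by simp [hv], by simp⟩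
    obtain ⟨γ, z', hz, rfl⟩ : ∃ β : ℂ, ∃ y', star v ⬝ᵥ y' = 0 ∧ z = y' + β • v :=
      ⟨star v ⬝ᵥ z, z - (star v ⬝ᵥ z) • v, by simp [hv], by simp⟩
    have h1 := h y' hy
    have h2 := hstar _ (h z' hz)
    rw [kk_conj] at h2
    have h3 := hlie _ h1 _ h2
    rw [kk_mul_kk, kk_mul_kk, hv] at h3
    have h4 := g.add_mem (g.add_mem h3 (g.smul_mem (star γ) h1)) (g.smul_mem β h2)
    convert h4 using 1
    simp only [kk_add_left, kk_add_right, kk_smul_left, kk_smul_right, star_add, star_smul,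
      add_dotProduct, dotProduct_add, smul_dotProduct, dotProduct_smul, hv, hy, ip_flip hz,
      smul_eq_mul]
    module
  have : X - X.trace • kk v v = ∑ j, (kk (fun i => X i j) (Pi.single j 1) -
      (star (Pi.single j 1 : Fin N → ℂ) ⬝ᵥ (fun i => X i j)) • kk v v) := by
    rw [Finset.sum_sub_distrib, ← sum_kk, ← Finset.sum_smul]
    congr 2
    simp only [trace, diag]
    refine Finset.sum_congr rfl fun j _ => ?_
    rw [← Pi.single_star]; simp
  rw [this]
  exact g.sum_mem fun j _ => key _ _

theorem top_of_nonnil (hlie : ∀ X ∈ g, ∀ Y ∈ g, X * Y - Y * X ∈ g) (hstar : ∀ X ∈ g, Xᴴ ∈ g)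
    (hirr : ∀ V : Submodule ℂ (Fin N → ℂ), (∀ X ∈ g, ∀ v ∈ V, X *ᵥ v ∈ V) → V = ⊥ ∨ V = ⊤)
    {u v : Fin N → ℂ} (hx : kk u v ∈ g) (hne : star v ⬝ᵥ u ≠ 0) : g = ⊤ := by
  have R : ∀ u v : Fin N → ℂ, kk u v ∈ g → star v ⬝ᵥ u ≠ 0 → ∀ X ∈ g, kk u (Xᴴ *ᵥ v) ∈ g := by
    intro u v hx hne X hX
    have h1 := hlie _ hx _ hX
    have h2 := hlie _ hx _ h1
    have h3 := g.smul_mem (1 / (2 * (star v ⬝ᵥ u)))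
      (g.add_mem (g.add_mem h2 (g.smul_mem (star v ⬝ᵥ u) h1)) (g.smul_mem (2 * (star v ⬝ᵥ (X *ᵥ u))) hx))
    have hne' : star u ⬝ᵥ v ≠ 0 := fun h => hne (ip_flip h)
    convert h3 using 1
    simp only [mul_sub, sub_mul, mul_kk, kk_mul, kk_mulVec, kk_conj, ← mul_assoc, mulVec_smul,
      kk_smul_left, kk_smul_right, ip_star, ← Matrix.mulVec_mulVec, conjTranspose_mul, conjTranspose_sub, sub_mulVec,
      kk_sub_left, kk_sub_right, ip_adj]
    match_scalars <;> field_simp <;> ring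
  have hA : ∀ y, kk u y ∈ g := by
    let A : Submodule ℂ (Fin N → ℂ) :=
      { carrier := {y | kk u y ∈ g}
        add_mem' := fun {a b} ha hb => by
          simp only [Set.mem_ofPred_eq, kk_add_right] at *; exact g.add_mem ha hb
        zero_mem' := by simp [kk]
        smul_mem' := fun c x hx => by
          simp only [Set.mem_ofPred_eq, kk_smul_right] at *; exact g.smul_mem _ hx }
    have : A = ⊥ ∨ A = ⊤ := by
      apply hirr
      intro X hX y hy
      have hX' := hstar _ hX
      have hv' := R u v hx hne _ hX'
      rw [conjTranspose_conjTranspose] at hv'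
      by_cases h0 : star y ⬝ᵥ u = 0
      · have := R u (y + v) (A.add_mem hy hx) (by simpa [star_add, h0] using hne) _ hX'
        rw [conjTranspose_conjTranspose, mulVec_add] at this
        have := A.sub_mem this hv'
        simpa using this
      · have := R u y hy h0 _ hX'
        rwa [conjTranspose_conjTranspose] at this
    rcases this with h | h
    · exfalso
      have : v ∈ A := hx
      rw [h, Submodule.mem_bot] at this
      simp [this] at hne
    · intro y
      have : y ∈ A := by rw [h]; trivial
      exact this
  have hu : star u ⬝ᵥ u ≠ 0 := by
    intro h
    rw [ip_self] at h
    simp [h] at hne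
  rw [eq_top_iff]
  intro X _
  rw [sum_kk X]
  refine g.sum_mem fun j _ => ?_
  generalize (fun i => X i j) = y
  generalize (Pi.single j 1 : Fin N → ℂ) = z
  have h1 := hstar _ (hA y)
  rw [kk_conj] at h1
  have h2 := hlie _ h1 _ (hA z)
  rw [kk_mul_kk, kk_mul_kk] at h2
  have h3 := g.smul_mem (star u ⬝ᵥ u)⁻¹ (g.add_mem h2 (g.smul_mem (star z ⬝ᵥ y) (hA u)))
  convert h3 using 1
  match_scalars <;> field_simp <;> ring

end LinAlg
end St12

set_option linter.unusedSimpArgs false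

namespace St12
open Module Matrix

section Nil
variable {N : ℕ}

/-- Irreducible self-adjoint linear Lie algebra containing a nilpotent rank one element. -/
structure NilData (g : Submodule ℂ (Matrix (Fin N) (Fin N) ℂ)) (u v : Fin N → ℂ) : Prop where
  lie : ∀ X ∈ g, ∀ Y ∈ g, X * Y - Y * X ∈ g
  adj : ∀ X ∈ g, Xᴴ ∈ g
  irr : ∀ V : Submodule ℂ (Fin N → ℂ), (∀ X ∈ g, ∀ v ∈ V, X *ᵥ v ∈ V) → V = ⊥ ∨ V = ⊤
  uu : star u ⬝ᵥ u = 1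
  vv : star v ⬝ᵥ v = 1
  uv : star u ⬝ᵥ v = 0
  mem : kk u v ∈ g

/-- Projection to the orthogonal complement of `u, v`. -/
def qq (u v z : Fin N → ℂ) : Fin N → ℂ := z - (star u ⬝ᵥ z) • u - (star v ⬝ᵥ z) • v

/-- Orthogonality to `u` and `v`. -/
def Perp (u v z : Fin N → ℂ) : Prop := star u ⬝ᵥ z = 0 ∧ star v ⬝ᵥ z = 0

/-- Degree one elements. -/
def ee (u v w w' : Fin N → ℂ) : Matrix (Fin N) (Fin N) ℂ := kk w v + kk u w'

variable {g : Submodule ℂ (Matrix (Fin N) (Fin N) ℂ)} {u v : Fin N → ℂ}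

lemma NilData.vu (D : NilData g u v) : star v ⬝ᵥ u = 0 := ip_flip D.uv

lemma NilData.perp_qq (D : NilData g u v) (z : Fin N → ℂ) : Perp u v (qq u v z) := by
  constructor <;> simp [qq, D.uu, D.vv, D.uv, D.vu]

lemma qq_of_perp {z : Fin N → ℂ} (h : Perp u v z) : qq u v z = z := by
  simp [qq, h.1, h.2]

lemma qq_add (y z : Fin N → ℂ) : qq u v (y + z) = qq u v y + qq u v z := by
  simp only [qq, dotProduct_add]; module
lemma qq_smul (c : ℂ) (z : Fin N → ℂ) : qq u v (c • z) = c • qq u v z := by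
  simp only [qq, dotProduct_smul, smul_eq_mul]; module

lemma perp_add {y z : Fin N → ℂ} (hy : Perp u v y) (hz : Perp u v z) : Perp u v (y + z) :=
  ⟨by simp [dotProduct_add, hy.1, hz.1], by simp [dotProduct_add, hy.2, hz.2]⟩
lemma perp_smul {z : Fin N → ℂ} (c : ℂ) (hz : Perp u v z) : Perp u v (c • z) :=
  ⟨by simp [hz.1], by simp [hz.2]⟩
lemma perp_neg {z : Fin N → ℂ} (hz : Perp u v z) : Perp u v (-z) :=
  ⟨by simp [hz.1], by simp [hz.2]⟩
lemma perp_zero : Perp u v 0 := ⟨by simp, by simp⟩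

lemma ee_conj (w w' : Fin N → ℂ) : (ee u v w w')ᴴ = kk v w + kk w' u := by
  simp [ee, kk_conj]

lemma NilData.J (D : NilData g u v) {w w' : Fin N → ℂ} (hw : Perp u v w) (hw' : Perp u v w')
    (h : ee u v w w' ∈ g) : ee u v w' (-w) ∈ g := by
  have h1 := D.adj _ D.mem
  have h2 := D.adj _ (D.lie _ h1 _ h)
  convert h2 using 1
  simp only [ee, kk_conj, mul_add, add_mul, kk_mul_kk, hw.1, hw.2, hw'.1, hw'.2, ip_flip hw.1,
    ip_flip hw.2, ip_flip hw'.1, ip_flip hw'.2, D.uu, D.vv, D.uv, D.vu, conjTranspose_sub,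
    conjTranspose_add, conjTranspose_smul, kk_neg_right, star_one, star_zero]
  module

lemma idem_identity {A : Type*} [Ring A] (a b X : A) (haa : a * a = a) (hbb : b * b = b)
    (hab : a * b = 0) (hba : b * a = 0) (X' h T : A) (hX' : X' = X - a * X * b - b * X * a)
    (hh : h = a - b) (hT : T = h * X' - X' * h) :
    h * T - T * h + T = 2 * (a * X * (1 - a - b) + (1 - a - b) * X * b) := by
  subst hh hX' hT
  have e1 : ∀ Y, a * (a * Y) = a * Y := fun Y => by rw [← mul_assoc, haa]
  have e2 : ∀ Y, b * (b * Y) = b * Y := fun Y => by rw [← mul_assoc, hbb]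
  have e3 : ∀ Y, a * (b * Y) = 0 := fun Y => by rw [← mul_assoc, hab, zero_mul]
  have e4 : ∀ Y, b * (a * Y) = 0 := fun Y => by rw [← mul_assoc, hba, zero_mul]
  simp only [mul_sub, sub_mul, mul_assoc, e1, e2, e3, e4, haa, hbb, hab, hba, mul_one, one_mul,
    mul_zero, two_mul]
  noncomm_ring

lemma NilData.G1 (D : NilData g u v) {X : Matrix (Fin N) (Fin N) ℂ} (hX : X ∈ g) :
    ee u v (qq u v (X *ᵥ v)) (qq u v (Xᴴ *ᵥ u)) ∈ g := by
  have h1 := D.adj _ D.mem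
  have hh := D.lie _ D.mem _ h1
  have hX' : X - kk u u * X * kk v v - kk v v * X * kk u u ∈ g := by
    refine g.sub_mem (g.sub_mem hX ?_) ?_
    · rw [mul_assoc, mul_kk, kk_mul_kk]; exact g.smul_mem _ D.mem
    · rw [mul_assoc, mul_kk, kk_mul_kk]; rw [kk_conj] at h1; exact g.smul_mem _ h1
  have hT := D.lie _ hh _ hX'
  have hU := D.lie _ hh _ hT
  have h2 := g.smul_mem (1/2 : ℂ) (g.add_mem hU hT)
  rw [idem_identity (kk u u) (kk v v) X (by simp [kk_mul_kk, D.uu]) (by simp [kk_mul_kk, D.vv])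
    (by simp [kk_mul_kk, D.uv]) (by simp [kk_mul_kk, D.vu]) _ _ _ rfl (by
      simp [kk_mul_kk, kk_conj, D.uu, D.vv]) rfl] at h2
  convert h2 using 1
  rw [two_mul, ← two_smul ℂ, smul_smul]
  norm_num
  rw [add_comm]
  simp only [ee, qq, kk_mul, mul_kk, kk_conj, sub_mul, mul_sub, one_mul, mul_one, kk_sub_left,
    kk_sub_right, kk_mulVec, kk_smul_left, kk_smul_right, sub_mulVec, ← mulVec_mulVec, ip_adj,
    ip_star]

lemma NilData.E_surj (D : NilData g u v) {w : Fin N → ℂ} (hw : Perp u v w) :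
    ∃ w', Perp u v w' ∧ ee u v w w' ∈ g := by
  let V : Submodule ℂ (Fin N → ℂ) :=
    { carrier := {y | ∃ w', Perp u v w' ∧ ee u v (qq u v y) w' ∈ g}
      add_mem' := by
        rintro a b ⟨a', ha, ha'⟩ ⟨b', hb, hb'⟩
        refine ⟨a' + b', perp_add ha hb, ?_⟩
        convert g.add_mem ha' hb' using 1
        simp only [ee, qq_add, kk_add_left, kk_add_right]; abel
      zero_mem' := ⟨0, perp_zero, by simp [ee, qq, kk_zero_left, kk_zero_right]⟩
      smul_mem' := by
        rintro c a ⟨a', ha, ha'⟩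
        refine ⟨star c • a', perp_smul _ ha, ?_⟩
        convert g.smul_mem c ha' using 1
        simp only [ee, qq_smul, kk_smul_left, kk_smul_right, star_star, smul_add] }
  have hXv : ∀ X ∈ g, X *ᵥ v ∈ V := fun X hX => ⟨_, D.perp_qq _, D.G1 hX⟩
  have hXu : ∀ X ∈ g, X *ᵥ u ∈ V := by
    intro X hX
    have := D.J (D.perp_qq _) (D.perp_qq _) (D.G1 (D.adj _ hX))
    rw [conjTranspose_conjTranspose] at this
    exact ⟨_, perp_neg (D.perp_qq _), this⟩
  have hV : V = ⊥ ∨ V = ⊤ := by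
    apply D.irr
    rintro X hX y ⟨y', hy', hy⟩
    have e : X *ᵥ y = X *ᵥ (qq u v y) + (star u ⬝ᵥ y) • (X *ᵥ u) + (star v ⬝ᵥ y) • (X *ᵥ v) := by
      rw [← mulVec_smul, ← mulVec_smul, ← mulVec_add, ← mulVec_add]
      congr 1
      simp only [qq]; abel
    rw [e]
    refine V.add_mem (V.add_mem ?_ (V.smul_mem _ (hXu X hX))) (V.smul_mem _ (hXv X hX))
    have hp := D.perp_qq y
    have hq : qq u v y ∈ V := ⟨y', hy', by rw [qq_of_perp hp]; exact hy⟩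
    have hu : u ∈ V := ⟨0, perp_zero, by simp [ee, qq, D.uu, D.vu, kk_zero_left, kk_zero_right]⟩
    have h3 := hXv _ (D.lie _ hX _ hy)
    have e2 : (X * ee u v (qq u v y) y' - ee u v (qq u v y) y' * X) *ᵥ v =
      X *ᵥ qq u v y - (star v ⬝ᵥ (X *ᵥ v)) • qq u v y - (star y' ⬝ᵥ (X *ᵥ v)) • u := by
      rw [sub_mulVec, ← mulVec_mulVec, ← mulVec_mulVec]
      simp only [ee, add_mulVec, kk_mulVec, D.vv, ip_flip hy'.2, mulVec_add, mulVec_smul]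
      module
    rw [e2] at h3
    have h4 := V.add_mem (V.add_mem h3 (V.smul_mem (star y' ⬝ᵥ (X *ᵥ v)) hu))
      (V.smul_mem (star v ⬝ᵥ (X *ᵥ v)) hq)
    convert h4 using 1
    abel
  have hV' : V = ⊤ := by
    refine hV.resolve_left fun h => ?_
    have hu : u ∈ V := ⟨0, perp_zero, by simp [ee, qq, D.uu, D.vu, kk_zero_left, kk_zero_right]⟩
    rw [h, Submodule.mem_bot] at hu
    have := D.uu
    simp [hu] at this
  have : w ∈ V := by rw [hV']; trivial
  obtain ⟨w', h1, h2⟩ := this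
  rw [qq_of_perp hw] at h2
  exact ⟨w', h1, h2⟩

lemma NilData.E_prime (D : NilData g u v) {w p : Fin N → ℂ} (hw : Perp u v w) (hp : Perp u v p)
    (hw0 : w ≠ 0) (h : kk w v ∈ g) : kk p v ∈ g := by
  obtain ⟨p', hp', he⟩ := D.E_surj hp
  have h1 := D.adj _ (D.lie _ h _ (D.adj _ he))
  have h2 := D.lie _ h1 _ h
  have hne : star w ⬝ᵥ w ≠ 0 := fun h => hw0 (ip_self.1 h)
  have h3 := g.smul_mem (star w ⬝ᵥ w)⁻¹ (g.sub_mem h2 (g.smul_mem (star w ⬝ᵥ p) h))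
  convert h3 using 1
  simp only [ee_conj, mul_add, add_mul, kk_mul_kk, hw.1, hw.2, hp.1, hp.2, hp'.1, hp'.2,
    ip_flip hw.1, ip_flip hw.2, ip_flip hp.1, ip_flip hp.2, D.uu, D.vv, D.uv, D.vu,
    conjTranspose_sub, conjTranspose_add, conjTranspose_smul, kk_conj, star_one, star_zero,
    sub_mul, mul_sub, smul_mul_assoc, mul_smul_comm, ip_star]
  match_scalars <;> field_simp <;> ring

/-- Either `g` contains `sl`, or there are no rank one elements in degree one. -/
theorem NilData.dichotomy (D : NilData g u v) :
    (∀ X : Matrix (Fin N) (Fin N) ℂ, X.trace = 0 → X ∈ g) ∨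
    ((∀ z, Perp u v z → kk z v ∈ g → z = 0) ∧ ∃ z, Perp u v z ∧ z ≠ 0) := by
  by_cases h : (∀ z, Perp u v z → kk z v ∈ g → z = 0) ∧ ∃ z, Perp u v z ∧ z ≠ 0
  · exact Or.inr h
  left
  have key : ∀ p, Perp u v p → kk p v ∈ g := by
    intro p hp
    by_cases h2 : ∃ z, Perp u v z ∧ kk z v ∈ g ∧ z ≠ 0
    · obtain ⟨z, h3, h4, h5⟩ := h2
      exact D.E_prime h3 hp h5 h4
    · have hp0 : p = 0 := by
        by_contra hne
        apply h
        refine ⟨fun z hz hz' => ?_, p, hp, hne⟩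
        by_contra h0
        exact h2 ⟨z, hz, hz', h0⟩
      rw [hp0, kk_zero_left]; exact g.zero_mem
  intro X hX
  have := sl_of D.lie D.adj D.vv (fun z hz => ?_) X
  · simpa [hX] using this
  · have e : z = qq u v z + (star u ⬝ᵥ z) • u := by simp [qq, hz]
    rw [e, kk_add_left, kk_smul_left]
    exact g.add_mem (key _ (D.perp_qq z)) (g.smul_mem _ D.mem)

lemma NilData.uz (D : NilData g u v) (hE : ∀ z, Perp u v z → kk z v ∈ g → z = 0)
    {z : Fin N → ℂ} (hz : Perp u v z) (h : kk u z ∈ g) : z = 0 := by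
  apply hE z hz
  have := D.J (w := 0) (w' := z) perp_zero hz (by simpa [ee, kk_zero_left] using h)
  simpa [ee, kk_zero_right] using this

lemma NilData.norms (D : NilData g u v) (hE : ∀ z, Perp u v z → kk z v ∈ g → z = 0)
    {w w' : Fin N → ℂ} (hw : Perp u v w) (hw' : Perp u v w') (h : ee u v w w' ∈ g) (hw0 : w ≠ 0) :
    star w' ⬝ᵥ w' = star w ⬝ᵥ w ∧ star w ⬝ᵥ w' = 0 := by
  have hJ := D.J hw hw' h
  have h1 := D.lie _ (D.lie _ h _ (D.adj _ h)) _ h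
  have h2 := g.add_mem (g.sub_mem h1 (g.smul_mem (2 * (star w ⬝ᵥ w)) h))
    (g.smul_mem (star w' ⬝ᵥ w) hJ)
  have ha : star (star w ⬝ᵥ w) = star w ⬝ᵥ w := ip_star _ _
  have hb : star (star w' ⬝ᵥ w') = star w' ⬝ᵥ w' := ip_star _ _
  have h3 : (2 : ℂ) • kk u ((star w' ⬝ᵥ w' - star w ⬝ᵥ w) • w' - (star w ⬝ᵥ w') • w) ∈ g := by
    convert h2 using 1
    simp only [ee, conjTranspose_add, kk_conj, mul_add, add_mul, kk_mul_kk, hw.1, hw.2, hw'.1, hw'.2,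
      ip_flip hw.1, ip_flip hw.2, ip_flip hw'.1, ip_flip hw'.2, D.uu, D.vv, D.uv, D.vu,
      sub_mul, mul_sub, smul_mul_assoc, mul_smul_comm, ip_star, kk_neg_right, kk_sub_right,
      kk_smul_right, star_sub, ha, hb]
    module
  have h4 := g.smul_mem (1/2 : ℂ) h3
  rw [smul_smul] at h4
  norm_num at h4
  have h5 := D.uz hE (by
    rw [sub_eq_add_neg]; exact perp_add (perp_smul _ hw') (perp_neg (perp_smul _ hw))) h4
  have hwne : star w ⬝ᵥ w ≠ 0 := fun h => hw0 (ip_self.1 h)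
  by_cases hab : star w' ⬝ᵥ w' = star w ⬝ᵥ w
  · refine ⟨hab, ?_⟩
    rw [hab] at h5
    simpa [hw0] using h5
  · exfalso
    have hne : star w' ⬝ᵥ w' - star w ⬝ᵥ w ≠ 0 := sub_ne_zero.2 hab
    obtain ⟨c, hc⟩ : ∃ c : ℂ, w' = c • w := by
      refine ⟨(star w' ⬝ᵥ w' - star w ⬝ᵥ w)⁻¹ * (star w ⬝ᵥ w'), ?_⟩
      rw [sub_eq_zero] at h5
      rw [mul_smul, ← h5, smul_smul, inv_mul_cancel₀ hne, one_smul]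
    have h6 := g.sub_mem hJ (g.smul_mem c h)
    have h7 : kk u (-w - star c • w') ∈ g := by
      convert h6 using 1
      simp only [ee, kk_sub_right, kk_smul_right, kk_neg_right, star_star, hc, kk_smul_left]
      module
    have h8 := D.uz hE (by
      rw [sub_eq_add_neg]; exact perp_add (perp_neg hw) (perp_neg (perp_smul _ hw'))) h7
    rw [hc, smul_smul] at h8
    have h9 : ((1:ℂ) + star c * c) • w = 0 := by
      rw [← neg_eq_zero, ← h8]; module
    rw [smul_eq_zero] at h9
    rcases h9 with h9 | h9
    · have : ((1 + ‖c‖^2 : ℝ) : ℂ) = 0 := by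
        rw [← h9]; push_cast
        rw [← Complex.conj_mul']; rfl
      have h10 := Complex.ofReal_eq_zero.1 this
      nlinarith [sq_nonneg ‖c‖]
    · exact hw0 h9

end Nil
end St12

set_option linter.unusedSimpArgs false

namespace St12
open Module Matrix

section Nil2
variable {N : ℕ} {g : Submodule ℂ (Matrix (Fin N) (Fin N) ℂ)} {u v : Fin N → ℂ}

lemma NilData.not_five (D : NilData g u v) (hE : ∀ z, Perp u v z → kk z v ∈ g → z = 0)
    (hg : N ^ 2 - 2 * N + 2 ≤ finrank ℂ g) (hN : 5 ≤ N)
    {p p' : Fin N → ℂ} (hp : Perp u v p) (hp' : Perp u v p') (hpp : ee u v p p' ∈ g)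
    (hp0 : p ≠ 0) : False := by
  let L : (ℂ × (Fin N → ℂ) × (Fin N → ℂ) × (Fin N → ℂ)) →ₗ[ℂ]
      ((Matrix (Fin N) (Fin N) ℂ) ⧸ g) × (Fin 7 → ℂ) :=
    IsLinearMap.mk' (fun x => (g.mkQ (x.1 • kk u u + kk x.2.1 v + vecMulVec v x.2.2.1 +
      vecMulVec p x.2.2.2), ![star u ⬝ᵥ x.2.1, star v ⬝ᵥ x.2.1, x.2.2.1 ⬝ᵥ u, x.2.2.1 ⬝ᵥ v,
        x.2.2.2 ⬝ᵥ u, x.2.2.2 ⬝ᵥ v, x.2.2.2 ⬝ᵥ p'])) (by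
      constructor
      · intro x y
        ext1
        · simp only [Prod.fst_add, Prod.snd_add, ← map_add]
          congr 1
          simp only [kk_add_left, vecMulVec_add, add_smul]
          abel
        · ext i; fin_cases i <;> simp [dotProduct_add, add_dotProduct]
      · intro c x
        ext1
        · simp only [Prod.smul_fst, Prod.smul_snd, ← map_smul]
          congr 1
          simp only [kk_smul_left, vecMulVec_smul, smul_add, smul_smul, smul_eq_mul]
        · ext i; fin_cases i <;> simp [dotProduct_smul, smul_dotProduct])
  have hc : finrank ℂ (Matrix (Fin N) (Fin N) ℂ ⧸ g) + finrank ℂ g = N ^ 2 := by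
    rw [Submodule.finrank_quotient_add_finrank, Module.finrank_matrix]
    simp [sq]
  have hker : LinearMap.ker L ≠ ⊥ := by
    apply LinearMap.ker_ne_bot_of_finrank_lt
    simp only [Module.finrank_prod, Module.finrank_self, Module.finrank_fin_fun]
    have : 2 * N ≤ N^2 := by nlinarith
    omega
  obtain ⟨⟨a, w, ζ, θ⟩, hx, hx0⟩ := Submodule.exists_mem_ne_zero_of_ne_bot hker
  obtain ⟨z, rfl⟩ : ∃ z, ζ = star z := ⟨star ζ, by simp⟩
  obtain ⟨t, rfl⟩ : ∃ z, θ = star z := ⟨star θ, by simp⟩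
  rw [LinearMap.mem_ker] at hx
  have hX : a • kk u u + kk w v + kk v z + kk p t ∈ g := by
    have := congrArg Prod.fst hx
    exact (Submodule.Quotient.mk_eq_zero g).1 this
  have hcoord : ∀ i : Fin 7, _ = (0 : ℂ) := fun i => congrFun (congrArg Prod.snd hx) i
  have hw : Perp u v w := ⟨hcoord 0, hcoord 1⟩
  have hz : Perp u v z := ⟨ip_flip (hcoord 2), ip_flip (hcoord 3)⟩
  have ht : Perp u v t := ⟨ip_flip (hcoord 4), ip_flip (hcoord 5)⟩
  have htp : star t ⬝ᵥ p' = 0 := hcoord 6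
  have hw0 : w = 0 := by
    apply hE w hw
    have := D.G1 hX
    have e1 : qq u v ((a • kk u u + kk w v + kk v z + kk p t) *ᵥ v) = w := by
      simp [add_mulVec, kk_mulVec, smul_mulVec, D.uv, D.vv, ip_flip hz.2, ip_flip ht.2, qq_of_perp hw]
    have e2 : qq u v ((a • kk u u + kk w v + kk v z + kk p t)ᴴ *ᵥ u) = 0 := by
      simp [add_mulVec, kk_mulVec, smul_mulVec, kk_conj, D.uu, D.vu, ip_flip hw.1, ip_flip hp.1,
        qq]
    rw [e1, e2] at this
    simpa [ee, kk_zero_right] using this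
  subst hw0
  have hz0 : z = 0 := by
    apply hE z hz
    have := D.G1 (D.adj _ hX)
    rw [conjTranspose_conjTranspose] at this
    have e1 : qq u v ((a • kk u u + kk 0 v + kk v z + kk p t)ᴴ *ᵥ v) = z := by
      simp [add_mulVec, kk_mulVec, smul_mulVec, kk_conj, D.uv, D.vv, ip_flip hp.2, qq_of_perp hz]
    have e2 : qq u v ((a • kk u u + kk 0 v + kk v z + kk p t) *ᵥ u) = 0 := by
      simp [add_mulVec, kk_mulVec, smul_mulVec, D.uu, D.vu, ip_flip hz.1, ip_flip ht.1, qq]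
    rw [e1, e2] at this
    simpa [ee, kk_zero_right] using this
  subst hz0
  simp only [kk_zero_left, kk_zero_right, add_zero] at hX
  have key : ∀ q', Perp u v q' → ∃ c : ℂ,
      star a • q' - (star p ⬝ᵥ q') • t - c • p' = 0 := by
    intro q' hq'
    obtain ⟨r, hr, hr'⟩ := D.E_surj hq'
    have h1 := g.smul_mem (-1 : ℂ) (D.J hq' hr hr')
    have h2 : ee u v (-r) q' ∈ g := by
      convert h1 using 1
      simp only [ee, kk_neg_left, kk_neg_right]; module
    have h3 := g.sub_mem (D.lie _ hX _ h2) (g.smul_mem (star t ⬝ᵥ (-r)) hpp)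
    refine ⟨star (star t ⬝ᵥ (-r)), D.uz hE ?_ ?_⟩
    · simp only [sub_eq_add_neg]
      exact perp_add (perp_add (perp_smul _ hq') (perp_neg (perp_smul _ ht)))
        (perp_neg (perp_smul _ hp'))
    · convert h3 using 1
      have hr1 := perp_neg hr
      generalize -r = s at hr1
      simp only [ee, mul_add, add_mul, kk_mul_kk, smul_mul_assoc, mul_smul_comm, D.uu, D.vv, D.uv,
        D.vu, hr1.1, hr1.2, ip_flip hq'.1, ip_flip ht.1, hp.2, ip_star, kk_sub_right,
        kk_smul_right, star_star]
      module
  have ha : a = 0 := by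
    let M : (Fin N → ℂ) →ₗ[ℂ] (Fin 4 → ℂ) := Matrix.mulVecLin (Matrix.of ![star u, star v, star t, star p'])
    have hM : LinearMap.ker M ≠ ⊥ := by
      apply LinearMap.ker_ne_bot_of_finrank_lt
      simp only [Module.finrank_fin_fun]; omega
    obtain ⟨y, hy, hy0⟩ := Submodule.exists_mem_ne_zero_of_ne_bot hM
    have hy' : ∀ i : Fin 4, _ = (0:ℂ) := fun i => congrFun (LinearMap.mem_ker.1 hy) i
    obtain ⟨c, hc⟩ := key y ⟨hy' 0, hy' 1⟩
    have h1 : star y ⬝ᵥ t = 0 := ip_flip (hy' 2)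
    have h2 : star y ⬝ᵥ p' = 0 := ip_flip (hy' 3)
    have h3 := congrArg (star y ⬝ᵥ ·) hc
    simp only [dotProduct_sub, dotProduct_smul, h1, h2, dotProduct_zero, smul_zero, sub_zero,
      smul_eq_mul, mul_zero, mul_eq_zero, ip_self, hy0, or_false, star_eq_zero] at h3
    exact h3
  subst ha
  have ht0 : t = 0 := by
    obtain ⟨c, hc⟩ := key p hp
    have h3 := congrArg (star t ⬝ᵥ ·) hc
    simp only [dotProduct_sub, dotProduct_smul, htp, dotProduct_zero, smul_zero, sub_zero,
      star_zero, zero_smul, zero_sub, neg_eq_zero, dotProduct_neg, mul_zero,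
      smul_eq_mul, mul_eq_zero, ip_self, hp0, false_or] at h3
    exact h3
  subst ht0
  exact hx0 (by simp)

end Nil2

section Four

/-- Infinitesimal condition for the symplectic Lie algebra. -/
def IsSp (N : ℕ) (X : Matrix (Fin N) (Fin N) ℂ) : Prop := Xᵀ * symplJ N + symplJ N * X = 0

variable {g : Submodule ℂ (Matrix (Fin 4) (Fin 4) ℂ)} {u v : Fin 4 → ℂ}

lemma NilData.four (D : NilData g u v) (hE : ∀ z, Perp u v z → kk z v ∈ g → z = 0)
    {w w' : Fin 4 → ℂ} (hw : Perp u v w) (hw' : Perp u v w') (h : ee u v w w' ∈ g)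
    (ww : star w ⬝ᵥ w = 1) (ww2 : star w' ⬝ᵥ w' = 1) (ww' : star w ⬝ᵥ w' = 0) :
    ∃ U ∈ unitaryGroup (Fin 4) ℂ, (∀ X, IsSp 4 X → star U * X * U ∈ g) ∧
      ∀ X ∈ g, ∃ c : ℂ, IsSp 4 (U * X * star U - c • 1) := by
  let b : Fin 4 → Fin 4 → ℂ := ![u, w, v, w']
  have hb : ∀ i j, star (b i) ⬝ᵥ b j = if i = j then 1 else 0 := by
    intro i j
    fin_cases i <;> fin_cases j <;> simp [b, D.uu, D.vv, D.uv, D.vu, ww, ww2, ww', ip_flip ww', hw.1,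
      hw.2, hw'.1, hw'.2, ip_flip hw.1, ip_flip hw.2, ip_flip hw'.1, ip_flip hw'.2]
  let U : Matrix (Fin 4) (Fin 4) ℂ := Matrix.of fun i => star (b i)
  have hU1 : U * star U = 1 := by
    ext i j
    rw [Matrix.mul_apply, Matrix.one_apply, ← hb i j]
    simp [U, dotProduct, star_eq_conjTranspose]
  have hU2 : star U * U = 1 := mul_eq_one_comm.1 hU1
  have hentry : ∀ X i j, (U * X * star U) i j = star (b i) ⬝ᵥ (X *ᵥ b j) := by
    intro X i j
    rw [mul_assoc, Matrix.mul_apply]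
    simp only [dotProduct, U, Matrix.of_apply, Pi.star_apply, mulVec, Matrix.mul_apply,
      star_eq_conjTranspose, conjTranspose_apply, star_star]
  have hback : ∀ X, star U * X * U = ∑ i, ∑ j, X i j • kk (b i) (b j) := by
    intro X
    ext k l
    simp only [Matrix.mul_apply, Matrix.sum_apply, Matrix.smul_apply, kk, vecMulVec_apply, U,
      star_eq_conjTranspose, conjTranspose_apply, Matrix.of_apply, Pi.star_apply, star_star,
      smul_eq_mul, Finset.sum_mul]
    rw [Finset.sum_comm]
    refine Finset.sum_congr rfl fun i _ => Finset.sum_congr rfl fun j _ => ?_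
    ring
  have hres : kk u u + kk w w + kk v v + kk w' w' = 1 := by
    have := hback 1
    rw [mul_one, hU2] at this
    rw [this]
    simp [Fin.sum_univ_four, b, Matrix.one_apply]
  have hJ := D.J hw hw' h
  refine ⟨U, mem_unitaryGroup_iff.2 hU1, ?_, ?_⟩
  · intro X hX
    have e := fun i j => congrFun (congrFun hX i) j
    have m1 := D.mem
    have m2 := D.adj _ m1
    have m3 := D.adj _ h
    have m4 := D.adj _ hJ
    have m5 := D.lie _ m1 _ m2
    have m6 := D.lie _ h _ m3
    have m7 := D.lie _ h _ m4
    have m8 := D.adj _ m7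
    simp only [ee, conjTranspose_add, conjTranspose_sub, conjTranspose_smul, kk_conj, mul_add, add_mul, kk_mul_kk, kk_neg_right,
      kk_neg_left, conjTranspose_neg, mul_neg, neg_mul,
      D.uu, D.vv, D.uv, D.vu, ww, ww2, ww', ip_flip ww', hw.1, star_one, star_zero,
      hw.2, hw'.1, hw'.2, ip_flip hw.1, ip_flip hw.2, ip_flip hw'.1, ip_flip hw'.2, one_smul,
      zero_smul, add_zero, zero_add, neg_zero, sub_neg_eq_add] at m1 m2 m3 m4 m5 m6 m7 m8 h hJ
    rw [hback]
    simp only [Fin.sum_univ_four]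
    have e1 : X 0 3 = X 1 2 := by
      have := e 3 2
      simp [Matrix.mul_apply, Fin.sum_univ_four, symplJ] at this
      linear_combination this
    have e2 : X 0 1 = - X 3 2 := by
      have := e 1 2
      simp [Matrix.mul_apply, Fin.sum_univ_four, symplJ] at this
      linear_combination this
    have e3 : X 3 0 = X 2 1 := by
      have := e 0 1
      simp [Matrix.mul_apply, Fin.sum_univ_four, symplJ] at this
      linear_combination -this
    have e4 : X 1 0 = - X 2 3 := by
      have := e 0 3
      simp [Matrix.mul_apply, Fin.sum_univ_four, symplJ] at this
      linear_combination this
    have e5 : X 2 2 = - X 0 0 := by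
      have := e 0 2
      simp [Matrix.mul_apply, Fin.sum_univ_four, symplJ] at this
      linear_combination this
    have e6 : X 3 3 = - X 1 1 := by
      have := e 1 3
      simp [Matrix.mul_apply, Fin.sum_univ_four, symplJ] at this
      linear_combination this
    have := g.add_mem (g.add_mem (g.add_mem (g.add_mem (g.add_mem (g.add_mem (g.add_mem (g.add_mem
      (g.add_mem
      (g.smul_mem (X 0 2) m1) (g.smul_mem (X 2 0) m2)) (g.smul_mem (X 0 3) h))
      (g.smul_mem (X 3 2) hJ)) (g.smul_mem (X 3 0) m3)) (g.smul_mem (X 2 3) m4))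
      (g.smul_mem (X 0 0 - X 1 1) m5)) (g.smul_mem (X 1 1) m6)) (g.smul_mem (X 1 3 / 2) m7))
      (g.smul_mem (X 3 1 / 2) m8)
    convert this using 1
    simp only [b, Matrix.cons_val]
    match_scalars
    all_goals grind
  · intro X hX
    have rel : ∀ X ∈ g, star u ⬝ᵥ (X *ᵥ w') = star w ⬝ᵥ (X *ᵥ v) ∧
        star u ⬝ᵥ (X *ᵥ w) = - (star w' ⬝ᵥ (X *ᵥ v)) := by
      intro X hX
      have h1 := D.G1 hX
      have hq : qq u v (X *ᵥ v) = (star w ⬝ᵥ (X *ᵥ v)) • w + (star w' ⬝ᵥ (X *ᵥ v)) • w' := by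
        have := congrArg (fun M => M *ᵥ (X *ᵥ v)) hres
        simp only [add_mulVec, kk_mulVec, one_mulVec] at this
        rw [qq]
        conv_lhs => enter [1, 1]; rw [← this]
        abel
      have h2 := g.sub_mem (g.sub_mem h1 (g.smul_mem (star w ⬝ᵥ (X *ᵥ v)) h))
        (g.smul_mem (star w' ⬝ᵥ (X *ᵥ v)) hJ)
      have h3 : kk u (qq u v (Xᴴ *ᵥ u) - star (star w ⬝ᵥ (X *ᵥ v)) • w' +
          star (star w' ⬝ᵥ (X *ᵥ v)) • w) ∈ g := by
        convert h2 using 1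
        rw [hq]
        simp only [ee, kk_add_left, kk_smul_left, kk_add_right, kk_sub_right, kk_smul_right,
          star_star, kk_neg_right]
        module
      have h4 := D.uz hE (by
        rw [sub_eq_add_neg]
        exact perp_add (perp_add (D.perp_qq _) (perp_neg (perp_smul _ hw'))) (perp_smul _ hw)) h3
      have h5 := congrArg (fun y => star (star w ⬝ᵥ y)) h4
      have h6 := congrArg (fun y => star (star w' ⬝ᵥ y)) h4
      simp only [qq, dotProduct_add, dotProduct_sub, dotProduct_smul, ww, ww2, ww', ip_flip ww',
        ip_flip hw.1, ip_flip hw.2, ip_flip hw'.1, ip_flip hw'.2, smul_eq_mul, mul_zero, mul_one,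
        sub_zero, add_zero, dotProduct_zero, star_zero, star_add, star_sub, star_star,
        ip_star, ip_adj] at h5 h6
      exact ⟨by linear_combination h6, by linear_combination h5⟩
    obtain ⟨r1, r2⟩ := rel X hX
    obtain ⟨r3, r4⟩ := rel _ (D.adj X hX)
    obtain ⟨r5, -⟩ := rel _ (D.lie _ hX _ h)
    have r3' := congrArg star r3
    have r4' := congrArg star r4
    simp only [ip_star, ip_adj, star_neg] at r3' r4'
    simp only [ee, sub_mulVec, mul_add, add_mul, mul_kk, add_mulVec, kk_mulVec, ← mulVec_mulVec,
      D.uu, D.vv, D.uv, D.vu, ww, ww2, ww', ip_flip ww', hw.1,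
      hw.2, hw'.1, hw'.2, ip_flip hw.1, ip_flip hw.2, ip_flip hw'.1, ip_flip hw'.2, one_smul,
      zero_smul, add_zero, zero_add, dotProduct_add, dotProduct_sub, dotProduct_smul, smul_eq_mul,
      mul_one, mul_zero] at r5
    refine ⟨(star u ⬝ᵥ (X *ᵥ u) + star v ⬝ᵥ (X *ᵥ v)) / 2, ?_⟩
    have hY := hentry X
    set Y := U * X * star U
    have f1 : Y 0 3 = Y 1 2 := by rw [hY, hY]; exact r1
    have f2 : Y 0 1 = - Y 3 2 := by rw [hY, hY]; exact r2
    have f3 : Y 3 0 = Y 2 1 := by rw [hY, hY]; exact r3'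
    have f4 : Y 1 0 = - Y 2 3 := by rw [hY, hY]; exact r4'
    have f5 : Y 0 0 + Y 2 2 = Y 1 1 + Y 3 3 := by
      rw [hY, hY, hY, hY]
      show star u ⬝ᵥ (X *ᵥ u) + star v ⬝ᵥ (X *ᵥ v) =
        star w ⬝ᵥ (X *ᵥ w) + star w' ⬝ᵥ (X *ᵥ w')
      linear_combination r5
    have f6 : star u ⬝ᵥ (X *ᵥ u) = Y 0 0 := (hY 0 0).symm
    have f7 : star v ⬝ᵥ (X *ᵥ v) = Y 2 2 := (hY 2 2).symm
    rw [f6, f7]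
    clear_value Y
    ext i j
    fin_cases i <;> fin_cases j <;>
      simp [Matrix.mul_apply, Fin.sum_univ_four, symplJ, Matrix.one_apply]
    all_goals grind

end Four
end St12

set_option linter.unusedSimpArgs false

namespace St12
open Module Matrix

section Irr
variable {N : ℕ}

lemma exists_unit {a : Fin N → ℂ} (ha : a ≠ 0) :
    ∃ c : ℂ, c ≠ 0 ∧ star c = c ∧ c * c * (star a ⬝ᵥ a) = 1 := by
  have h1 : star a ⬝ᵥ a = ((∑ i, Complex.normSq (a i) : ℝ) : ℂ) := by
    simp only [dotProduct, Pi.star_apply, Complex.ofReal_sum, Complex.normSq_eq_conj_mul_self]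
    rfl
  set r : ℝ := ∑ i, Complex.normSq (a i) with hr
  have hr0 : r ≠ 0 := by
    intro h
    apply ha
    rw [← ip_self, h1, h]; simp
  have hrp : 0 < r := lt_of_le_of_ne (Finset.sum_nonneg fun i _ => Complex.normSq_nonneg _) hr0.symm
  refine ⟨((Real.sqrt r)⁻¹ : ℝ), ?_, ?_, ?_⟩
  · have := (Real.sqrt_pos.2 hrp).ne'
    simpa using this
  · simp
  · rw [h1, ← Complex.ofReal_mul, ← Complex.ofReal_mul, ← mul_inv, Real.mul_self_sqrt hrp.le,
      inv_mul_cancel₀ hr0]; simp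

lemma four_le {u v w w' : Fin N → ℂ} (uu : star u ⬝ᵥ u = 1) (vv : star v ⬝ᵥ v = 1)
    (uv : star u ⬝ᵥ v = 0) (hw : Perp u v w) (hw' : Perp u v w')
    (ww : star w ⬝ᵥ w = 1) (ww2 : star w' ⬝ᵥ w' = 1) (ww' : star w ⬝ᵥ w' = 0) : 4 ≤ N := by
  let b : Fin 4 → Fin N → ℂ := ![u, w, v, w']
  have hb : ∀ i j, star (b i) ⬝ᵥ b j = if i = j then 1 else 0 := by
    intro i j
    fin_cases i <;> fin_cases j <;> simp [b, uu, vv, uv, ip_flip uv, ww, ww2, ww', ip_flip ww', hw.1,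
      hw.2, hw'.1, hw'.2, ip_flip hw.1, ip_flip hw.2, ip_flip hw'.1, ip_flip hw'.2]
  let U : Matrix (Fin 4) (Fin N) ℂ := Matrix.of fun i => star (b i)
  have hU1 : U * Uᴴ = 1 := by
    ext i j
    rw [Matrix.mul_apply, Matrix.one_apply, ← hb i j]
    simp [U, dotProduct, star_eq_conjTranspose]
  have h1 := Matrix.rank_mul_le_left U Uᴴ
  rw [hU1, Matrix.rank_one] at h1
  have h2 := Matrix.rank_le_width U
  simp at h1
  omega

/-- The classification of irreducible star-closed complex Lie algebras of small codimension. -/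
theorem irr_classification (hN : 2 ≤ N) (g : Submodule ℂ (Matrix (Fin N) (Fin N) ℂ))
    (hlie : ∀ X ∈ g, ∀ Y ∈ g, X * Y - Y * X ∈ g) (hstar : ∀ X ∈ g, Xᴴ ∈ g)
    (hirr : ∀ V : Submodule ℂ (Fin N → ℂ), (∀ X ∈ g, ∀ v ∈ V, X *ᵥ v ∈ V) → V = ⊥ ∨ V = ⊤)
    (hg : N ^ 2 - 2 * N + 2 ≤ finrank ℂ g) :
    (∀ X : Matrix (Fin N) (Fin N) ℂ, X.trace = 0 → X ∈ g) ∨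
    (N = 4 ∧ ∃ U ∈ unitaryGroup (Fin N) ℂ, (∀ X, IsSp N X → star U * X * U ∈ g) ∧
      ∀ X ∈ g, ∃ c : ℂ, IsSp N (U * X * star U - c • 1)) := by
  obtain ⟨a, b, ha, hb, hab⟩ := exists_rank_one (by omega) g hg
  have hk : kk a (star b) ∈ g := by simpa [kk] using hab
  have hb' : star b ≠ 0 := by simpa using hb
  by_cases hne : star (star b) ⬝ᵥ a = 0
  swap
  · left; intro X _
    rw [top_of_nonnil hlie hstar hirr hk hne]; trivial
  generalize star b = d at hk hb' hne
  obtain ⟨c1, h10, h1s, h1⟩ := exists_unit ha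
  obtain ⟨c2, h20, h2s, h2⟩ := exists_unit hb'
  have D : NilData g (c1 • a) (c2 • d) :=
    { lie := hlie, adj := hstar, irr := hirr
      uu := by rw [star_smul, smul_dotProduct, dotProduct_smul, h1s, smul_eq_mul, smul_eq_mul, ← mul_assoc, h1]
      vv := by rw [star_smul, smul_dotProduct, dotProduct_smul, h2s, smul_eq_mul, smul_eq_mul, ← mul_assoc, h2]
      uv := by rw [star_smul, smul_dotProduct, dotProduct_smul, ip_flip hne]; simp
      mem := by
        rw [kk_smul_left, kk_smul_right]
        exact g.smul_mem _ (g.smul_mem _ hk) }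
  generalize c1 • a = u at D
  generalize c2 • d = v at D
  rcases D.dichotomy with h | ⟨hE, z, hz, hz0⟩
  · exact Or.inl h
  right
  obtain ⟨z', hz', hzz⟩ := D.E_surj hz
  obtain ⟨n1, n2⟩ := D.norms hE hz hz' hzz hz0
  obtain ⟨c, hc0, hcs, hc⟩ := exists_unit hz0
  have hw := perp_smul c hz
  have hw' := perp_smul c hz'
  have hm : ee u v (c • z) (c • z') ∈ g := by
    convert g.smul_mem c hzz using 1
    simp [ee, kk_smul_left, kk_smul_right, hcs]
  have ww : star (c • z) ⬝ᵥ (c • z) = 1 := by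
    rw [star_smul, smul_dotProduct, dotProduct_smul, hcs, smul_eq_mul, smul_eq_mul, ← mul_assoc, hc]
  have ww2 : star (c • z') ⬝ᵥ (c • z') = 1 := by
    rw [star_smul, smul_dotProduct, dotProduct_smul, hcs, smul_eq_mul, smul_eq_mul, ← mul_assoc, n1, hc]
  have ww' : star (c • z) ⬝ᵥ (c • z') = 0 := by
    rw [star_smul, smul_dotProduct, dotProduct_smul, n2]; simp
  have h4 := four_le D.uu D.vv D.uv hw hw' ww ww2 ww'
  have hw0 : c • z ≠ 0 := smul_ne_zero hc0 hz0
  have h5 : ¬ 5 ≤ N := fun h => D.not_five hE hg h hw hw' hm hw0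
  obtain rfl : N = 4 := by omega
  exact ⟨rfl, D.four hE hw hw' hm ww ww2 ww'⟩

end Irr
end St12

set_option linter.unusedSimpArgs false

namespace St12
open Module Matrix

section Red
variable {N : ℕ}

lemma exists_proj (V : Submodule ℂ (Fin N → ℂ)) : ∃ P : Matrix (Fin N) (Fin N) ℂ,
    Pᴴ = P ∧ P * P = P ∧ (∀ y, P *ᵥ y ∈ V) ∧ ∀ y ∈ V, P *ᵥ y = y := by
  let W : Submodule ℂ (EuclideanSpace ℂ (Fin N)) :=
    V.comap (WithLp.linearEquiv 2 ℂ (Fin N → ℂ)).toLinearMap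
  let P : Matrix (Fin N) (Fin N) ℂ := (toEuclideanCLM (n := Fin N) (𝕜 := ℂ)).symm W.starProjection
  have hP : toEuclideanCLM (n := Fin N) (𝕜 := ℂ) P = W.starProjection := by simp [P]
  have hs := isStarProjection_starProjection (U := W)
  have hy : ∀ y, P *ᵥ y = WithLp.ofLp (W.starProjection (WithLp.toLp 2 y)) := by
    intro y
    rw [← hP]; rfl
  refine ⟨P, ?_, ?_, ?_, ?_⟩
  · have := hs.isSelfAdjoint
    rw [IsSelfAdjoint, ← hP, ← map_star] at this
    exact (toEuclideanCLM (n := Fin N) (𝕜 := ℂ)).injective this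
  · have := hs.isIdempotentElem
    rw [IsIdempotentElem, ← hP, ← map_mul] at this
    exact (toEuclideanCLM (n := Fin N) (𝕜 := ℂ)).injective this
  · intro y
    rw [hy]
    exact W.starProjection_apply_mem _
  · intro y hyV
    rw [hy, Submodule.starProjection_eq_self_iff.2]
    exact hyV

theorem red_classification (hN : 2 ≤ N) (g : Submodule ℂ (Matrix (Fin N) (Fin N) ℂ))
    (hstar : ∀ X ∈ g, Xᴴ ∈ g) (V : Submodule ℂ (Fin N → ℂ))
    (hV : ∀ X ∈ g, ∀ v ∈ V, X *ᵥ v ∈ V) (hV0 : V ≠ ⊥) (hV1 : V ≠ ⊤)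
    (hg : N ^ 2 - 2 * N + 2 ≤ finrank ℂ g) :
    ∃ U ∈ unitaryGroup (Fin N) ℂ, ∀ X, X ∈ g ↔ ∀ i j : Fin N,
      ¬(((i : ℕ) = N - 1) ↔ ((j : ℕ) = N - 1)) → (U * X * star U) i j = 0 := by
  classical
  obtain ⟨P, hP1, hP2, hP3, hP4⟩ := exists_proj V
  have hc : ∀ X ∈ g, P * X = X * P := by
    have h1 : ∀ X ∈ g, P * X * P = X * P := by
      intro X hX
      apply Matrix.toLin'.injective
      apply LinearMap.ext
      intro y
      simp only [toLin'_apply, ← mulVec_mulVec]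
      exact hP4 _ (hV X hX _ (hP3 y))
    intro X hX
    rw [← h1 X hX]
    have := congrArg conjTranspose (h1 _ (hstar X hX))
    simp only [conjTranspose_mul, conjTranspose_conjTranspose, hP1] at this
    rw [mul_assoc, this]
  have hH : P.IsHermitian := hP1
  let Q := hH.eigenvectorUnitary
  have hQ1 : (Q : Matrix (Fin N) (Fin N) ℂ) * star (Q : Matrix (Fin N) (Fin N) ℂ) = 1 := Unitary.mul_star_self_of_mem Q.2
  have hQ2 : star (Q : Matrix (Fin N) (Fin N) ℂ) * (Q : Matrix (Fin N) (Fin N) ℂ) = 1 := Unitary.star_mul_self_of_mem Q.2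
  let d : Fin N → ℂ := RCLike.ofReal ∘ hH.eigenvalues
  have hd : star (Q : Matrix (Fin N) (Fin N) ℂ) * P * Q = diagonal d := by
    have := hH.conjStarAlgAut_star_eigenvectorUnitary
    rw [Unitary.conjStarAlgAut_star_apply] at this
    exact this
  have hPd : P = Q * diagonal d * star (Q : Matrix (Fin N) (Fin N) ℂ) := by
    rw [← hd]
    simp only [mul_assoc, hQ1, mul_one]
    rw [← mul_assoc, hQ1, one_mul]
  have hdd : ∀ i, d i = 0 ∨ d i = 1 := by
    intro i
    have : diagonal d * diagonal d = diagonal d := by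
      rw [← hd]
      calc _ = star (Q : Matrix (Fin N) (Fin N) ℂ) * P * (Q * star (Q : Matrix (Fin N) (Fin N) ℂ)) * P * Q := by
            simp only [mul_assoc]
        _ = _ := by rw [hQ1, mul_one, mul_assoc _ P P, hP2]
    rw [diagonal_mul_diagonal] at this
    have h2 := congrFun (diagonal_injective this) i
    have h3 : d i * (d i - 1) = 0 := by linear_combination h2
    rcases mul_eq_zero.1 h3 with h | h
    · exact Or.inl h
    · exact Or.inr (by linear_combination h)
  let T : Finset (Fin N) := Finset.univ.filter fun i => d i = 1
  have hT0 : T.card ≠ 0 := by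
    intro h
    apply hV0
    rw [Finset.card_eq_zero] at h
    have : d = 0 := by
      ext i
      rcases hdd i with h' | h'
      · exact h'
      · have : i ∈ T := by simp [T, h']
        simp [h] at this
    rw [eq_bot_iff]
    intro y hy
    rw [← hP4 y hy, hPd, this]; simp
  have hT1 : T.card ≠ N := by
    intro h
    apply hV1
    have hT : T = Finset.univ := by
      rw [← Finset.card_eq_iff_eq_univ, h]; simp
    have : d = 1 := by
      ext i
      have : i ∈ T := by simp [hT]
      simpa [T] using this
    rw [eq_top_iff]
    intro y _
    have h1 := hP3 y
    rw [hPd, this] at h1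
    simpa [hQ1] using h1
  have hTN : T.card ≤ N := by simpa using Finset.card_le_univ T
  let S : Finset (Fin N × Fin N) := (T ×ˢ Tᶜ) ∪ (Tᶜ ×ˢ T)
  have hS : S.card = 2 * (T.card * (N - T.card)) := by
    rw [Finset.card_union_of_disjoint, Finset.card_product, Finset.card_product, Finset.card_compl]
    · simp; ring
    · rw [Finset.disjoint_left]
      rintro ⟨a, b⟩ h1 h2
      simp at h1 h2
      exact h2.1 h1.1
  let L : Matrix (Fin N) (Fin N) ℂ →ₗ[ℂ] (S → ℂ) :=
    IsLinearMap.mk' (fun X p => (star (Q : Matrix (Fin N) (Fin N) ℂ) * X * Q) p.1.1 p.1.2) (by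
      constructor
      · intro X Y; ext p; simp [mul_add, add_mul]
      · intro c X; ext p; simp)
  have hLs : Function.Surjective L := by
    intro f
    refine ⟨Q * (Matrix.of fun i j => if h : (i, j) ∈ S then f ⟨(i, j), h⟩ else 0) *
      star (Q : Matrix (Fin N) (Fin N) ℂ), ?_⟩
    ext p
    have : ∀ M : Matrix (Fin N) (Fin N) ℂ,
        star (Q : Matrix (Fin N) (Fin N) ℂ) * (Q * M * star (Q : Matrix (Fin N) (Fin N) ℂ)) * Q = M := by
      intro M
      calc _ = (star (Q : Matrix (Fin N) (Fin N) ℂ) * Q) * M * (star (Q : Matrix (Fin N) (Fin N) ℂ) * Q) := by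
            simp only [mul_assoc]
        _ = M := by rw [hQ2, one_mul, mul_one]
    change (star (Q : Matrix (Fin N) (Fin N) ℂ) * (_ : Matrix (Fin N) (Fin N) ℂ) * (Q : Matrix (Fin N) (Fin N) ℂ) : Matrix (Fin N) (Fin N) ℂ) p.1.1 p.1.2 = _
    rw [this]
    simp
  have hgL : g ≤ LinearMap.ker L := by
    intro X hX
    rw [LinearMap.mem_ker]
    ext ⟨⟨i, j⟩, hp⟩
    change (star (Q : Matrix (Fin N) (Fin N) ℂ) * X * Q) i j = 0
    have h1 : diagonal d * (star (Q : Matrix (Fin N) (Fin N) ℂ) * X * Q) =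
        (star (Q : Matrix (Fin N) (Fin N) ℂ) * X * Q) * diagonal d := by
      rw [← hd]
      calc _ = star (Q : Matrix (Fin N) (Fin N) ℂ) * P * (Q * star (Q : Matrix (Fin N) (Fin N) ℂ)) * X * Q := by
            simp only [mul_assoc]
        _ = star (Q : Matrix (Fin N) (Fin N) ℂ) * X * (Q * star (Q : Matrix (Fin N) (Fin N) ℂ)) * P * Q := by
            rw [hQ1, mul_one, mul_one, mul_assoc _ P, hc X hX]; simp only [mul_assoc]
        _ = _ := by simp only [mul_assoc]
    have h2 := congrFun (congrFun h1 i) j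
    rw [diagonal_mul, mul_diagonal] at h2
    have h3 : (d i - d j) * (star (Q : Matrix (Fin N) (Fin N) ℂ) * X * Q) i j = 0 := by linear_combination h2
    refine (mul_eq_zero.1 h3).resolve_left ?_
    simp only [S, T, Finset.mem_union, Finset.mem_product, Finset.mem_compl, Finset.mem_filter,
      Finset.mem_univ, true_and] at hp
    rw [← ne_eq, sub_ne_zero]
    rcases hp with ⟨h, h'⟩ | ⟨h, h'⟩
    · rw [h]; exact fun h2 => h' h2.symm
    · rw [h']; exact h
  have hker : finrank ℂ (LinearMap.ker L) + S.card = N ^ 2 := by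
    have := LinearMap.finrank_range_add_finrank_ker L
    rw [LinearMap.range_eq_top.2 hLs, finrank_top, Module.finrank_matrix] at this
    simp at this
    rw [sq, ← this]; ring
  have hle := Submodule.finrank_mono hgL
  have h2N : 2 * N ≤ N ^ 2 := by nlinarith
  have hk : T.card = 1 ∨ N - T.card = 1 := by
    by_contra hcon
    push Not at hcon
    have h1 : 2 ≤ T.card := by omega
    have h2 : 2 ≤ N - T.card := by omega
    have h3 : T.card + (N - T.card) = N := by omega
    generalize N - T.card = m at *
    have h4 : 2 * (T.card * m) ≤ 2 * N - 2 := by omega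
    have h5 : T.card * m + 1 ≤ N := by omega
    nlinarith
  have hSc : S.card = 2 * (N - 1) := by
    rw [hS]
    rcases hk with h | h
    · rw [h]; simp
    · rw [h]; omega
  have hgeq : g = LinearMap.ker L := by
    apply Submodule.eq_of_le_of_finrank_le hgL
    omega
  obtain ⟨i0, hi0⟩ : ∃ i0 : Fin N, ∀ i j, (i, j) ∈ S ↔ ¬ (i = i0 ↔ j = i0) := by
    rcases hk with h | h
    · obtain ⟨i0, h0⟩ := Finset.card_eq_one.1 h
      refine ⟨i0, fun i j => ?_⟩
      simp only [S, h0, Finset.mem_union, Finset.mem_product, Finset.mem_compl,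
        Finset.mem_singleton]
      tauto
    · have h' : Tᶜ.card = 1 := by rw [Finset.card_compl]; simpa using h
      obtain ⟨i0, h0⟩ := Finset.card_eq_one.1 h'
      refine ⟨i0, fun i j => ?_⟩
      have h1 : ∀ i, i ∈ T ↔ ¬ i = i0 := by
        intro i
        rw [← Finset.mem_singleton, ← h0]; simp
      simp only [S, h0, Finset.mem_union, Finset.mem_product, Finset.mem_singleton, h1]
      tauto
  let last : Fin N := ⟨N - 1, by omega⟩
  let σ : Equiv.Perm (Fin N) := Equiv.swap i0 last
  let U : Matrix (Fin N) (Fin N) ℂ := (star (Q : Matrix (Fin N) (Fin N) ℂ)).submatrix σ id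
  have hUX : ∀ (X : Matrix (Fin N) (Fin N) ℂ) i j, (U * X * star U) i j = (star (Q : Matrix (Fin N) (Fin N) ℂ) * X * Q) (σ i) (σ j) := by
    intro X i j
    have : star U = (Q : Matrix (Fin N) (Fin N) ℂ).submatrix id σ := by
      simp [U, star_eq_conjTranspose]
    rw [this]
    simp [U, Matrix.mul_apply]
  refine ⟨U, ?_, ?_⟩
  · rw [mem_unitaryGroup_iff]
    ext i j
    have := hUX 1 i j
    rw [mul_one, mul_one, hQ2] at this
    rw [this]
    simp [Matrix.one_apply]
  · intro X
    rw [hgeq, LinearMap.mem_ker]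
    have hσ : ∀ i : Fin N, (σ i = i0) ↔ (i : ℕ) = N - 1 := by
      intro i
      rw [show (i : ℕ) = N - 1 ↔ i = last from by simp [last, Fin.ext_iff]]
      constructor
      · intro h
        rw [← Equiv.swap_apply_right i0 last] at h
        exact σ.injective h
      · rintro rfl; exact Equiv.swap_apply_right _ _
    constructor
    · intro h i j hij
      rw [hUX]
      have hm : (σ i, σ j) ∈ S := by
        rw [hi0, hσ, hσ]; exact hij
      exact congrFun h ⟨(σ i, σ j), hm⟩
    · intro h
      ext ⟨⟨i, j⟩, hp⟩
      have h1 := h (σ i) (σ j) (by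
        rw [← hσ, ← hσ]
        have := (hi0 i j).1 hp
        simpa [σ] using this)
      rw [hUX] at h1
      simp [σ] at h1
      exact h1

end Red
end St12

namespace St12
open Module Filter Topology NormedSpace

section LieTheory
variable {A : Type*} [CStarAlgebra A]

/-- A closed subgroup of the unitary group of a C*-algebra, as a set. -/
structure CG (K : Set A) : Prop where
  one : (1 : A) ∈ K
  mul : ∀ a ∈ K, ∀ b ∈ K, a * b ∈ K
  inv : ∀ a ∈ K, star a ∈ K
  unit : ∀ a ∈ K, a ∈ unitary A
  closed : IsClosed K

lemma exp_add' {x y : A} (h : Commute x y) : exp (x + y) = exp x * exp y :=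
  letI : NormedAlgebra ℚ A := NormedAlgebra.restrictScalars ℚ ℝ A
  exp_add_of_commute h

lemma exp_mul_neg (x : A) : exp x * exp (-x) = 1 := by
  rw [← exp_add' (Commute.refl x).neg_right, add_neg_cancel, exp_zero]

lemma exp_neg_mul (x : A) : exp (-x) * exp x = 1 := by
  rw [← exp_add' (Commute.refl x).neg_left, neg_add_cancel, exp_zero]

lemma exp_cont : Continuous (exp : A → A) :=
  letI : NormedAlgebra ℚ A := NormedAlgebra.restrictScalars ℚ ℝ A
  exp_continuous

lemma exp_conj_unitary {U : A} (hU : U ∈ unitary A) (x : A) :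
    exp (U * x * star U) = U * exp x * star U := by
  let _ : NormedAlgebra ℚ A := NormedAlgebra.restrictScalars ℚ ℝ A
  exact exp_units_conj (Unitary.toUnits ⟨U, hU⟩) x

lemma exp_unitary {X : A} (h : star X = -X) : exp X ∈ unitary A := by
  rw [Unitary.mem_iff, star_exp, h]
  exact ⟨exp_neg_mul X, exp_mul_neg X⟩

lemma exp_pow (X : A) (m : ℕ) : exp X ^ m = exp ((m : ℝ) • X) := by
  let _ : NormedAlgebra ℚ A := NormedAlgebra.restrictScalars ℚ ℝ A
  rw [Nat.cast_smul_eq_nsmul, exp_nsmul]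

lemma norm_unit_le {a : A} (h : a ∈ unitary A) : ‖a‖ ≤ 1 := by
  nontriviality A
  rw [CStarRing.norm_of_mem_unitary h]

lemma norm_pow_sub {a b : A} (ha : ‖a‖ ≤ 1) (hb : ‖b‖ ≤ 1) (m : ℕ) :
    ‖a ^ m - b ^ m‖ ≤ m * ‖a - b‖ := by
  have hn1 : ‖(1 : A)‖ ≤ 1 := norm_unit_le (one_mem _)
  have hp : ∀ k : ℕ, ‖a ^ k‖ ≤ 1 := by
    intro k
    induction k with
    | zero => simpa using hn1
    | succ k ih =>
      rw [pow_succ]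
      exact (norm_mul_le _ _).trans (mul_le_one₀ ih (norm_nonneg _) ha)
  induction m with
  | zero => simp
  | succ k ih =>
    have : a ^ (k+1) - b ^ (k+1) = a ^ k * (a - b) + (a ^ k - b ^ k) * b := by
      rw [pow_succ, pow_succ]; noncomm_ring
    rw [this]
    calc _ ≤ ‖a ^ k * (a - b)‖ + ‖(a ^ k - b ^ k) * b‖ := norm_add_le _ _
      _ ≤ 1 * ‖a - b‖ + (k * ‖a - b‖) * 1 := by
        gcongr
        · exact (norm_mul_le _ _).trans (by gcongr; exact hp k)
        · exact (norm_mul_le _ _).trans (by gcongr)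
      _ = _ := by push_cast; ring

/-- Quotient limit of the exponential. -/
lemma tendsto_exp_quot {s : ℕ → ℝ} {Y : ℕ → A} {X : A} (hs : Tendsto s atTop atTop)
    (hY : Tendsto (fun n => s n • Y n) atTop (𝓝 X)) :
    Tendsto (fun n => s n • (exp (Y n) - 1)) atTop (𝓝 X) := by
  have hY0 : Tendsto Y atTop (𝓝 0) := by
    have h1 : Tendsto (fun n => (s n)⁻¹ • (s n • Y n)) atTop (𝓝 ((0:ℝ) • X)) :=
      (tendsto_inv_atTop_zero.comp hs).smul hY
    rw [zero_smul] at h1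
    refine h1.congr' ?_
    filter_upwards [hs.eventually_ne_atTop 0] with n hn
    rw [smul_smul, inv_mul_cancel₀ hn, one_smul]
  have hd : HasFDerivAt (exp : A → A) (1 : A →L[ℝ] A) 0 := hasFDerivAt_exp_zero
  have ho := hd.isLittleO
  have h2 : (fun n => exp (Y n) - exp 0 - (1 : A →L[ℝ] A) (Y n - 0)) =o[atTop] fun n => Y n - 0 :=
    ho.comp_tendsto hY0
  have h3 : (fun n => s n • (exp (Y n) - 1 - Y n)) =o[atTop] fun n => s n • Y n := by
    have := (Asymptotics.isBigO_refl s atTop).smul_isLittleO h2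
    simpa using this
  have h4 : Tendsto (fun n => s n • (exp (Y n) - 1 - Y n)) atTop (𝓝 0) := by
    have := h3.trans_isBigO (hY.isBigO_one ℝ)
    exact (Asymptotics.isLittleO_one_iff ℝ).1 this
  have h5 := h4.add hY
  rw [zero_add] at h5
  refine h5.congr fun n => ?_
  rw [← smul_add]; congr 1; abel

lemma tendsto_exp_nat (X : A) :
    Tendsto (fun n : ℕ => (n : ℝ) • (exp ((n : ℝ)⁻¹ • X) - 1)) atTop (𝓝 X) := by
  apply tendsto_exp_quot tendsto_natCast_atTop_atTop
  refine tendsto_const_nhds.congr' ?_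
  filter_upwards [eventually_ne_atTop 0] with n hn
  rw [smul_smul, mul_inv_cancel₀ (by exact_mod_cast hn), one_smul]

lemma tendsto_one_of {s : ℕ → ℝ} {h : ℕ → A} {X : A} (hs : Tendsto s atTop atTop)
    (hX : Tendsto (fun n => s n • (h n - 1)) atTop (𝓝 X)) : Tendsto h atTop (𝓝 1) := by
  have h1 : Tendsto (fun n => (s n)⁻¹ • (s n • (h n - 1))) atTop (𝓝 ((0:ℝ) • X)) :=
    (tendsto_inv_atTop_zero.comp hs).smul hX
  rw [zero_smul] at h1
  have h2 := h1.add_const 1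
  rw [zero_add] at h2
  refine h2.congr' ?_
  filter_upwards [hs.eventually_ne_atTop 0] with n hn
  rw [smul_smul, inv_mul_cancel₀ hn, one_smul, sub_add_cancel]

lemma skew_of_tendsto {s : ℕ → ℝ} {h : ℕ → A} {X : A} (hu : ∀ n, h n ∈ unitary A)
    (hs : Tendsto s atTop atTop)
    (hX : Tendsto (fun n => s n • (h n - 1)) atTop (𝓝 X)) : star X = -X := by
  have h1 := tendsto_one_of hs hX
  have h2 : Tendsto (fun n => star (h n) * (s n • (h n - 1))) atTop (𝓝 (star 1 * X)) :=
    (h1.star).mul hX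
  have h3 : Tendsto (fun n => star (s n • (h n - 1))) atTop (𝓝 (star X)) := hX.star
  have h4 := h2.add h3
  have h5 : ∀ n, star (h n) * (s n • (h n - 1)) + star (s n • (h n - 1)) = 0 := by
    intro n
    have := (Unitary.mem_iff.1 (hu n)).1
    rw [star_smul, star_trivial (s n), mul_smul_comm, ← smul_add, mul_sub, this, star_sub]
    simp
  simp only [h5, star_one, one_mul] at h4
  have := tendsto_nhds_unique tendsto_const_nhds h4
  exact (eq_neg_of_add_eq_zero_right this.symm)

variable {K : Set A}

lemma CG.pow (hK : CG K) {a : A} (ha : a ∈ K) (m : ℕ) : a ^ m ∈ K := by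
  induction m with
  | zero => simpa using hK.one
  | succ k ih => rw [pow_succ]; exact hK.mul _ ih _ ha

lemma CG.exp_mem (hK : CG K) {s : ℕ → ℝ} {h : ℕ → A} {X : A} (hu : ∀ n, h n ∈ K)
    (hs : Tendsto s atTop atTop)
    (hX : Tendsto (fun n => s n • (h n - 1)) atTop (𝓝 X)) : exp X ∈ K := by
  have hsk := skew_of_tendsto (fun n => hK.unit _ (hu n)) hs hX
  let m : ℕ → ℕ := fun n => ⌊s n⌋₊
  have hm : Tendsto m atTop atTop := tendsto_nat_floor_atTop.comp hs
  have hmr : Tendsto (fun n => (m n : ℝ)) atTop atTop := tendsto_natCast_atTop_atTop.comp hm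
  have hq : Tendsto (fun n => (m n : ℝ) / s n) atTop (𝓝 1) :=
    (tendsto_nat_floor_div_atTop).comp hs
  have hmX : Tendsto (fun n => (m n : ℝ) • (h n - 1)) atTop (𝓝 X) := by
    have := hq.smul hX
    rw [one_smul] at this
    refine this.congr' ?_
    filter_upwards [hs.eventually_ne_atTop 0] with n hn
    rw [smul_smul, div_mul_cancel₀ _ hn]
  have hE : Tendsto (fun n => (m n : ℝ) • (exp ((m n : ℝ)⁻¹ • X) - 1)) atTop (𝓝 X) :=
    (tendsto_exp_nat X).comp hm
  have hdiff : Tendsto (fun n => (m n : ℝ) • (h n - exp ((m n : ℝ)⁻¹ • X))) atTop (𝓝 0) := by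
    have := hmX.sub hE
    rw [sub_self] at this
    refine this.congr fun n => ?_
    rw [← smul_sub]; congr 1; abel
  have hlim : Tendsto (fun n => h n ^ m n) atTop (𝓝 (exp X)) := by
    rw [tendsto_iff_norm_sub_tendsto_zero]
    refine squeeze_zero' (Eventually.of_forall fun _ => norm_nonneg _) ?_
      (by simpa using hdiff.norm)
    filter_upwards [hm.eventually_ne_atTop 0] with n hn
    have e1 : exp X = exp ((m n : ℝ)⁻¹ • X) ^ m n := by
      rw [exp_pow, smul_smul, mul_inv_cancel₀ (by exact_mod_cast hn), one_smul]
    rw [e1, norm_smul, Real.norm_natCast]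
    apply norm_pow_sub (norm_unit_le (hK.unit _ (hu n)))
    apply norm_unit_le
    apply exp_unitary
    rw [star_smul, hsk, star_trivial, smul_neg]
  exact hK.closed.mem_of_tendsto hlim (Eventually.of_forall fun n => hK.pow (hu n) _)

lemma CG.exp_mem' (hK : CG K) {s : ℕ → ℝ} {h : ℕ → A} {X : A} (hu : ∀ n, h n ∈ K)
    (hs : Tendsto s atTop atTop)
    (hX : Tendsto (fun n => s n • (h n - 1)) atTop (𝓝 X)) (t : ℝ) : exp (t • X) ∈ K := by
  have hsk := skew_of_tendsto (fun n => hK.unit _ (hu n)) hs hX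
  rcases lt_trichotomy t 0 with ht | rfl | ht
  · apply hK.exp_mem (s := fun n => (-t) * s n) (h := fun n => star (h n)) (fun n => hK.inv _ (hu n))
      (hs.const_mul_atTop (by linarith))
    have := (hX.star).const_smul (-t)
    rw [hsk, smul_neg, neg_smul, neg_neg] at this
    refine this.congr fun n => ?_
    simp [mul_smul]
  · simpa using hK.one
  · apply hK.exp_mem (s := fun n => t * s n) hu (hs.const_mul_atTop ht)
    refine (hX.const_smul t).congr fun n => ?_
    rw [smul_smul]

/-- The Lie algebra of `K`. -/
def CG.lie (hK : CG K) : Submodule ℝ A where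
  carrier := {X | ∀ t : ℝ, exp (t • X) ∈ K}
  zero_mem' := by intro t; simpa using hK.one
  smul_mem' := by
    intro c X hX t
    rw [smul_smul]; exact hX _
  add_mem' := by
    intro X Y hX hY
    refine hK.exp_mem' (s := fun n : ℕ => (n : ℝ))
      (h := fun n : ℕ => exp ((n : ℝ)⁻¹ • X) * exp ((n : ℝ)⁻¹ • Y))
      (fun n => hK.mul _ (hX _) _ (hY _)) tendsto_natCast_atTop_atTop ?_
    have h1 := tendsto_exp_nat X
    have h2 := tendsto_exp_nat Y
    have h3 := (h1.mul (tendsto_one_of tendsto_natCast_atTop_atTop h2)).add h2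
    rw [mul_one] at h3
    refine h3.congr fun n => ?_
    rw [smul_mul_assoc, ← smul_add]; congr 1
    noncomm_ring

lemma CG.mem_lie (hK : CG K) {X : A} : X ∈ hK.lie ↔ ∀ t : ℝ, exp (t • X) ∈ K := Iff.rfl

lemma CG.exp_lie (hK : CG K) {X : A} (h : X ∈ hK.lie) : exp X ∈ K := by
  simpa using h 1

lemma CG.skew (hK : CG K) {X : A} (h : X ∈ hK.lie) : star X = -X :=
  skew_of_tendsto (fun _ => hK.unit _ (h _)) tendsto_natCast_atTop_atTop (tendsto_exp_nat X)

lemma CG.conj (hK : CG K) {X a : A} (h : X ∈ hK.lie) (ha : a ∈ K) : a * X * star a ∈ hK.lie := by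
  intro t
  have : t • (a * X * star a) = a * (t • X) * star a := by simp
  rw [this, exp_conj_unitary (hK.unit a ha)]
  exact hK.mul _ (hK.mul _ ha _ (h t)) _ (hK.inv _ ha)

lemma CG.lie_closed (hK : CG K) : IsClosed (hK.lie : Set A) := by
  have : (hK.lie : Set A) = ⋂ t : ℝ, (fun X : A => exp (t • X)) ⁻¹' K := by
    ext X; simp [CG.mem_lie]
  rw [this]
  exact isClosed_iInter fun t => hK.closed.preimage (exp_cont.comp (continuous_const_smul t))

lemma CG.bracket (hK : CG K) {X Y : A} (hX : X ∈ hK.lie) (hY : Y ∈ hK.lie) :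
    X * Y - Y * X ∈ hK.lie := by
  have h1 := tendsto_exp_nat X
  have h2 := tendsto_exp_nat (-X)
  have h3 := tendsto_one_of tendsto_natCast_atTop_atTop h2
  have h4 := ((h1.mul_const Y).mul h3).add (h2.const_mul Y)
  have e : X * Y * 1 + Y * -X = X * Y - Y * X := by noncomm_ring
  rw [e] at h4
  refine hK.lie_closed.mem_of_tendsto h4 (Eventually.of_forall fun n => ?_)
  have h5 := hK.conj hY (hX ((n : ℝ)⁻¹))
  have h6 := hK.lie.smul_mem (n : ℝ) (hK.lie.sub_mem h5 hY)
  rw [star_exp, star_smul, hK.skew hX, star_trivial] at h6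
  rw [SetLike.mem_coe]
  convert h6 using 1
  rw [smul_mul_assoc, smul_mul_assoc, mul_smul_comm, ← smul_add]
  congr 1
  noncomm_ring

end LieTheory
end St12

namespace St12
open Module Filter Topology NormedSpace

section LieTheory2
variable {A : Type*} [CStarAlgebra A] [FiniteDimensional ℝ A] {K : Set A}

lemma CG.local_exp (hK : CG K) : ∃ δ > 0, ∀ a ∈ K, ‖a - 1‖ < δ → ∃ X ∈ hK.lie, a = exp X := by
  obtain ⟨W, hW⟩ := hK.lie.exists_isCompl
  obtain ⟨p, hp1, hp2⟩ : ∃ p : A →L[ℝ] A, (∀ z, p z ∈ hK.lie) ∧ ∀ z, z - p z ∈ W := by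
    let q : A →ₗ[ℝ] A := hK.lie.subtype ∘ₗ (Submodule.projectionOnto hK.lie W hW)
    refine ⟨LinearMap.toContinuousLinearMap q, fun z => ?_, fun z => ?_⟩
    · simp [q]
    · have hz : z ∈ hK.lie ⊔ W := by rw [hW.sup_eq_top]; trivial
      obtain ⟨a, ha, b, hb, rfl⟩ := Submodule.mem_sup.1 hz
      have h1 : Submodule.projectionOnto hK.lie W hW a = ⟨a, ha⟩ :=
        Submodule.projectionOnto_apply_left hW ⟨a, ha⟩
      have h2 : Submodule.projectionOnto hK.lie W hW b = 0 :=
        Submodule.projectionOnto_apply_right hW ⟨b, hb⟩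
      have h3 : q (a + b) = a := by
        change ((Submodule.projectionOnto hK.lie W hW (a + b) : hK.lie) : A) = a
        rw [map_add, h1, h2, add_zero]
      rw [LinearMap.coe_toContinuousLinearMap', h3]
      simpa using hb
  let Φ : A → A := fun z => exp (p z) * exp (z - p z)
  have hΦ0 : Φ 0 = 1 := by simp [Φ]
  have hd : HasStrictFDerivAt Φ ((ContinuousLinearEquiv.refl ℝ A : A ≃L[ℝ] A) : A →L[ℝ] A) 0 := by
    have e0 : HasStrictFDerivAt (exp : A → A) (1 : A →L[ℝ] A) 0 := hasStrictFDerivAt_exp_zero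
    have h1 : HasStrictFDerivAt (fun z => exp (p z)) ((1 : A →L[ℝ] A).comp p) 0 := by
      refine HasStrictFDerivAt.comp (g := exp) (f := p) 0 ?_ p.hasStrictFDerivAt
      rw [map_zero]; exact e0
    have h2 : HasStrictFDerivAt (fun z => exp (z - p z))
        ((1 : A →L[ℝ] A).comp (ContinuousLinearMap.id ℝ A - p)) 0 := by
      refine HasStrictFDerivAt.comp (g := exp) (f := ContinuousLinearMap.id ℝ A - p) 0 ?_
        (ContinuousLinearMap.hasStrictFDerivAt _)
      rw [map_zero]; exact e0
    have h3 := h1.mul' h2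
    have e : ((ContinuousLinearEquiv.refl ℝ A : A ≃L[ℝ] A) : A →L[ℝ] A) =
        (exp (p 0) • (1 : A →L[ℝ] A).comp (ContinuousLinearMap.id ℝ A - p) +
          MulOpposite.op (exp (0 - p 0)) • (1 : A →L[ℝ] A).comp p) := by
      ext z
      simp
    rw [e]
    exact h3
  have hd' := hd
  let ψ := hd.localInverse
  have hψ1 : ∀ᶠ y in 𝓝 (1 : A), Φ (ψ y) = y := by
    have := hd.eventually_right_inverse
    rwa [hΦ0] at this
  have hψ2 : Tendsto ψ (𝓝 1) (𝓝 0) := by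
    have := hd.localInverse_tendsto
    rwa [hΦ0] at this
  by_contra hcon
  push Not at hcon
  have hseq : ∀ n : ℕ, ∃ a ∈ K, ‖a - 1‖ < 1 / ((n : ℝ) + 1) ∧ ∀ X ∈ hK.lie, a ≠ exp X :=
    fun n => hcon _ (by positivity)
  choose a haK ha1 haX using hseq
  have hat : Tendsto a atTop (𝓝 1) := by
    rw [tendsto_iff_norm_sub_tendsto_zero]
    exact squeeze_zero (fun _ => norm_nonneg _) (fun n => (ha1 n).le)
      tendsto_one_div_add_atTop_nhds_zero_nat
  obtain ⟨n0, hn0⟩ := eventually_atTop.1 (hat.eventually hψ1)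
  let Z : ℕ → A := fun n => ψ (a (n + n0))
  have hZ : ∀ n, Φ (Z n) = a (n + n0) := fun n => hn0 _ (by omega)
  have hZt : Tendsto Z atTop (𝓝 0) := hψ2.comp (hat.comp (tendsto_add_atTop_nat n0))
  let Y : ℕ → A := fun n => Z n - p (Z n)
  have hYt : Tendsto Y atTop (𝓝 0) := by
    have : Tendsto (fun z => z - p z) (𝓝 0) (𝓝 ((0:A) - p 0)) :=
      (continuous_id.sub p.continuous).tendsto 0
    rw [map_zero, sub_zero] at this
    exact this.comp hZt
  have hYK : ∀ n, exp (Y n) ∈ K := by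
    intro n
    have h1 : exp (Y n) = exp (-(p (Z n))) * a (n + n0) := by
      rw [← hZ n]
      simp only [Φ, ← mul_assoc, exp_neg_mul, one_mul]
      rfl
    rw [h1]
    exact hK.mul _ (hK.exp_lie (hK.lie.neg_mem (hp1 _))) _ (haK _)
  have hY0 : ∀ n, Y n ≠ 0 := by
    intro n h
    apply haX (n + n0) _ (hp1 (Z n))
    rw [← hZ n]
    have : exp (Z n - p (Z n)) = 1 := by
      change exp (Y n) = 1
      rw [h, exp_zero]
    simp only [Φ, this, mul_one]
  have hproper : ProperSpace A := FiniteDimensional.proper ℝ A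
  have hsph : ∀ n, ‖Y n‖⁻¹ • Y n ∈ Metric.sphere (0 : A) 1 := by
    intro n
    rw [mem_sphere_zero_iff_norm, norm_smul, norm_inv, norm_norm,
      inv_mul_cancel₀ (norm_ne_zero_iff.2 (hY0 n))]
  obtain ⟨y, hy, φ, hφ, hφt⟩ := (isCompact_sphere (0 : A) 1).tendsto_subseq hsph
  have hs : Tendsto (fun n => ‖Y (φ n)‖⁻¹) atTop atTop := by
    apply tendsto_inv_nhdsGT_zero.comp
    rw [tendsto_nhdsWithin_iff]
    refine ⟨?_, Eventually.of_forall fun n => norm_pos_iff.2 (hY0 _)⟩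
    have := (hYt.comp hφ.tendsto_atTop).norm
    simpa using this
  have hyl : y ∈ hK.lie := hK.exp_mem' (s := fun n => ‖Y (φ n)‖⁻¹) (fun n => hYK (φ n)) hs
    (tendsto_exp_quot hs hφt)
  have hyW : y ∈ W := by
    have hWc : IsClosed (W : Set A) := W.closed_of_finiteDimensional
    exact hWc.mem_of_tendsto hφt (Eventually.of_forall fun n => W.smul_mem _ (hp2 _))
  have : y = 0 := by
    have := hW.disjoint.le_bot ⟨hyl, hyW⟩
    simpa using this
  rw [this] at hy
  simp at hy

lemma CG.gen (hK : CG K) (hc : IsPreconnected K) (S : Set A) (h1 : (1 : A) ∈ S)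
    (hm : ∀ a ∈ S, ∀ X ∈ hK.lie, a * exp X ∈ S) : K ⊆ S := by
  obtain ⟨δ, hδ, hl⟩ := hK.local_exp
  let u : A → Set A := fun a => {b | ‖star a * b - 1‖ < δ}
  have hu : ∀ a, IsOpen (u a) := fun a =>
    isOpen_lt (by fun_prop) continuous_const
  have hself : ∀ a ∈ K, a ∈ u a := by
    intro a ha
    have := (Unitary.mem_iff.1 (hK.unit a ha)).1
    simp [u, this, hδ]
  have hstep : ∀ a ∈ K, ∀ b ∈ K, b ∈ u a → ∃ X ∈ hK.lie, b = a * exp X := by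
    intro a ha b hb hab
    obtain ⟨X, hX, h⟩ := hl _ (hK.mul _ (hK.inv _ ha) _ hb) hab
    refine ⟨X, hX, ?_⟩
    rw [← h, ← mul_assoc, (Unitary.mem_iff.1 (hK.unit a ha)).2, one_mul]
  by_contra hcon
  obtain ⟨c, hcK, hcS⟩ := Set.not_subset.1 hcon
  obtain ⟨b, hbK, hb1, hb2⟩ := hc (⋃ a ∈ K ∩ S, u a) (⋃ a ∈ K \ S, u a)
    (isOpen_biUnion fun a _ => hu a) (isOpen_biUnion fun a _ => hu a)
    (by
      intro a ha
      by_cases haS : a ∈ S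
      · left; exact Set.mem_biUnion ⟨ha, haS⟩ (hself a ha)
      · right; exact Set.mem_biUnion ⟨ha, haS⟩ (hself a ha))
    ⟨1, hK.one, Set.mem_biUnion ⟨hK.one, h1⟩ (hself 1 hK.one)⟩
    ⟨c, hcK, Set.mem_biUnion ⟨hcK, hcS⟩ (hself c hcK)⟩
  obtain ⟨a1, ha1, hba1⟩ := Set.mem_iUnion₂.1 hb1
  obtain ⟨a2, ha2, hba2⟩ := Set.mem_iUnion₂.1 hb2
  obtain ⟨X, hX, e1⟩ := hstep a1 ha1.1 b hbK hba1
  obtain ⟨Y, hY, e2⟩ := hstep a2 ha2.1 b hbK hba2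
  apply ha2.2
  have : a2 = b * exp (-Y) := by rw [e2, mul_assoc, exp_mul_neg, mul_one]
  rw [this]
  apply hm _ _ _ (hK.lie.neg_mem hY)
  rw [e1]
  exact hm _ ha1.2 _ hX

lemma CG.dim_le (hK : CG K) {F : Type*} [NormedAddCommGroup F] [NormedSpace ℝ F] (f : A →L[ℝ] F) :
    dimH (f '' K) ≤ finrank ℝ hK.lie := by
  obtain ⟨δ, hδ, hl⟩ := hK.local_exp
  have hproper : ProperSpace A := FiniteDimensional.proper ℝ A
  have hsc : SecondCountableTopology A := inferInstance
  obtain ⟨t, htK, htc, hcov⟩ := TopologicalSpace.countable_cover_nhdsWithin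
    (f := fun a : A => {b | ‖star a * b - 1‖ < δ}) (s := K) (by
      intro a ha
      apply mem_nhdsWithin_of_mem_nhds
      refine IsOpen.mem_nhds (isOpen_lt (by fun_prop) continuous_const) ?_
      have := (Unitary.mem_iff.1 (hK.unit a ha)).1
      simp [this, hδ])
  have hsub : f '' K ⊆ ⋃ a ∈ t, Set.range (fun X : hK.lie => f (a * exp (X : A))) := by
    rintro _ ⟨b, hb, rfl⟩
    obtain ⟨a, ha, hab⟩ := Set.mem_iUnion₂.1 (hcov hb)
    obtain ⟨X, hX, h⟩ := hl _ (hK.mul _ (hK.inv _ (htK ha)) _ hb) hab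
    refine Set.mem_biUnion ha ⟨⟨X, hX⟩, ?_⟩
    simp only
    rw [← h, ← mul_assoc, (Unitary.mem_iff.1 (hK.unit a (htK ha))).2, one_mul]
  refine (dimH_mono hsub).trans ?_
  rw [dimH_bUnion htc]
  refine iSup₂_le fun a _ => ?_
  apply ContDiff.dimH_range_le
  apply f.contDiff.comp
  apply ContDiff.mul contDiff_const
  have : ContDiff ℝ 1 (exp : A → A) := by
    rw [contDiff_iff_contDiffAt]
    intro x
    exact (exp_analytic (𝕂 := ℝ) x).contDiffAt
  exact this.comp hK.lie.subtypeL.contDiff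

end LieTheory2
end St12

namespace St12
open Module Matrix

section Complexify
variable {N : ℕ}

/-- Complexification of a real subspace of matrices. -/
def cplx (h : Submodule ℝ (Matrix (Fin N) (Fin N) ℂ)) : Submodule ℂ (Matrix (Fin N) (Fin N) ℂ) where
  carrier := {Z | ∃ X ∈ h, ∃ Y ∈ h, Z = X + Complex.I • Y}
  zero_mem' := ⟨0, h.zero_mem, 0, h.zero_mem, by simp⟩
  add_mem' := by
    rintro _ _ ⟨X, hX, Y, hY, rfl⟩ ⟨X', hX', Y', hY', rfl⟩
    exact ⟨X + X', h.add_mem hX hX', Y + Y', h.add_mem hY hY', by module⟩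
  smul_mem' := by
    rintro c _ ⟨X, hX, Y, hY, rfl⟩
    refine ⟨c.re • X - c.im • Y, h.sub_mem (h.smul_mem _ hX) (h.smul_mem _ hY),
      c.im • X + c.re • Y, h.add_mem (h.smul_mem _ hX) (h.smul_mem _ hY), ?_⟩
    ext i j
    simp only [Matrix.add_apply, Matrix.sub_apply, Matrix.smul_apply, smul_eq_mul,
      Complex.real_smul]
    conv_lhs => rw [← Complex.re_add_im c]
    linear_combination (c.im * Y i j) * Complex.I_sq

variable {h : Submodule ℝ (Matrix (Fin N) (Fin N) ℂ)}

lemma mem_cplx {Z : Matrix (Fin N) (Fin N) ℂ} :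
    Z ∈ cplx h ↔ ∃ X ∈ h, ∃ Y ∈ h, Z = X + Complex.I • Y := Iff.rfl

lemma le_cplx {X : Matrix (Fin N) (Fin N) ℂ} (hX : X ∈ h) : X ∈ cplx h :=
  ⟨X, hX, 0, h.zero_mem, by simp⟩

lemma cplx_lie (hb : ∀ X ∈ h, ∀ Y ∈ h, X * Y - Y * X ∈ h) :
    ∀ X ∈ cplx h, ∀ Y ∈ cplx h, X * Y - Y * X ∈ cplx h := by
  rintro _ ⟨X, hX, Y, hY, rfl⟩ _ ⟨X', hX', Y', hY', rfl⟩
  refine ⟨(X * X' - X' * X) - (Y * Y' - Y' * Y),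
    h.sub_mem (hb _ hX _ hX') (hb _ hY _ hY'),
    (X * Y' - Y' * X) + (Y * X' - X' * Y), h.add_mem (hb _ hX _ hY') (hb _ hY _ hX'), ?_⟩
  have hI : (Complex.I * Complex.I) = -1 := Complex.I_mul_I
  simp only [mul_add, add_mul, smul_mul_assoc, mul_smul_comm, smul_add, smul_smul, hI]
  module

lemma cplx_star (hs : ∀ X ∈ h, Xᴴ = -X) : ∀ X ∈ cplx h, Xᴴ ∈ cplx h := by
  rintro _ ⟨X, hX, Y, hY, rfl⟩
  refine ⟨-X, h.neg_mem hX, Y, hY, ?_⟩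
  rw [conjTranspose_add, conjTranspose_smul, hs X hX, hs Y hY]
  simp

lemma cplx_skew (hs : ∀ X ∈ h, Xᴴ = -X) {Z : Matrix (Fin N) (Fin N) ℂ} (hZ : Z ∈ cplx h)
    (hZs : Zᴴ = -Z) : Z ∈ h := by
  obtain ⟨X, hX, Y, hY, rfl⟩ := hZ
  rw [conjTranspose_add, conjTranspose_smul, hs X hX, hs Y hY] at hZs
  have h1 : (2 * Complex.I) • Y = 0 := by
    have h2 : (2 * Complex.I) • Y = (-X + star Complex.I • -Y) - (-(X + Complex.I • Y)) := by
      simp; module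
    rw [h2, hZs, sub_self]
  have h2 : Y = 0 := by
    rcases smul_eq_zero.1 h1 with h' | h'
    · simp at h'
    · exact h'
  simpa [h2] using hX

lemma cplx_finrank (hs : ∀ X ∈ h, Xᴴ = -X) : finrank ℝ h ≤ finrank ℂ (cplx h) := by
  let f : (h × h) →ₗ[ℝ] (cplx h) :=
    { toFun := fun p => ⟨p.1 + Complex.I • p.2, p.1, p.1.2, p.2, p.2.2, rfl⟩
      map_add' := by
        intro p q
        ext1
        simp only [Prod.fst_add, Prod.snd_add, Submodule.coe_add]
        module
      map_smul' := by
        intro c p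
        ext1
        simp only [Prod.smul_fst, Prod.smul_snd, RingHom.id_apply, Submodule.coe_smul_of_tower]
        rw [smul_add, smul_comm] }
  have hf : Function.Injective f := by
    rw [injective_iff_map_eq_zero]
    rintro ⟨⟨X, hX⟩, ⟨Y, hY⟩⟩ h0
    have h1 : X + Complex.I • Y = 0 := congrArg Subtype.val h0
    have h2 := congrArg conjTranspose h1
    rw [conjTranspose_add, conjTranspose_smul, hs X hX, hs Y hY] at h2
    simp at h2
    have h3 : (2 : ℂ) • X = 0 := by
      have : (2 : ℂ) • X = (X + Complex.I • Y) - (-X + Complex.I • Y) := by module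
      rw [this, h1, h2, sub_zero]
    have hX0 : X = 0 := by simpa using h3
    have hY0 : Y = 0 := by simpa [hX0] using h1
    subst hX0 hY0
    rfl
  have h1 := LinearMap.finrank_le_finrank_of_injective hf
  rw [Module.finrank_prod, finrank_real_of_complex] at h1
  omega

end Complexify
end St12

namespace St12
open Module Matrix NormedSpace
open scoped Matrix.Norms.L2Operator

section LogExp
variable {N : ℕ}

lemma spec_finite (A : Matrix (Fin N) (Fin N) ℂ) : (spectrum ℂ A).Finite := by
  rw [← Matrix.spectrum_toLin']
  exact Module.End.finite_spectrum _

/-- Logarithm of a unitary matrix. -/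
lemma log_unitary (A : Matrix (Fin N) (Fin N) ℂ) (hA : A ∈ unitary (Matrix (Fin N) (Fin N) ℂ)) :
    ∃ X : Matrix (Fin N) (Fin N) ℂ, star X = -X ∧ exp X = A ∧
      ∀ B, Commute A B → Commute (star A) B → Commute X B := by
  have hn : IsStarNormal A := ⟨by
    rw [commute_iff_eq, Unitary.star_mul_self_of_mem hA, Unitary.mul_star_self_of_mem hA]⟩
  have hf : ∀ f : ℂ → ℂ, ContinuousOn f (spectrum ℂ A) := fun f =>
    (spec_finite A).continuousOn f
  let f : ℂ → ℂ := fun z => Complex.I * (Complex.arg z : ℂ)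
  refine ⟨cfc f A, ?_, ?_, ?_⟩
  · rw [← cfc_star, ← cfc_neg]
    apply cfc_congr
    intro z _
    simp [f]
  · rw [← CFC.complex_exp_eq_normedSpace_exp (cfc_predicate f A)]
    rw [← cfc_comp Complex.exp f A hn (Complex.continuous_exp.continuousOn) (hf f)]
    conv_rhs => rw [← cfc_id ℂ A]
    apply cfc_congr
    intro z hz
    have h1 : ‖z‖ = 1 := by
      have := spectrum.subset_circle_of_unitary hA hz
      simpa using this
    have := Complex.norm_mul_exp_arg_mul_I z
    rw [h1] at this
    simpa [f, mul_comm] using this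
  · intro B h1 h2
    exact h1.cfc h2 f

lemma exists_spec_ne_one {A : Matrix (Fin N) (Fin N) ℂ}
    (hA : A ∈ unitary (Matrix (Fin N) (Fin N) ℂ)) (h1 : A ≠ 1) :
    ∃ (l : ℂ) (v : Fin N → ℂ), l ≠ 1 ∧ ‖l‖ = 1 ∧ v ≠ 0 ∧ A *ᵥ v = l • v := by
  have hn : IsStarNormal A := ⟨by
    rw [commute_iff_eq, Unitary.star_mul_self_of_mem hA, Unitary.mul_star_self_of_mem hA]⟩
  by_contra hcon
  apply h1
  rw [← cfc_id ℂ A, ← cfc_one ℂ A]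
  apply cfc_congr
  intro z hz
  by_contra hz1
  apply hcon
  have hn1 : ‖z‖ = 1 := by
    have := spectrum.subset_circle_of_unitary hA hz
    simpa using this
  rw [← Matrix.spectrum_toLin'] at hz
  obtain ⟨v, hv⟩ := (Module.End.hasEigenvalue_iff_mem_spectrum.2 hz).exists_hasEigenvector
  exact ⟨z, v, hz1, hn1, hv.2, by simpa using hv.apply_eq_smul⟩

lemma exp_mulVec {Z : Matrix (Fin N) (Fin N) ℂ} {y : Fin N → ℂ} {m : ℂ}
    (h : Z *ᵥ y = m • y) : exp Z *ᵥ y = Complex.exp m • y := by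
  have hp : ∀ n : ℕ, (Z ^ n) *ᵥ y = m ^ n • y := by
    intro n
    induction n with
    | zero => simp
    | succ n ih => rw [pow_succ, ← mulVec_mulVec, h, mulVec_smul, ih, smul_smul, pow_succ, mul_comm]
  have h1 : HasSum (fun n : ℕ => ((n.factorial : ℂ)⁻¹) • Z ^ n) (exp Z) :=
    NormedSpace.exp_series_hasSum_exp' (𝕂 := ℂ) Z
  have h2 : HasSum (fun n : ℕ => ((n.factorial : ℂ)⁻¹) • m ^ n) (exp m) :=
    NormedSpace.exp_series_hasSum_exp' (𝕂 := ℂ) m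
  let L : Matrix (Fin N) (Fin N) ℂ →ₗ[ℂ] (Fin N → ℂ) :=
    { toFun := fun M => M *ᵥ y
      map_add' := fun a b => add_mulVec a b y
      map_smul' := fun c a => smul_mulVec c a y }
  have hL : Continuous L := L.continuous_of_finiteDimensional
  have h3 := h1.map L hL
  have h4 := h2.smul_const y
  rw [← Complex.exp_eq_exp_ℂ] at h4
  refine h3.unique ?_
  convert h4 using 1
  ext1 n
  change (((n.factorial : ℂ)⁻¹) • Z ^ n) *ᵥ y = _
  rw [smul_mulVec, hp, smul_smul, smul_eq_mul]

lemma exp_scalar (c : ℂ) :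
    exp (c • (1 : Matrix (Fin N) (Fin N) ℂ)) = Complex.exp c • (1 : Matrix (Fin N) (Fin N) ℂ) := by
  apply Matrix.ext_of_mulVec_single
  intro i
  rw [exp_mulVec (m := c) (by rw [smul_mulVec, one_mulVec]), smul_mulVec, one_mulVec]

lemma exp_add_scalar (c : ℂ) (X : Matrix (Fin N) (Fin N) ℂ) :
    exp (X + c • (1 : Matrix (Fin N) (Fin N) ℂ)) = Complex.exp c • exp X := by
  rw [Matrix.exp_add_of_commute _ _ ((Commute.one_right X).smul_right c), exp_scalar]
  simp

lemma det_exp_skew {X : Matrix (Fin N) (Fin N) ℂ} (hX : star X = -X) :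
    (exp X).det = Complex.exp X.trace := by
  have hY : (Complex.I • X).IsHermitian := by
    change star (Complex.I • X) = _
    rw [star_smul, hX]; simp
  let U : Matrix (Fin N) (Fin N) ℂ := hY.eigenvectorUnitary.1
  have hUu : U ∈ unitary (Matrix (Fin N) (Fin N) ℂ) := hY.eigenvectorUnitary.2
  have h2 : X = U * diagonal (fun i => -Complex.I * (hY.eigenvalues i : ℂ)) * star U := by
    have h1 : Complex.I • X = U * diagonal (fun i => (hY.eigenvalues i : ℂ)) * star U := by
      have h0 := hY.spectral_theorem
      rw [Unitary.conjStarAlgAut_apply] at h0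
      exact h0
    have h3 : X = (-Complex.I) • (Complex.I • X) := by simp [smul_smul]
    have h4 : diagonal (fun i => -Complex.I * (hY.eigenvalues i : ℂ)) =
        (-Complex.I) • diagonal (fun i => (hY.eigenvalues i : ℂ)) := by
      rw [← diagonal_smul]; rfl
    rw [h4]
    refine h3.trans ?_
    rw [mul_smul_comm, smul_mul_assoc]
    exact congrArg (fun M => (-Complex.I) • M) h1
  have hUd : U * star U = 1 := Unitary.mul_star_self_of_mem hUu
  have hUd' : star U * U = 1 := Unitary.star_mul_self_of_mem hUu
  have h5 : exp X = U * exp (diagonal (fun i => -Complex.I * (hY.eigenvalues i : ℂ))) * star U := by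
    conv_lhs => rw [h2]
    exact exp_conj_unitary hUu _
  have h6 : X.trace = ∑ i, -Complex.I * (hY.eigenvalues i : ℂ) := by
    conv_lhs => rw [h2]
    rw [trace_mul_comm, ← mul_assoc, hUd', one_mul, trace_diagonal]
  rw [h5, h6, det_mul_comm, ← mul_assoc, hUd', one_mul, Matrix.exp_diagonal, det_diagonal,
    Complex.exp_sum]
  apply Finset.prod_congr rfl
  intro i _
  rw [Pi.coe_exp, Complex.exp_eq_exp_ℂ]

end LogExp
end St12

namespace St12
open Module Matrix NormedSpace
open scoped Matrix.Norms.L2Operator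

section Symplectic

lemma J_sq : symplJ 4 * symplJ 4 = -1 := by
  ext i j
  fin_cases i <;> fin_cases j <;> simp [Matrix.mul_apply, Fin.sum_univ_four, symplJ, Matrix.one_apply]

lemma J_tr : (symplJ 4)ᵀ = -symplJ 4 := by
  ext i j
  fin_cases i <;> fin_cases j <;> simp [symplJ]

lemma J_star : (symplJ 4)ᴴ = -symplJ 4 := by
  ext i j
  fin_cases i <;> fin_cases j <;> simp [symplJ]

lemma J_map : (symplJ 4).map star = symplJ 4 := by
  ext i j
  fin_cases i <;> fin_cases j <;> simp [symplJ]

lemma starJ (v : Fin 4 → ℂ) : star (symplJ 4 *ᵥ v) = symplJ 4 *ᵥ star v := by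
  ext i
  fin_cases i <;> simp [symplJ, mulVec, dotProduct, Fin.sum_univ_four]

/-- Symplectic and unitary. -/
def SpU (A : Matrix (Fin 4) (Fin 4) ℂ) : Prop :=
  A ∈ unitary (Matrix (Fin 4) (Fin 4) ℂ) ∧ Aᵀ * symplJ 4 * A = symplJ 4

lemma SpU.one : SpU 1 := ⟨one_mem _, by simp⟩

lemma SpU.mul {A B : Matrix (Fin 4) (Fin 4) ℂ} (hA : SpU A) (hB : SpU B) : SpU (A * B) := by
  refine ⟨mul_mem hA.1 hB.1, ?_⟩
  have : (A * B)ᵀ * symplJ 4 * (A * B) = Bᵀ * (Aᵀ * symplJ 4 * A) * B := by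
    rw [transpose_mul]; noncomm_ring
  rw [this, hA.2, hB.2]

lemma SpU.exp {X : Matrix (Fin 4) (Fin 4) ℂ} (hs : star X = -X) (hX : IsSp 4 X) :
    SpU (exp X) := by
  refine ⟨exp_unitary hs, ?_⟩
  have hu : IsUnit (symplJ 4) := by
    refine ⟨⟨symplJ 4, -symplJ 4, ?_, ?_⟩, rfl⟩ <;> simp [J_sq]
  have h1 : X.transpose * symplJ 4 = symplJ 4 * (-X) := by
    have : Xᵀ * symplJ 4 + symplJ 4 * X = 0 := hX
    rw [mul_neg]; exact eq_neg_of_add_eq_zero_left this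
  have hi : (symplJ 4)⁻¹ = -symplJ 4 := by
    apply Matrix.inv_eq_right_inv; simp [J_sq]
  have h2 : Xᵀ = symplJ 4 * (-X) * (symplJ 4)⁻¹ := by
    rw [← h1, hi, mul_assoc, mul_neg, J_sq]; simp
  have h3 : (NormedSpace.exp X)ᵀ = symplJ 4 * NormedSpace.exp (-X) * (symplJ 4)⁻¹ := by
    rw [← Matrix.exp_transpose, h2, Matrix.exp_conj _ _ hu]
  have h4 : (symplJ 4)⁻¹ * symplJ 4 = 1 := by rw [hi]; simp [J_sq]
  rw [h3, mul_assoc (symplJ 4 * _), h4, mul_one, mul_assoc, exp_neg_mul, mul_one]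

/-- the fixed space -/
def fixS (A : Matrix (Fin 4) (Fin 4) ℂ) : Submodule ℂ (Fin 4 → ℂ) where
  carrier := {v | A *ᵥ v = v}
  zero_mem' := by simp
  add_mem' := by
    intro a b ha hb
    simp only [Set.mem_setOf_eq] at *
    rw [mulVec_add, ha, hb]
  smul_mem' := by
    intro c a ha
    simp only [Set.mem_setOf_eq] at *
    rw [mulVec_smul, ha]

lemma mem_fixS {A : Matrix (Fin 4) (Fin 4) ℂ} {v} : v ∈ fixS A ↔ A *ᵥ v = v := Iff.rfl

lemma orth_fix {A : Matrix (Fin 4) (Fin 4) ℂ} (hA : A ∈ unitary (Matrix (Fin 4) (Fin 4) ℂ))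
    {l : ℂ} (hl : l ≠ 1) {v y : Fin 4 → ℂ} (hv : A *ᵥ v = l • v) (hy : A *ᵥ y = y) :
    star v ⬝ᵥ y = 0 := by
  have h1 : star (A *ᵥ v) ⬝ᵥ (A *ᵥ y) = star v ⬝ᵥ y := by
    have h2 := ip_adj Aᴴ v (A *ᵥ y)
    rw [conjTranspose_conjTranspose, mulVec_mulVec] at h2
    rw [h2]
    have : Aᴴ * A = 1 := Unitary.star_mul_self_of_mem hA
    rw [this, one_mulVec]
  rw [hv, hy, star_smul, smul_dotProduct, smul_eq_mul] at h1
  have h3 : (star l - 1) * (star v ⬝ᵥ y) = 0 := by rw [sub_mul, h1]; ring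
  rcases mul_eq_zero.1 h3 with h | h
  · exfalso; apply hl
    have : star l = 1 := sub_eq_zero.1 h
    simpa using congrArg star this
  · exact h

lemma sp_step {A : Matrix (Fin 4) (Fin 4) ℂ} (hA : SpU A) (h1 : A ≠ 1) :
    ∃ Z : Matrix (Fin 4) (Fin 4) ℂ, star Z = -Z ∧ IsSp 4 Z ∧ fixS A < fixS (exp Z * A) := by
  obtain ⟨l, v0, hl, hl1, hv0, hAv0⟩ := exists_spec_ne_one hA.1 h1
  obtain ⟨c, hc, hcs, hcc⟩ := exists_unit hv0
  obtain ⟨v, hvd⟩ : ∃ v, v = c • v0 := ⟨_, rfl⟩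
  have hvv : star v ⬝ᵥ v = 1 := by
    rw [hvd, star_smul, smul_dotProduct, dotProduct_smul, hcs, smul_eq_mul, smul_eq_mul, ← mul_assoc, hcc]
  have hv : A *ᵥ v = l • v := by rw [hvd, mulVec_smul, hAv0, smul_comm]
  let J := symplJ 4
  have hJJ : ∀ x : Fin 4 → ℂ, J *ᵥ (J *ᵥ x) = -x := by
    intro x; rw [mulVec_mulVec, J_sq, neg_mulVec, one_mulVec]
  obtain ⟨w, hw⟩ : ∃ w, w = J *ᵥ star v := ⟨_, rfl⟩
  have hAc : (A.map star)ᵀ = Aᴴ := rfl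
  have hAJ : J * A = A.map star * J := by
    have e1 : A.map star * Aᵀ = 1 := by
      have : A * Aᴴ = 1 := Unitary.mul_star_self_of_mem hA.1
      have h := congrArg (fun M : Matrix (Fin 4) (Fin 4) ℂ => M.map star) this
      have e2 : (A * Aᴴ).map star = A.map star * Aᵀ := by
        ext i j
        simp [Matrix.mul_apply]
      have e3 : (1 : Matrix (Fin 4) (Fin 4) ℂ).map star = 1 := by
        ext i j; simp [Matrix.one_apply, apply_ite]
      simp only [e2, e3] at h
      exact h
    calc J * A = (A.map star * Aᵀ) * (J * A) := by rw [e1, one_mul]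
      _ = A.map star * (Aᵀ * J * A) := by simp only [mul_assoc]
      _ = _ := by rw [hA.2]
  have hcv : ∀ x, star (A *ᵥ x) = A.map star *ᵥ star x := by
    intro x; ext i; simp [mulVec, dotProduct]
  have hwe : A *ᵥ w = star l • w := by
    have e1 : J *ᵥ (A *ᵥ w) = A.map star *ᵥ (J *ᵥ w) := by
      rw [mulVec_mulVec, hAJ, mulVec_mulVec]
    rw [hw, hJJ, mulVec_neg, ← hcv, hv, star_smul] at e1
    have e2 := congrArg (fun x => J *ᵥ x) e1
    simp only [hJJ, mulVec_neg, mulVec_smul] at e2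
    rw [hw]
    simpa using congrArg (fun x => -x) e2
  have hls : star l ≠ 1 := by
    intro h; apply hl; simpa using congrArg star h
  have hvw : star v ⬝ᵥ w = 0 := by
    rw [hw]
    have h : star v ⬝ᵥ J *ᵥ star v = -(star v ⬝ᵥ J *ᵥ star v) := by
      conv_lhs => rw [dotProduct_mulVec, ← mulVec_transpose, J_tr, neg_mulVec, neg_dotProduct,
        dotProduct_comm]
    have : (2 : ℂ) * (star v ⬝ᵥ J *ᵥ star v) = 0 := by linear_combination h
    simpa using this
  have hwv : star w ⬝ᵥ v = 0 := ip_flip hvw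
  let t : ℂ := -(Complex.I * (Complex.arg l : ℂ))
  have ht : star t = -t := by simp [t]
  have htl : Complex.exp t * l = 1 := by
    have := Complex.norm_mul_exp_arg_mul_I l
    rw [hl1] at this
    simp only [t, Complex.exp_neg]
    rw [mul_comm Complex.I]
    rw [Complex.ofReal_one, one_mul] at this
    rw [this]
    apply inv_mul_cancel₀
    rintro rfl
    simp at hl1
  refine ⟨t • (kk v v - kk w w), ?_, ?_, ?_⟩
  · change (t • (kk v v - kk w w))ᴴ = _
    rw [conjTranspose_smul, conjTranspose_sub, kk_conj, kk_conj, ht, neg_smul]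
  · have e1 : (kk v v)ᵀ * J = -kk (star v) (J *ᵥ star v) := by
      have : (kk v v)ᵀ = kk (star v) (star v) := by
        ext i j; simp [kk, vecMulVec_apply, mul_comm]
      rw [this, kk_mul, J_star, neg_mulVec, kk_neg_right]
    have e2 : (kk w w)ᵀ * J = -kk (star w) (J *ᵥ star w) := by
      have : (kk w w)ᵀ = kk (star w) (star w) := by
        ext i j; simp [kk, vecMulVec_apply, mul_comm]
      rw [this, kk_mul, J_star, neg_mulVec, kk_neg_right]
    have e3 : star w = J *ᵥ v := by rw [hw, starJ, star_star]
    have e4 : J *ᵥ star w = -v := by rw [e3, hJJ]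
    have e5 : J *ᵥ w = -star v := by rw [hw, hJJ]
    change (t • (kk v v - kk w w))ᵀ * J + J * (t • (kk v v - kk w w)) = 0
    rw [transpose_smul, transpose_sub, smul_mul_assoc, mul_smul_comm, sub_mul, mul_sub, e1, e2,
      mul_kk, mul_kk, e4, e5, e3, ← hw, kk_neg_left, kk_neg_right]
    module
  · have hZ : ∀ y, (t • (kk v v - kk w w)) *ᵥ y =
        t • ((star v ⬝ᵥ y) • v - (star w ⬝ᵥ y) • w) := by
      intro y
      rw [smul_mulVec, sub_mulVec, kk_mulVec, kk_mulVec]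
    refine lt_of_le_of_ne ?_ ?_
    · intro y hy
      rw [mem_fixS] at hy ⊢
      rw [← mulVec_mulVec, hy]
      rw [exp_mulVec (m := 0) (by
        rw [hZ, orth_fix hA.1 hl hv hy, orth_fix hA.1 hls hwe hy]; simp)]
      simp
    · intro heq
      have : v ∈ fixS A := by
        rw [heq, mem_fixS, ← mulVec_mulVec, hv, mulVec_smul, exp_mulVec (m := t) (by
          rw [hZ, hvv, hwv]; simp), smul_smul, mul_comm, htl, one_smul]
      have hy := orth_fix hA.1 hl hv this
      rw [hvv] at hy
      exact one_ne_zero hy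

/-- Compact symplectic group is generated by exponentials. -/
lemma sp_gen {S : Set (Matrix (Fin 4) (Fin 4) ℂ)} (h1 : 1 ∈ S)
    (hm : ∀ A ∈ S, ∀ Z : Matrix (Fin 4) (Fin 4) ℂ, star Z = -Z → IsSp 4 Z → exp Z * A ∈ S)
    {A : Matrix (Fin 4) (Fin 4) ℂ} (hA : SpU A) : A ∈ S := by
  have key : ∀ n : ℕ, ∀ A, SpU A → 4 - finrank ℂ (fixS A) ≤ n → A ∈ S := by
    intro n
    induction n with
    | zero =>
      intro A hA hn
      by_cases hA1 : A = 1
      · rwa [hA1]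
      · exfalso
        obtain ⟨Z, hZ, hZs, hlt⟩ := sp_step hA hA1
        have := Submodule.finrank_lt_finrank_of_lt hlt
        have h4 := Submodule.finrank_le (fixS (exp Z * A))
        simp at h4
        omega
    | succ n ih =>
      intro A hA hn
      by_cases hA1 : A = 1
      · rwa [hA1]
      · obtain ⟨Z, hZ, hZs, hlt⟩ := sp_step hA hA1
        have := Submodule.finrank_lt_finrank_of_lt hlt
        have h5 := ih _ ((SpU.exp hZ hZs).mul hA) (by omega)
        have h6 := hm _ h5 (-Z) (by rw [star_neg, hZ]) (by
          have : Zᵀ * symplJ 4 + symplJ 4 * Z = 0 := hZs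
          change (-Z)ᵀ * symplJ 4 + symplJ 4 * (-Z) = 0
          rw [transpose_neg, neg_mul, mul_neg, ← neg_add, this, neg_zero])
        rwa [← mul_assoc, exp_neg_mul, one_mul] at h6
  exact key _ A hA le_rfl

end Symplectic
end St12

namespace St12
open Module Matrix NormedSpace
open scoped Matrix.Norms.L2Operator

section Cases
variable {N : ℕ} {K : Set (Matrix (Fin N) (Fin N) ℂ)}

lemma CG.skewH (hK : CG K) : ∀ X ∈ hK.lie, Xᴴ = -X := fun _ hX => hK.skew hX

/-- commutant case -/
lemma case_comm (hK : CG K) (hc : IsPreconnected K) {P : Matrix (Fin N) (Fin N) ℂ}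
    (hP : star P = P) (hg : ∀ X, X ∈ cplx hK.lie ↔ Commute X P)
    (A : Matrix (Fin N) (Fin N) ℂ) (hA : A ∈ unitary (Matrix (Fin N) (Fin N) ℂ)) :
    A ∈ K ↔ Commute A P := by
  constructor
  · refine fun h => hK.gen hc {A | Commute A P} (Commute.one_left P) ?_ h
    intro a ha X hX
    have hX' : Commute X P := (hg X).1 (le_cplx hX)
    exact Commute.mul_left ha hX'.exp_left
  · intro h
    obtain ⟨X, hXs, hXe, hXc⟩ := log_unitary A hA
    have h2 : Commute (star A) P := by
      have := h.star_star
      rwa [hP] at this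
    have h3 := (hg X).2 (hXc P h h2)
    rw [← hXe]
    exact hK.exp_lie (cplx_skew hK.skewH h3 hXs)

lemma case_red (hK : CG K) (hc : IsPreconnected K) {U : Matrix (Fin N) (Fin N) ℂ}
    (hU : U ∈ unitary (Matrix (Fin N) (Fin N) ℂ))
    (hg : ∀ X, X ∈ cplx hK.lie ↔ ∀ i j : Fin N, ¬(((i:ℕ) = N-1) ↔ ((j:ℕ) = N-1)) →
      (U * X * star U) i j = 0)
    (A : Matrix (Fin N) (Fin N) ℂ) (hA : A ∈ unitary (Matrix (Fin N) (Fin N) ℂ)) :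
    A ∈ K ↔ ∀ i j : Fin N, ¬(((i:ℕ) = N-1) ↔ ((j:ℕ) = N-1)) → (U * A * star U) i j = 0 := by
  let P : Matrix (Fin N) (Fin N) ℂ := diagonal (fun i : Fin N => if (i:ℕ) = N-1 then 1 else 0)
  have hUs : star U * U = 1 := Unitary.star_mul_self_of_mem hU
  have hUs' : U * star U = 1 := Unitary.mul_star_self_of_mem hU
  have hP : star P = P := by
    change (diagonal _)ᴴ = diagonal _
    rw [diagonal_conjTranspose]
    congr 1
    ext i
    by_cases h : (i:ℕ) = N-1 <;> simp [h]
  have h1 : ∀ B : Matrix (Fin N) (Fin N) ℂ,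
      (∀ i j : Fin N, ¬(((i:ℕ) = N-1) ↔ ((j:ℕ) = N-1)) → B i j = 0) ↔ Commute B P := by
    intro B
    rw [commute_iff_eq]
    constructor
    · intro h
      ext i j
      simp only [P, mul_diagonal, diagonal_mul]
      have := h i j
      by_cases hi : (i:ℕ) = N-1 <;> by_cases hj : (j:ℕ) = N-1 <;> simp [hi, hj] at this ⊢ <;>
        first | exact this | exact this.symm
    · intro h i j hij
      have := congrFun (congrFun h i) j
      simp only [P, mul_diagonal, diagonal_mul] at this
      by_cases hi : (i:ℕ) = N-1 <;> by_cases hj : (j:ℕ) = N-1 <;> simp [hi, hj] at this hij ⊢ <;>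
        first | exact this | exact this.symm
  have h2 : ∀ B : Matrix (Fin N) (Fin N) ℂ, Commute (U * B * star U) P ↔
      Commute B (star U * P * U) := by
    intro B
    rw [commute_iff_eq, commute_iff_eq]
    constructor
    · intro h
      calc B * (star U * P * U) = (star U * U) * (B * (star U * P * U)) := by rw [hUs, one_mul]
        _ = star U * ((U * B * star U) * P) * U := by simp only [mul_assoc]
        _ = star U * P * U * B * (star U * U) := by rw [h]; simp only [mul_assoc]
        _ = _ := by rw [hUs, mul_one]
    · intro h
      calc (U * B * star U) * P = (U * B * star U) * P * (U * star U) := by rw [hUs', mul_one]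
        _ = U * (B * (star U * P * U)) * star U := by simp only [mul_assoc]
        _ = (U * star U) * P * (U * B * star U) := by rw [h]; simp only [mul_assoc]
        _ = _ := by rw [hUs', one_mul]
  rw [h1, h2]
  refine case_comm hK hc ?_ ?_ A hA
  · simp only [star_mul, star_star, hP, mul_assoc]
  · intro X
    rw [hg, h1, h2]

lemma case_top (hK : CG K) (hg : ∀ X : Matrix (Fin N) (Fin N) ℂ, X.trace = 0 → X ∈ cplx hK.lie)
    {X : Matrix (Fin N) (Fin N) ℂ} (hX : X ∈ hK.lie) (hX0 : X.trace ≠ 0)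
    (A : Matrix (Fin N) (Fin N) ℂ) (hA : A ∈ unitary (Matrix (Fin N) (Fin N) ℂ)) : A ∈ K := by
  obtain ⟨Y, hYs, hYe, -⟩ := log_unitary A hA
  rw [← hYe]
  refine hK.exp_lie (cplx_skew hK.skewH ?_ hYs)
  have h1 := hg (Y - (Y.trace / X.trace) • X) (by
    rw [trace_sub, trace_smul, smul_eq_mul, div_mul_cancel₀ _ hX0, sub_self])
  have h2 := (cplx hK.lie).add_mem h1 ((cplx hK.lie).smul_mem (Y.trace / X.trace) (le_cplx hX))
  simpa using h2

lemma case_sl (hN : 2 ≤ N) (hK : CG K) (hc : IsPreconnected K)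
    (hg : ∀ X : Matrix (Fin N) (Fin N) ℂ, X.trace = 0 → X ∈ cplx hK.lie)
    (ht : ∀ X ∈ hK.lie, X.trace = 0)
    (A : Matrix (Fin N) (Fin N) ℂ) (hA : A ∈ unitary (Matrix (Fin N) (Fin N) ℂ)) :
    A ∈ K ↔ A.det = 1 := by
  constructor
  · refine fun h => hK.gen hc {A | A.det = 1} (by simp) ?_ h
    intro a ha X hX
    have ha' : a.det = 1 := ha
    change (a * exp X).det = 1
    rw [det_mul, ha', det_exp_skew (hK.skew hX), ht X hX]
    simp
  · intro h
    obtain ⟨X, hXs, hXe, -⟩ := log_unitary A hA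
    rw [← hXe, det_exp_skew hXs, Complex.exp_eq_one_iff] at h
    obtain ⟨k, hk⟩ := h
    have hN0 : (N : ℂ) ≠ 0 := by
      have : N ≠ 0 := by omega
      exact_mod_cast this
    obtain ⟨c, hcd⟩ : ∃ c : ℂ, c = X.trace / N := ⟨_, rfl⟩
    have hcN : c * N = k * (2 * Real.pi * Complex.I) := by
      rw [hcd, div_mul_cancel₀ _ hN0, hk]
    have hcs : star c = -c := by
      rw [hcd, hk]
      simp
      ring
    have h0 : X - c • 1 ∈ hK.lie := by
      refine cplx_skew hK.skewH (hg _ ?_) ?_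
      · rw [trace_sub, trace_smul, trace_one, hcd, smul_eq_mul, Fintype.card_fin,
          div_mul_cancel₀ _ hN0, sub_self]
      · change star (X - c • (1 : Matrix (Fin N) (Fin N) ℂ)) = _
        rw [star_sub, star_smul, hXs, hcs, star_one]
        module
    have hX : exp X = Complex.exp c • exp (X - c • 1) := by
      rw [← exp_add_scalar]
      simp
    let i0 : Fin N := ⟨0, by omega⟩
    let D : Matrix (Fin N) (Fin N) ℂ := diagonal (fun i => if i = i0 then c - c * N else c)
    have hD : D ∈ hK.lie := by
      refine cplx_skew hK.skewH (hg _ ?_) ?_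
      · simp only [D, trace_diagonal]
        have : ∀ i : Fin N, (if i = i0 then c - c * N else c) = c - if i = i0 then c * N else 0 := by
          intro i
          by_cases h : i = i0 <;> simp [h]
        simp_rw [this]
        rw [Finset.sum_sub_distrib]
        simp
        ring
      · simp only [D]
        rw [diagonal_conjTranspose, diagonal_neg]
        congr 1
        ext i
        by_cases h : i = i0
        · simp only [Pi.star_apply, Pi.neg_apply, h, if_true, star_sub, star_mul', hcs]
          simp
          ring
        · simp only [Pi.star_apply, Pi.neg_apply, h, if_false, hcs]
    have hDe : exp D = Complex.exp c • (1 : Matrix (Fin N) (Fin N) ℂ) := by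
      apply Matrix.ext_of_mulVec_single
      intro i
      rw [exp_mulVec (m := if i = i0 then c - c * N else c) (by
        ext j
        simp only [D, mulVec_diagonal, Pi.smul_apply, smul_eq_mul, Pi.single_apply]
        by_cases h : j = i <;> simp [h]), smul_mulVec, one_mulVec]
      congr 1
      by_cases h : i = i0
      · rw [if_pos h, Complex.exp_sub, hcN, Complex.exp_int_mul_two_pi_mul_I, div_one]
      · rw [if_neg h]
    have h5 := hK.mul _ (hK.exp_lie hD) _ (hK.exp_lie h0)
    rw [hDe, smul_mul_assoc, one_mul, ← hX, hXe] at h5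
    exact h5

end Cases

section SpCase
variable {K : Set (Matrix (Fin 4) (Fin 4) ℂ)}

lemma IsSp.trace {X : Matrix (Fin 4) (Fin 4) ℂ} (h : IsSp 4 X) : X.trace = 0 := by
  have h' : Xᵀ * symplJ 4 + symplJ 4 * X = 0 := h
  have h1 : X = symplJ 4 * Xᵀ * symplJ 4 := by
    have h2 : symplJ 4 * (Xᵀ * symplJ 4 + symplJ 4 * X) = 0 := by rw [h', mul_zero]
    rw [mul_add, ← mul_assoc, ← mul_assoc, J_sq, neg_mul, one_mul] at h2
    exact (add_neg_eq_zero.1 h2).symm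
  have h3 : X.trace = -X.trace := by
    conv_lhs => rw [h1, trace_mul_comm, ← mul_assoc, J_sq, neg_mul, one_mul, trace_neg,
      trace_transpose]
  have : (2:ℂ) * X.trace = 0 := by linear_combination h3
  simpa using this

lemma sp_sub (hK : CG K) {U : Matrix (Fin 4) (Fin 4) ℂ}
    (hU : U ∈ unitary (Matrix (Fin 4) (Fin 4) ℂ))
    (hg1 : ∀ X, IsSp 4 X → star U * X * U ∈ cplx hK.lie)
    {B : Matrix (Fin 4) (Fin 4) ℂ} (hB : SpU B) : star U * B * U ∈ K := by
  have hUs : star U * U = 1 := Unitary.star_mul_self_of_mem hU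
  have hUs' : U * star U = 1 := Unitary.mul_star_self_of_mem hU
  refine sp_gen (S := {B | star U * B * U ∈ K}) ?_ ?_ hB
  · change star U * 1 * U ∈ K
    rw [mul_one, hUs]; exact hK.one
  · intro A hA Z hZ hZs
    have hA' : star U * A * U ∈ K := hA
    have h1 : exp (star U * Z * U) ∈ K := by
      refine hK.exp_lie (cplx_skew hK.skewH (hg1 Z hZs) ?_)
      change star (star U * Z * U) = _
      simp only [star_mul, star_star, hZ, mul_assoc, neg_mul, mul_neg]
    have h2 := exp_conj_unitary (Unitary.star_mem hU) Z
    rw [star_star] at h2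
    rw [h2] at h1
    have h3 := hK.mul _ h1 _ hA'
    have h4 : star U * exp Z * U * (star U * A * U) = star U * (exp Z * A) * U := by
      calc star U * exp Z * U * (star U * A * U) = star U * exp Z * (U * star U) * A * U := by
            simp only [mul_assoc]
        _ = _ := by rw [hUs']; simp only [mul_one, mul_assoc]
    rw [h4] at h3
    exact h3

lemma conj_mul_exp {U : Matrix (Fin 4) (Fin 4) ℂ}
    (hU : U ∈ unitary (Matrix (Fin 4) (Fin 4) ℂ)) (a X : Matrix (Fin 4) (Fin 4) ℂ) :
    U * (a * exp X) * star U = (U * a * star U) * exp (U * X * star U) := by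
  have hUs : star U * U = 1 := Unitary.star_mul_self_of_mem hU
  rw [exp_conj_unitary hU]
  calc U * (a * exp X) * star U = U * a * 1 * exp X * star U := by simp only [mul_one, mul_assoc]
    _ = _ := by rw [← hUs]; simp only [mul_assoc]

lemma conj_back {U : Matrix (Fin 4) (Fin 4) ℂ}
    (hU : U ∈ unitary (Matrix (Fin 4) (Fin 4) ℂ)) (A : Matrix (Fin 4) (Fin 4) ℂ) :
    star U * (U * A * star U) * U = A := by
  have hUs : star U * U = 1 := Unitary.star_mul_self_of_mem hU
  calc star U * (U * A * star U) * U = (star U * U) * A * (star U * U) := by simp only [mul_assoc]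
    _ = A := by rw [hUs]; simp

lemma case_sp (hK : CG K) (hc : IsPreconnected K) {U : Matrix (Fin 4) (Fin 4) ℂ}
    (hU : U ∈ unitary (Matrix (Fin 4) (Fin 4) ℂ))
    (hg1 : ∀ X, IsSp 4 X → star U * X * U ∈ cplx hK.lie)
    (hs : ∀ X ∈ hK.lie, IsSp 4 (U * X * star U))
    (A : Matrix (Fin 4) (Fin 4) ℂ) : A ∈ K ↔ SpU (U * A * star U) := by
  have hUs' : U * star U = 1 := Unitary.mul_star_self_of_mem hU
  constructor
  · refine fun h => hK.gen hc {A | SpU (U * A * star U)} ?_ ?_ h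
    · change SpU (U * 1 * star U)
      rw [mul_one, hUs']; exact SpU.one
    · intro a ha X hX
      have ha' : SpU (U * a * star U) := ha
      change SpU (U * (a * exp X) * star U)
      rw [conj_mul_exp hU]
      refine ha'.mul (SpU.exp ?_ (hs X hX))
      simp only [star_mul, star_star, hK.skew hX, mul_assoc, neg_mul, mul_neg]
  · intro h
    have := sp_sub hK hU hg1 h
    rwa [conj_back hU] at this

lemma case_esp (hK : CG K) (hc : IsPreconnected K) {U : Matrix (Fin 4) (Fin 4) ℂ}
    (hU : U ∈ unitary (Matrix (Fin 4) (Fin 4) ℂ))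
    (hg1 : ∀ X, IsSp 4 X → star U * X * U ∈ cplx hK.lie)
    (hg2 : ∀ X ∈ cplx hK.lie, ∃ c : ℂ, IsSp 4 (U * X * star U - c • 1))
    {X0 : Matrix (Fin 4) (Fin 4) ℂ} (hX0 : X0 ∈ hK.lie) (hX0s : ¬ IsSp 4 (U * X0 * star U))
    (A : Matrix (Fin 4) (Fin 4) ℂ) :
    A ∈ K ↔ ∃ t : ℝ, ∃ B, SpU B ∧ U * A * star U = Complex.exp (t * Complex.I) • B := by
  have hUs : star U * U = 1 := Unitary.star_mul_self_of_mem hU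
  have hUs' : U * star U = 1 := Unitary.mul_star_self_of_mem hU
  have h1 : (1 : Matrix (Fin 4) (Fin 4) ℂ) ∈ cplx hK.lie := by
    obtain ⟨c, hcs⟩ := hg2 X0 (le_cplx hX0)
    have hc0 : c ≠ 0 := by
      rintro rfl
      apply hX0s
      simpa using hcs
    have h2 := hg1 _ hcs
    rw [mul_sub, sub_mul, conj_back hU, mul_smul_comm, smul_mul_assoc, mul_one, hUs] at h2
    have h3 := (cplx hK.lie).sub_mem (le_cplx hX0) h2
    rw [sub_sub_cancel] at h3
    have h4 := (cplx hK.lie).smul_mem c⁻¹ h3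
    rwa [smul_smul, inv_mul_cancel₀ hc0, one_smul] at h4
  constructor
  · refine fun h => hK.gen hc
      {A | ∃ t : ℝ, ∃ B, SpU B ∧ U * A * star U = Complex.exp (t * Complex.I) • B} ?_ ?_ h
    · refine ⟨0, 1, SpU.one, ?_⟩
      rw [mul_one, hUs']; simp
    · rintro a ⟨t, B, hB, hat⟩ X hX
      obtain ⟨c, hcs⟩ := hg2 X (le_cplx hX)
      have hXs := hK.skew hX
      have htr : X.trace = 4 * c := by
        have h2 := hcs.trace
        rw [trace_sub, trace_mul_comm, ← mul_assoc, hUs, one_mul, trace_smul, trace_one] at h2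
        simp at h2
        linear_combination h2
      have hcc : star c = -c := by
        have h3 : star X.trace = -X.trace := by
          rw [← trace_conjTranspose]
          change (star X).trace = _
          rw [hXs, trace_neg]
        rw [htr, star_mul'] at h3
        have h3' : (4 : ℂ) * star c = -(4 * c) := by simpa using h3
        have h4 : (4 : ℂ) * (star c + c) = 0 := by linear_combination h3'
        have h5 : star c + c = 0 := by simpa using h4
        exact eq_neg_of_add_eq_zero_left h5
      have hci : c = (c.im : ℂ) * Complex.I := by
        have h6 := congrArg Complex.re hcc
        simp at h6
        have h7 : c.re = 0 := by linarith
        apply Complex.ext <;> simp [h7]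
      have hYs : star (U * X * star U - c • 1) = -(U * X * star U - c • 1) := by
        rw [star_sub, star_smul, hcc, star_one]
        simp only [star_mul, star_star, hXs, mul_assoc, neg_mul, mul_neg]
        module
      refine ⟨t + c.im, B * exp (U * X * star U - c • 1), hB.mul (SpU.exp hYs hcs), ?_⟩
      rw [conj_mul_exp hU, hat]
      have h8 : exp (U * X * star U) = Complex.exp c • exp (U * X * star U - c • 1) := by
        rw [← exp_add_scalar]; simp
      rw [h8, smul_mul_assoc, mul_smul_comm, smul_smul, ← Complex.exp_add]
      congr 2
      conv_lhs => rw [hci]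
      push_cast
      ring
  · rintro ⟨t, B, hB, hAB⟩
    have h2 := sp_sub hK hU hg1 hB
    have h3 : exp (((t : ℂ) * Complex.I) • (1 : Matrix (Fin 4) (Fin 4) ℂ)) ∈ K := by
      refine hK.exp_lie (cplx_skew hK.skewH ((cplx hK.lie).smul_mem _ h1) ?_)
      change star (((t : ℂ) * Complex.I) • (1 : Matrix (Fin 4) (Fin 4) ℂ)) = _
      rw [star_smul, star_one, ← neg_smul]
      congr 1
      simp
    rw [exp_scalar] at h3
    have h4 := hK.mul _ h3 _ h2
    have h5 : A = Complex.exp (t * Complex.I) • (1 : Matrix (Fin 4) (Fin 4) ℂ) * (star U * B * U) := by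
      rw [← conj_back hU A, hAB, smul_mul_assoc, one_mul, mul_smul_comm, smul_mul_assoc]
    rw [h5]
    exact h4

end SpCase
end St12

namespace St12
open scoped Matrix.Norms.L2Operator
open scoped ENNReal

set_option maxHeartbeats 1000000 in
/-- Auxiliary copy. -/
theorem main_aux {N : ℕ} (hN : 2 ≤ N)
    (H : Subgroup ↥(Matrix.unitaryGroup (Fin N) ℂ))
    (hclosed : IsClosed (H : Set ↥(Matrix.unitaryGroup (Fin N) ℂ)))
    (hconn : IsConnected (H : Set ↥(Matrix.unitaryGroup (Fin N) ℂ)))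
    (hdim : ((N ^ 2 - 2 * N + 2 : ℕ) : ℝ≥0∞) ≤ unitarySubgroupDim N H) :
    H = ⊤ ∨
    (H : Set ↥(Matrix.unitaryGroup (Fin N) ℂ)) =
      {A : ↥(Matrix.unitaryGroup (Fin N) ℂ) | (A : Matrix (Fin N) (Fin N) ℂ).det = 1} ∨
    (∃ U : ↥(Matrix.unitaryGroup (Fin N) ℂ),
      (fun A => U * A * U⁻¹) '' (H : Set ↥(Matrix.unitaryGroup (Fin N) ℂ)) =
        blockDiagSet N) ∨
    (N = 4 ∧ ∃ U : ↥(Matrix.unitaryGroup (Fin N) ℂ),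
      (fun A => U * A * U⁻¹) '' (H : Set ↥(Matrix.unitaryGroup (Fin N) ℂ)) = spSet N ∨
      (fun A => U * A * U⁻¹) '' (H : Set ↥(Matrix.unitaryGroup (Fin N) ℂ)) = eSpSet N) := by
  let K : Set (Matrix (Fin N) (Fin N) ℂ) :=
    (Subtype.val : ↥(Matrix.unitaryGroup (Fin N) ℂ) → Matrix (Fin N) (Fin N) ℂ) ''
      (H : Set ↥(Matrix.unitaryGroup (Fin N) ℂ))
  have hKmem : ∀ A : ↥(Matrix.unitaryGroup (Fin N) ℂ),
      (A : Matrix (Fin N) (Fin N) ℂ) ∈ K ↔ A ∈ H := by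
    intro A
    constructor
    · rintro ⟨B, hB, hBA⟩
      rwa [← Subtype.ext hBA]
    · exact fun h => ⟨A, h, rfl⟩
  have hUcl : IsClosed (Matrix.unitaryGroup (Fin N) ℂ : Set (Matrix (Fin N) (Fin N) ℂ)) :=
    isClosed_unitary
  have hKcl : IsClosed K := hUcl.isClosedEmbedding_subtypeVal.isClosedMap _ hclosed
  have hK : CG K := by
    refine ⟨⟨1, H.one_mem, rfl⟩, ?_, ?_, ?_, hKcl⟩
    · rintro _ ⟨A, hA, rfl⟩ _ ⟨B, hB, rfl⟩
      exact ⟨A * B, H.mul_mem hA hB, rfl⟩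
    · rintro _ ⟨A, hA, rfl⟩
      exact ⟨A⁻¹, H.inv_mem hA, rfl⟩
    · rintro _ ⟨A, hA, rfl⟩
      exact A.2
  have hKc : IsPreconnected K :=
    hconn.isPreconnected.image _ continuous_subtype_val.continuousOn
  have hfr : N ^ 2 - 2 * N + 2 ≤ Module.finrank ℂ (cplx hK.lie) := by
    let f0 : Matrix (Fin N) (Fin N) ℂ →ₗ[ℝ] (Fin N → Fin N → ℂ) :=
      { toFun := fun M i j => M i j
        map_add' := fun _ _ => rfl
        map_smul' := fun _ _ => rfl }
    let f : Matrix (Fin N) (Fin N) ℂ →L[ℝ] (Fin N → Fin N → ℂ) := LinearMap.toContinuousLinearMap f0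
    have h1 := hK.dim_le f
    have h2 : unitarySubgroupDim N H = dimH (f '' K) := by
      unfold unitarySubgroupDim
      congr 1
      rw [Set.image_image]
      rfl
    rw [h2] at hdim
    have h3 := hdim.trans h1
    have h4 : N ^ 2 - 2 * N + 2 ≤ Module.finrank ℝ hK.lie := by exact_mod_cast h3
    exact h4.trans (cplx_finrank hK.skewH)
  have hlie := cplx_lie (h := hK.lie) (fun X hX Y hY => hK.bracket hX hY)
  have hstar := cplx_star hK.skewH
  have conjEq : ∀ (U : ↥(Matrix.unitaryGroup (Fin N) ℂ)) (T : Set ↥(Matrix.unitaryGroup (Fin N) ℂ)),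
      (∀ A : ↥(Matrix.unitaryGroup (Fin N) ℂ), A ∈ H ↔ U * A * U⁻¹ ∈ T) →
      (fun A => U * A * U⁻¹) '' (H : Set ↥(Matrix.unitaryGroup (Fin N) ℂ)) = T := by
    intro U T hT
    ext B
    constructor
    · rintro ⟨A, hA, rfl⟩
      exact (hT A).1 hA
    · intro hB
      refine ⟨U⁻¹ * B * U, (hT _).2 ?_, ?_⟩
      · have : U * (U⁻¹ * B * U) * U⁻¹ = B := by group
        rwa [this]
      · change U * (U⁻¹ * B * U) * U⁻¹ = B
        group
  by_cases hirr : ∀ V : Submodule ℂ (Fin N → ℂ),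
      (∀ X ∈ cplx hK.lie, ∀ v ∈ V, X.mulVec v ∈ V) → V = ⊥ ∨ V = ⊤
  · rcases irr_classification hN (cplx hK.lie) hlie hstar hirr hfr with hsl | ⟨h4, U, hU, hg1, hg2⟩
    · by_cases ht : ∀ X ∈ hK.lie, X.trace = 0
      · right; left
        ext A
        rw [SetLike.mem_coe, ← hKmem]
        exact case_sl hN hK hKc hsl ht A.1 A.2
      · push Not at ht
        obtain ⟨X, hX, hX0⟩ := ht
        left
        rw [eq_top_iff]
        intro A _
        rw [← hKmem]
        exact case_top hK hsl hX hX0 A.1 A.2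
    · right; right; right
      refine ⟨h4, ⟨U, hU⟩, ?_⟩
      subst h4
      by_cases hs : ∀ X ∈ hK.lie, IsSp 4 (U * X * star U)
      · left
        apply conjEq
        intro A
        rw [← hKmem, case_sp hK hKc hU hg1 hs]
        constructor
        · exact fun h => h.2
        · exact fun h => ⟨mul_mem (mul_mem hU A.2) (Unitary.star_mem hU), h⟩
      · right
        push Not at hs
        obtain ⟨X0, hX0, hX0s⟩ := hs
        apply conjEq
        intro A
        rw [← hKmem, case_esp hK hKc hU hg1 hg2 hX0 hX0s]
        constructor
        · rintro ⟨t, B, hB, hBA⟩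
          exact ⟨t, ⟨B, hB.1⟩, hB.2, hBA⟩
        · rintro ⟨t, B, hB, hBA⟩
          exact ⟨t, B.1, ⟨B.2, hB⟩, hBA⟩
  · push Not at hirr
    obtain ⟨V, hV, hV0, hV1⟩ := hirr
    obtain ⟨U, hU, hg⟩ := red_classification hN (cplx hK.lie) hstar V hV hV0 hV1 hfr
    right; right; left
    refine ⟨⟨U, hU⟩, conjEq _ _ ?_⟩
    intro A
    rw [← hKmem, case_red hK hKc hU hg A.1 A.2]
    rfl

end St12

open scoped ENNReal

/-- A connected closed subgroup of `U(N)`, `N ≥ 2`, of dimension at least `N² - 2N + 2`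
is `U(N)`, `SU(N)`, a conjugate of the block-diagonal `U(N-1) × U(1)`, or (for `N = 4`)
a conjugate of `Sp(2)` or of `e^{iℝ}·Sp(2)`. -/
theorem stmt_12 {N : ℕ} (hN : 2 ≤ N)
    (H : Subgroup ↥(Matrix.unitaryGroup (Fin N) ℂ))
    (hclosed : IsClosed (H : Set ↥(Matrix.unitaryGroup (Fin N) ℂ)))
    (hconn : IsConnected (H : Set ↥(Matrix.unitaryGroup (Fin N) ℂ)))
    (hdim : ((N ^ 2 - 2 * N + 2 : ℕ) : ℝ≥0∞) ≤ unitarySubgroupDim N H) :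
    H = ⊤ ∨
    (H : Set ↥(Matrix.unitaryGroup (Fin N) ℂ)) =
      {A : ↥(Matrix.unitaryGroup (Fin N) ℂ) | (A : Matrix (Fin N) (Fin N) ℂ).det = 1} ∨
    (∃ U : ↥(Matrix.unitaryGroup (Fin N) ℂ),
      (fun A => U * A * U⁻¹) '' (H : Set ↥(Matrix.unitaryGroup (Fin N) ℂ)) =
        blockDiagSet N) ∨
    (N = 4 ∧ ∃ U : ↥(Matrix.unitaryGroup (Fin N) ℂ),
      (fun A => U * A * U⁻¹) '' (H : Set ↥(Matrix.unitaryGroup (Fin N) ℂ)) = spSet N ∨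
      (fun A => U * A * U⁻¹) '' (H : Set ↥(Matrix.unitaryGroup (Fin N) ℂ)) = eSpSet N) := by
  exact St12.main_aux hN H hclosed hconn hdim
end
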